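/- arXiv:1911.11604 — 3 statements merged into one kernel-verified Lean document; each statement's English description precedes it below -/
import Mathlib

section
/- Let A ∈ F{x,y} be irreducible and let (u, P₁, Q₁, P₂, Q₂) be a proper LINEAR differential rational parametrization of the differential curve (C,A) with mᵢ := max(ord Pᵢ, ord Qᵢ) ≥ 1 for i = 1, 2, and set ηᵢ := Pᵢ(u)/Qᵢ(u). Then u lies in the subfield of E generated by F together with {D^k(η₁) : 0 ≤ k ≤ m₂−1} ∪ {D^k(η₂) : 0 ≤ k ≤ m₁−1}. (Equivalently, the inversion of the parametrization is given by a differential rational function U(x,y) with ord_x U < m₂ and ord_y U < m₁.) -/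
/-!
The proof linearizes the parametrization at `u`. Write `U k = D^k u`, and let `e_k` be the
differential of `U k` in the module of differentials of `F⟨u⟩ / F`, with scalars extended to `E`;
it is modelled as `ℕ →₀ E`, on which `D` acts by the semilinear shift
`a e_k ↦ D(a) e_k + a e_{k+1}` (`shiftD`).

Since `Pᵢ` and `Qᵢ` are linear, `dηᵢ` is proportional to the form `ℓᵢ = dPᵢ - ηᵢ dQᵢ` (`linForm`),
which has order exactly `mᵢ` by coprimality, whose coefficients lie in `F + F ηᵢ`, and whose pairing
with `U` (replacing `e_k` by `U k`) also lies in `F + F ηᵢ`, because `Pᵢ(u) - ηᵢ Qᵢ(u) = 0`.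
Thus `D^j ℓ₁` (`j < m₂`) and `D^j ℓ₂` (`j < m₁`) describe `m₁ + m₂` linear equations for
`U 0, …, U (m₁ + m₂ - 1)` with coefficients in the field `L` of the statement.

Properness says that the derivatives of the `ηᵢ` generate `F⟨u⟩`; taking differentials
(`exists_universal`, `diff_comm`, `diff_mem_of_adjoin`), the prolongations of `ℓ₁` and `ℓ₂` span
everything. A Sylvester-type dimension count (`single_zero_mem`) then shows that `e_0` is an
`E`-combination of the `m₁ + m₂` forms above. As these are defined over `L`, the coefficients can be
taken in `L` (`mem_of_single_mem_span`), and pairing with `U` gives `u ∈ L`.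
-/

open MvPolynomial

noncomputable section

namespace DiffCurve

variable (F : Type*) {E : Type*} [Field F] [Field E] [Algebra F E]

/-- `F⟨S⟩`: the intermediate field of `E/F` generated by all iterated derivatives of
elements of `S`. -/
def genDF (D : Derivation ℤ E E) (S : Set E) : IntermediateField F E :=
  IntermediateField.adjoin F {x | ∃ s ∈ S, ∃ k : ℕ, (⇑D)^[k] s = x}

/-- `u` is differentially transcendental over `F`. -/
def DiffTrans (D : Derivation ℤ E E) (u : E) : Prop :=
  AlgebraicIndependent F (fun k : ℕ => (⇑D)^[k] u)

/-- Evaluation of `P ∈ F{u}` at `v`: the `F`-algebra map sending `u_k ↦ D^k v`. -/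
def evalD (D : Derivation ℤ E E) (v : E) : MvPolynomial ℕ F →ₐ[F] E :=
  aeval fun k => (⇑D)^[k] v

/-- Evaluation of `A ∈ F{x,y}` at `(η₁, η₂)`: `x_k ↦ D^k η₁`, `y_k ↦ D^k η₂`. -/
def evalD2 (D : Derivation ℤ E E) (η₁ η₂ : E) : MvPolynomial (Fin 2 × ℕ) F →ₐ[F] E :=
  aeval fun p => (⇑D)^[p.2] (if p.1 = 0 then η₁ else η₂)

variable {F}

/-- The order of `P ∈ F{u}`: the largest `k` such that `u_k` occurs (`⊥` if none). -/
def ordU (P : MvPolynomial ℕ F) : WithBot ℕ := P.vars.max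

/-- `ord_x` (for `i = 0`) resp. `ord_y` (for `i = 1`) of `A ∈ F{x,y}`. -/
def ordIdx (i : Fin 2) (A : MvPolynomial (Fin 2 × ℕ) F) : WithBot ℕ :=
  ((A.vars.filter fun v => v.1 = i).image Prod.snd).max

/-- `ord(A) = max(ord_x A, ord_y A)`. -/
def ordXY (A : MvPolynomial (Fin 2 × ℕ) F) : WithBot ℕ :=
  max (ordIdx 0 A) (ordIdx 1 A)

/-- The separant of `A` w.r.t. `x`: `∂A/∂x_s` where `s = ord_x A` (junk value `1` if
`ord_x A = ⊥`). -/
def sepX (A : MvPolynomial (Fin 2 × ℕ) F) : MvPolynomial (Fin 2 × ℕ) F :=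
  WithBot.recBotCoe 1 (fun s => pderiv ((0 : Fin 2), s) A) (ordIdx 0 A)

/-- The differential ideal `[A]` generated by `A`, for a derivation `d`. -/
def diffIdeal {R : Type*} [CommRing R] (d : Derivation ℤ R R) (A : R) : Ideal R :=
  Ideal.span (Set.range fun k : ℕ => (⇑d)^[k] A)

/-- The general component `sat(A) = [A] : S_A^∞` (as a set). -/
def satSet (dxy : Derivation ℤ (MvPolynomial (Fin 2 × ℕ) F) (MvPolynomial (Fin 2 × ℕ) F))
    (A : MvPolynomial (Fin 2 × ℕ) F) : Set (MvPolynomial (Fin 2 × ℕ) F) :=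
  {f | ∃ m : ℕ, sepX A ^ m * f ∈ diffIdeal dxy A}

variable (F)

/-- `(u, P₁, Q₁, P₂, Q₂)` is a differential rational parametrization of the differential
curve `(C, A)`. -/
def IsParam (D : Derivation ℤ E E)
    (dxy : Derivation ℤ (MvPolynomial (Fin 2 × ℕ) F) (MvPolynomial (Fin 2 × ℕ) F))
    (A : MvPolynomial (Fin 2 × ℕ) F) (u : E) (P₁ Q₁ P₂ Q₂ : MvPolynomial ℕ F) : Prop :=
  DiffTrans F D u ∧
  P₁ ≠ 0 ∧ Q₁ ≠ 0 ∧ IsRelPrime P₁ Q₁ ∧ P₂ ≠ 0 ∧ Q₂ ≠ 0 ∧ IsRelPrime P₂ Q₂ ∧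
  ¬ (evalD F D u P₁ / evalD F D u Q₁ ∈ (algebraMap F E).range ∧
     evalD F D u P₂ / evalD F D u Q₂ ∈ (algebraMap F E).range) ∧
  {B : MvPolynomial (Fin 2 × ℕ) F |
      evalD2 F D (evalD F D u P₁ / evalD F D u Q₁) (evalD F D u P₂ / evalD F D u Q₂) B = 0}
    = satSet dxy A

/-- A proper differential rational parametrization: additionally
`F⟨η₁, η₂⟩ = F⟨u⟩`. -/
def IsProperParam (D : Derivation ℤ E E)
    (dxy : Derivation ℤ (MvPolynomial (Fin 2 × ℕ) F) (MvPolynomial (Fin 2 × ℕ) F))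
    (A : MvPolynomial (Fin 2 × ℕ) F) (u : E) (P₁ Q₁ P₂ Q₂ : MvPolynomial ℕ F) : Prop :=
  IsParam F D dxy A u P₁ Q₁ P₂ Q₂ ∧
  genDF F D {evalD F D u P₁ / evalD F D u Q₁, evalD F D u P₂ / evalD F D u Q₂}
    = genDF F D {u}

/-- The projection `F{x,y,u} → F{x,y}` sending `u_k ↦ 0` and keeping `x_k`, `y_k`. -/
def projXY : MvPolynomial (Fin 3 × ℕ) F →ₐ[F] MvPolynomial (Fin 2 × ℕ) F :=
  aeval fun p => if h : (p.1 : ℕ) < 2 then X ((⟨p.1, h⟩ : Fin 2), p.2) else 0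

/-- The `i`-th row polynomial of the differential resultant matrix:
`d^{m₂}f₁, …, f₁, d^{m₁}f₂, …, f₂` where `f₁ = x₀·Q₁ − P₁`, `f₂ = y₀·Q₂ − P₂`
in `F{x,y,u}`. -/
def resRow (dxyu : Derivation ℤ (MvPolynomial (Fin 3 × ℕ) F) (MvPolynomial (Fin 3 × ℕ) F))
    (P₁ Q₁ P₂ Q₂ : MvPolynomial ℕ F) (m₁ m₂ : ℕ) (i : ℕ) : MvPolynomial (Fin 3 × ℕ) F :=
  if i ≤ m₂ then
    (⇑dxyu)^[m₂ - i] (X ((0 : Fin 3), 0) * rename (fun k => ((2 : Fin 3), k)) Q₁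
      - rename (fun k => ((2 : Fin 3), k)) P₁)
  else
    (⇑dxyu)^[m₁ + m₂ + 1 - i] (X ((1 : Fin 3), 0) * rename (fun k => ((2 : Fin 3), k)) Q₂
      - rename (fun k => ((2 : Fin 3), k)) P₂)

/-- The differential resultant `δ-Res(f₁, f₂) ∈ F{x,y}`: the determinant of the
`(m₁+m₂+2) × (m₁+m₂+2)` matrix whose rows are the coefficient vectors of
`d^{m₂}f₁, …, f₁, d^{m₁}f₂, …, f₂` w.r.t. `u_{m₁+m₂}, …, u_1, u_0, 1`. -/
def deltaRes (dxyu : Derivation ℤ (MvPolynomial (Fin 3 × ℕ) F) (MvPolynomial (Fin 3 × ℕ) F))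
    (P₁ Q₁ P₂ Q₂ : MvPolynomial ℕ F) (m₁ m₂ : ℕ) : MvPolynomial (Fin 2 × ℕ) F :=
  Matrix.det (Matrix.of fun i j : Fin (m₁ + m₂ + 2) =>
    if (j : ℕ) ≤ m₁ + m₂ then
      projXY F (pderiv ((2 : Fin 3), m₁ + m₂ - (j : ℕ)) (resRow F dxyu P₁ Q₁ P₂ Q₂ m₁ m₂ i))
    else projXY F (resRow F dxyu P₁ Q₁ P₂ Q₂ m₁ m₂ i))

/-- A linear homogeneous differential polynomial `L = Σ_k a_k u_k` in `F{u}`. -/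
def IsLinHom {F : Type*} [Field F] (L : MvPolynomial ℕ F) : Prop :=
  ∀ m ∈ L.support, ∃ k : ℕ, m = Finsupp.single k 1

/-! ### The semilinear shift -/

section Shift

variable {E : Type*} [Field E]

/-- The additive operator `a e_k ↦ D(a) e_k + a e_{k+1}` on `⊕_k E e_k`.  With `e_k` read as the
Kähler differential `du_k` of `u_k = D^k u`, it is the prolongation of `D` to differentials. -/
def shiftD (D : Derivation ℤ E E) (v : ℕ →₀ E) : ℕ →₀ E :=
  v.mapRange D (map_zero D) + v.mapDomain Nat.succ

variable (D : Derivation ℤ E E)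

lemma shiftD_zero_apply (v : ℕ →₀ E) : shiftD D v 0 = D (v 0) := by
  have : (v.mapDomain Nat.succ) 0 = 0 :=
    Finsupp.mapDomain_of_notMem_range v 0 (by simp)
  simp [shiftD, this]

lemma shiftD_succ_apply (v : ℕ →₀ E) (k : ℕ) :
    shiftD D v (k + 1) = D (v (k + 1)) + v k := by
  have : (v.mapDomain Nat.succ) (k + 1) = v k :=
    Finsupp.mapDomain_apply Nat.succ_injective v k
  simp [shiftD, this]

lemma shiftD_add (v w : ℕ →₀ E) : shiftD D (v + w) = shiftD D v + shiftD D w := by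
  ext k
  cases k with
  | zero => simp [shiftD_zero_apply]
  | succ k => simp [shiftD_succ_apply]; ring

lemma shiftD_smul (a : E) (v : ℕ →₀ E) :
    shiftD D (a • v) = D a • v + a • shiftD D v := by
  ext k
  cases k with
  | zero => simp [shiftD_zero_apply]; ring
  | succ k => simp [shiftD_succ_apply]; ring

lemma shiftD_zero : shiftD D 0 = 0 := by
  simpa using shiftD_smul D 0 0

lemma shiftD_single_one (k : ℕ) :
    shiftD D (Finsupp.single k 1) = Finsupp.single (k + 1) 1 := by
  simp [shiftD, Finsupp.mapRange_single, Finsupp.mapDomain_single]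

lemma shiftD_iter_top {l : ℕ →₀ E} {m : ℕ} (h : ∀ k, m < k → l k = 0) (j : ℕ) :
    (shiftD D)^[j] l (m + j) = l m ∧ ∀ k, m + j < k → (shiftD D)^[j] l k = 0 := by
  induction j with
  | zero => simpa using h
  | succ j ih =>
    rw [Function.iterate_succ_apply']
    refine ⟨?_, fun k hk => ?_⟩
    · rw [← add_assoc, shiftD_succ_apply, ih.1, ih.2 _ (by omega)]; simp
    · obtain ⟨k, rfl⟩ : ∃ k', k = k' + 1 := ⟨k - 1, by omega⟩
      rw [shiftD_succ_apply, ih.2 _ (by omega), ih.2 _ (by omega)]; simp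

/-- To check that the shift maps a span into a subspace `T` containing it, generators suffice. -/
lemma shiftD_mem_of_span {S : Set (ℕ →₀ E)} {T : Submodule E (ℕ →₀ E)}
    (hS : ∀ s ∈ S, s ∈ T) (hS' : ∀ s ∈ S, shiftD D s ∈ T)
    {v : ℕ →₀ E} (hv : v ∈ Submodule.span E S) : shiftD D v ∈ T := by
  have hST : Submodule.span E S ≤ T := Submodule.span_le.2 hS
  induction hv using Submodule.span_induction with
  | mem x hx => exact hS' x hx
  | zero => rw [shiftD_zero]; exact T.zero_mem
  | add x y _ _ hx hy => rw [shiftD_add]; exact T.add_mem hx hy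
  | smul a x hx h =>
    rw [shiftD_smul]
    exact T.add_mem (T.smul_mem _ (hST hx)) (T.smul_mem _ h)

/-- The span of the first `n` prolongations of `l`. -/
def prolong (l : ℕ →₀ E) (n : ℕ) : Submodule E (ℕ →₀ E) :=
  Submodule.span E {v | ∃ j < n, (shiftD D)^[j] l = v}

/-- The span of all prolongations of `l`. -/
def prolongAll (l : ℕ →₀ E) : Submodule E (ℕ →₀ E) :=
  Submodule.span E (Set.range fun j => (shiftD D)^[j] l)

variable {D}

lemma prolong_mem {l : ℕ →₀ E} {n j : ℕ} (h : j < n) : (shiftD D)^[j] l ∈ prolong D l n :=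
  Submodule.subset_span ⟨j, h, rfl⟩

lemma prolong_succ_le {l : ℕ →₀ E} {n : ℕ} {T : Submodule E (ℕ →₀ E)}
    (h : prolong D l n ≤ T) (h' : (shiftD D)^[n] l ∈ T) : prolong D l (n + 1) ≤ T := by
  refine Submodule.span_le.2 ?_
  rintro _ ⟨j, hj, rfl⟩
  rcases Nat.lt_succ_iff_lt_or_eq.1 hj with hj | rfl
  · exact h (prolong_mem hj)
  · exact h'

lemma prolong_mono {l : ℕ →₀ E} {n n' : ℕ} (h : n ≤ n') : prolong D l n ≤ prolong D l n' :=
  Submodule.span_mono fun _ ⟨j, hj, e⟩ => ⟨j, by omega, e⟩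

lemma prolong_top {l : ℕ →₀ E} {m : ℕ} (h : ∀ k, m < k → l k = 0) {n : ℕ} {v : ℕ →₀ E}
    (hv : v ∈ prolong D l n) {k : ℕ} (hk : m + n ≤ k) : v k = 0 := by
  induction hv using Submodule.span_induction with
  | mem x hx =>
    obtain ⟨j, hj, rfl⟩ := hx
    exact (shiftD_iter_top D h j).2 k (by omega)
  | zero => simp
  | add x y _ _ hx hy => simp [hx, hy]
  | smul a x _ hx => simp [hx]

lemma exists_mem_prolong {l v : ℕ →₀ E} (hv : v ∈ prolongAll D l) : ∃ n, v ∈ prolong D l n := by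
  induction hv using Submodule.span_induction with
  | mem x hx => obtain ⟨j, rfl⟩ := hx; exact ⟨j + 1, prolong_mem (by omega)⟩
  | zero => exact ⟨0, Submodule.zero_mem _⟩
  | add x y _ _ hx hy =>
    obtain ⟨n, hn⟩ := hx
    obtain ⟨n', hn'⟩ := hy
    exact ⟨max n n', Submodule.add_mem _ (prolong_mono (le_max_left _ _) hn)
      (prolong_mono (le_max_right _ _) hn')⟩
  | smul a x _ hx => obtain ⟨n, hn⟩ := hx; exact ⟨n, Submodule.smul_mem _ _ hn⟩

/-- A combination of prolongations of an operator of exact order `m` that has order `< m + n` only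
involves the first `n` of them, since the prolongations have distinct orders. -/
lemma mem_prolong_of_order {l : ℕ →₀ E} {m : ℕ} (h : ∀ k, m < k → l k = 0) (h0 : l m ≠ 0)
    {n : ℕ} {v : ℕ →₀ E} (hv : v ∈ prolongAll D l) (hv' : ∀ k, m + n ≤ k → v k = 0) :
    v ∈ prolong D l n := by
  obtain ⟨N, hN⟩ := exists_mem_prolong hv
  induction N with
  | zero => exact prolong_mono (Nat.zero_le _) hN
  | succ N ih =>
    by_cases hn : N + 1 ≤ n
    · exact prolong_mono hn hN
    apply ih
    have hle : prolong D l (N + 1) ≤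
        prolong D l N ⊔ Submodule.span E {(shiftD D)^[N] l} :=
      prolong_succ_le le_sup_left
        (Submodule.mem_sup_right (Submodule.mem_span_singleton_self _))
    obtain ⟨y, hy, z, hz, rfl⟩ := Submodule.mem_sup.1 (hle hN)
    obtain ⟨a, rfl⟩ := Submodule.mem_span_singleton.1 hz
    have h1 := hv' (m + N) (by omega)
    rw [Finsupp.add_apply, prolong_top h hy le_rfl, Finsupp.smul_apply,
      (shiftD_iter_top D h N).1, zero_add, smul_eq_mul, mul_eq_zero] at h1
    have ha : a = 0 := h1.resolve_right h0
    simpa [ha] using hy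

lemma single_mem_sup {l : ℕ →₀ E} {m : ℕ} (h : ∀ k, m < k → l k = 0) (h0 : l m ≠ 0) (k : ℕ) :
    Finsupp.single k (1 : E) ∈ prolongAll D l ⊔
      Submodule.span E (Set.range fun i : Fin m => Finsupp.single (i : ℕ) (1 : E)) := by
  induction k using Nat.strong_induction_on with
  | _ k ih =>
    by_cases hk : k < m
    · exact Submodule.mem_sup_right (Submodule.subset_span ⟨⟨k, hk⟩, rfl⟩)
    obtain ⟨j, rfl⟩ : ∃ j, k = m + j := ⟨k - m, by omega⟩
    set T := prolongAll D l ⊔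
      Submodule.span E (Set.range fun i : Fin m => Finsupp.single (i : ℕ) (1 : E))
    set w := (shiftD D)^[j] l with hw
    have hwT : w ∈ T := Submodule.mem_sup_left (Submodule.subset_span ⟨j, rfl⟩)
    obtain ⟨h1, h2⟩ := shiftD_iter_top D h j
    rw [← hw] at h1 h2
    have hlow : w.erase (m + j) ∈ T := by
      rw [← Finsupp.sum_single (w.erase (m + j))]
      refine Submodule.sum_mem _ fun i hi => ?_
      have hi' : i < m + j := by
        by_contra hcon
        rw [Finsupp.support_erase, Finset.mem_erase, Finsupp.mem_support_iff] at hi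
        exact hi.2 (h2 i (by omega))
      have := T.smul_mem ((w.erase (m + j)) i) (ih i hi')
      simpa using this
    have hs : Finsupp.single (m + j) (w (m + j)) ∈ T := by
      have := T.sub_mem hwT hlow
      rwa [sub_eq_of_eq_add (Finsupp.single_add_erase (m + j) w).symm] at this
    have := T.smul_mem (l m)⁻¹ hs
    rw [h1] at this
    simpa [h0] using this

/-- Sylvester-type bound: if operators of exact order `m₁` and of order at most `m₂` generate
everything under prolongation, then `e_0` is already obtained from the first `m₂` prolongations of
the former and the first `m₁` of the latter.  Modulo the prolongations of `l₁` the space has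
dimension at most `m₁`, so the chain generated by `l₂` fills it after `m₁` steps; comparing orders
then bounds the prolongations of `l₁`. -/
lemma single_zero_mem {l₁ l₂ : ℕ →₀ E} {m₁ m₂ : ℕ} (h₁ : ∀ k, m₁ < k → l₁ k = 0)
    (h₁0 : l₁ m₁ ≠ 0) (h₂ : ∀ k, m₂ < k → l₂ k = 0) (hm₁ : 1 ≤ m₁)
    (hgen : ∀ T : Submodule E (ℕ →₀ E), (∀ v ∈ T, shiftD D v ∈ T) → l₁ ∈ T → l₂ ∈ T → T = ⊤) :
    Finsupp.single 0 (1 : E) ∈ prolong D l₁ m₂ ⊔ prolong D l₂ m₁ := by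
  set N := prolongAll D l₁ with hN
  let W : ℕ → Submodule E ((ℕ →₀ E) ⧸ N) := fun n => (prolong D l₂ n).map N.mkQ
  have hfin : (Submodule.span E
      (Set.range fun i : Fin m₁ => Finsupp.single (i : ℕ) (1 : E))).map N.mkQ = ⊤ := by
    rw [Submodule.map_mkQ_eq_top, eq_top_iff]
    intro v _
    rw [← Finsupp.sum_single v]
    refine Submodule.sum_mem _ fun i _ => ?_
    have := Submodule.smul_mem _ (v i) (single_mem_sup (D := D) h₁ h₁0 i)
    simpa using this
  rw [Submodule.map_span, ← Set.range_comp] at hfin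
  have : FiniteDimensional E ((ℕ →₀ E) ⧸ N) :=
    Module.finite_def.2 (hfin ▸ Submodule.fg_span (Set.finite_range _))
  have hdim : Module.finrank E ((ℕ →₀ E) ⧸ N) ≤ m₁ := by
    have := finrank_range_le_card (R := E)
      (N.mkQ ∘ fun i : Fin m₁ => Finsupp.single (i : ℕ) (1 : E))
    rw [Set.finrank, hfin, finrank_top] at this
    simpa using this
  have hstep : ∀ n, W n = ⊤ ∨ W n < W (n + 1) := by
    intro n
    by_cases hlt : W n < W (n + 1)
    · exact Or.inr hlt
    left
    have hle : W n ≤ W (n + 1) := Submodule.map_mono (prolong_mono (Nat.le_succ n))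
    have heq : W n = W (n + 1) := by
      by_contra hne
      exact hlt (lt_of_le_of_ne hle hne)
    rw [Submodule.map_mkQ_eq_top]
    have hT : N ⊔ prolong D l₂ (n + 1) ≤ N ⊔ prolong D l₂ n := by
      rw [← Submodule.comap_map_mkQ, ← Submodule.comap_map_mkQ]
      exact Submodule.comap_mono heq.ge
    set T := N ⊔ prolong D l₂ n with hTdef
    have hb : ∀ j < n + 1, (shiftD D)^[j] l₂ ∈ T := fun j hj =>
      hT (Submodule.mem_sup_right (prolong_mem hj))
    have ha : ∀ j, (shiftD D)^[j] l₁ ∈ T := fun j =>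
      Submodule.mem_sup_left (Submodule.subset_span ⟨j, rfl⟩)
    refine hgen T ?_ (ha 0) (hb 0 (by omega))
    intro v hv
    rw [hTdef, hN, prolongAll, prolong, ← Submodule.span_union] at hv
    refine shiftD_mem_of_span D ?_ ?_ hv
    · rintro s (⟨j, rfl⟩ | ⟨j, hj, rfl⟩)
      · exact ha j
      · exact hb j (by omega)
    · rintro s (⟨j, rfl⟩ | ⟨j, hj, rfl⟩)
      · have := ha (j + 1)
        rwa [Function.iterate_succ_apply'] at this
      · have := hb (j + 1) (by omega)
        rwa [Function.iterate_succ_apply'] at this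
  have hrank : ∀ n, W n = ⊤ ∨ n ≤ Module.finrank E (W n) := by
    intro n
    induction n with
    | zero => exact Or.inr (Nat.zero_le _)
    | succ n ih =>
      rcases hstep n with h | h
      · left
        exact top_le_iff.1 (h ▸ Submodule.map_mono (prolong_mono (Nat.le_succ n)))
      · rcases ih with h' | h'
        · exact absurd h (by rw [h']; exact not_top_lt)
        · right
          have := Submodule.finrank_lt_finrank_of_lt h
          omega
  have htop : W m₁ = ⊤ := by
    rcases hrank m₁ with h | h
    · exact h
    · exact Submodule.eq_top_of_finrank_eq
        (le_antisymm (Submodule.finrank_le _) (hdim.trans h))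
  rw [Submodule.map_mkQ_eq_top] at htop
  have hmem : Finsupp.single 0 (1 : E) ∈ N ⊔ prolong D l₂ m₁ := htop ▸ Submodule.mem_top
  obtain ⟨x, hx, y, hy, hxy⟩ := Submodule.mem_sup.1 hmem
  rw [← hxy]
  refine Submodule.add_mem_sup (mem_prolong_of_order h₁ h₁0 hx fun k hk => ?_) hy
  have h1 : y k = 0 := prolong_top h₂ hy (by omega)
  have h2 := congrArg (fun f => f k) hxy
  rw [Finsupp.add_apply, h1, Finsupp.single_apply, if_neg (by omega)] at h2
  simpa using h2

end Shift

/-! ### The universal derivation on `F(U_0, U_1, …)` -/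

section Universal

variable {F : Type*} {E : Type*} [Field F] [Field E] [Algebra F E]

/-- The total differential `Σ_k (∂p/∂u_k)(U) e_k` of a polynomial at the point `U`. -/
def polyDiff (U : ℕ → E) (p : MvPolynomial ℕ F) : ℕ →₀ E :=
  Finsupp.onFinset p.vars (fun k => aeval U (pderiv k p)) fun k hk => by
    by_contra h
    exact hk (by rw [pderiv_eq_zero_of_notMem_vars h, map_zero])

lemma polyDiff_apply (U : ℕ → E) (p : MvPolynomial ℕ F) (k : ℕ) :
    polyDiff U p k = aeval U (pderiv k p) := rfl

lemma polyDiff_add (U : ℕ → E) (p q : MvPolynomial ℕ F) :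
    polyDiff U (p + q) = polyDiff U p + polyDiff U q := by
  ext k; simp [polyDiff_apply]

lemma polyDiff_mul (U : ℕ → E) (p q : MvPolynomial ℕ F) :
    polyDiff U (p * q) = aeval U p • polyDiff U q + aeval U q • polyDiff U p := by
  ext k; simp [polyDiff_apply, Derivation.leibniz]

lemma polyDiff_C (U : ℕ → E) (a : F) : polyDiff U (C a) = 0 := by
  ext k; simp [polyDiff_apply]

lemma polyDiff_X (U : ℕ → E) (k : ℕ) :
    polyDiff U (X k : MvPolynomial ℕ F) = Finsupp.single k 1 := by
  ext j
  by_cases h : k = j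
  · subst h; simp [polyDiff_apply]
  · simp [polyDiff_apply, pderiv_X, h, Ne.symm h]

/-- For algebraically independent `U`, the differential `d U_k = e_k` extends to a derivation of
`F(U_0, U_1, …)`, here recorded as a function on all of `E` whose values outside that field are
irrelevant. -/
lemma exists_universal {U : ℕ → E} (hU : AlgebraicIndependent F U) :
    ∃ d : E → ℕ →₀ E, (∀ p : MvPolynomial ℕ F, d (aeval U p) = polyDiff U p) ∧
      (∀ x ∈ IntermediateField.adjoin F (Set.range U),
        ∀ y ∈ IntermediateField.adjoin F (Set.range U), d (x + y) = d x + d y) ∧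
      (∀ x ∈ IntermediateField.adjoin F (Set.range U),
        ∀ y ∈ IntermediateField.adjoin F (Set.range U), d (x * y) = x • d y + y • d x) := by
  have hfrac : ∀ x ∈ IntermediateField.adjoin F (Set.range U),
      ∃ p q : MvPolynomial ℕ F, aeval U q ≠ 0 ∧ aeval U q * x = aeval U p := by
    intro x hx
    obtain ⟨p, q, rfl⟩ := (IntermediateField.mem_adjoin_range_iff F U x).1 hx
    by_cases hq : aeval U q = 0
    · exact ⟨0, 1, by simp, by simp [hq]⟩
    · exact ⟨p, q, hq, by field_simp⟩
  have hex : ∀ x : E, ∃ v : ℕ →₀ E, x ∈ IntermediateField.adjoin F (Set.range U) →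
      ∀ p q : MvPolynomial ℕ F, aeval U q ≠ 0 → aeval U q * x = aeval U p →
        aeval U q • v + x • polyDiff U q = polyDiff U p := by
    intro x
    by_cases hx : x ∈ IntermediateField.adjoin F (Set.range U)
    swap
    · exact ⟨0, fun h => absurd h hx⟩
    obtain ⟨p', q', hq', hpq'⟩ := hfrac x hx
    refine ⟨(aeval U q')⁻¹ • (polyDiff U p' - x • polyDiff U q'), fun _ p q hq hpq => ?_⟩
    -- Two fractions representing `x` are equal as polynomials after cross-multiplication.
    have hcross : q * p' = q' * p := by
      apply hU
      simp only [map_mul, ← hpq, ← hpq']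
      ring
    have h := congrArg (polyDiff U) hcross
    rw [polyDiff_mul, polyDiff_mul, ← hpq, ← hpq'] at h
    ext k
    have hk := congrArg (fun f => f k) h
    simp only [Finsupp.add_apply, Finsupp.smul_apply, smul_eq_mul, Finsupp.sub_apply] at hk ⊢
    field_simp
    linear_combination hk
  choose d hd using hex
  refine ⟨d, ?_, ?_, ?_⟩
  · intro p
    have hp : aeval U p ∈ IntermediateField.adjoin F (Set.range U) :=
      (IntermediateField.mem_adjoin_range_iff F U _).2 ⟨p, 1, by simp⟩
    have := hd _ hp p 1 (by simp) (by simp)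
    rw [← C_1, polyDiff_C] at this
    simpa using this
  · intro x hx y hy
    obtain ⟨p, q, hq, hpq⟩ := hfrac x hx
    obtain ⟨p', q', hq', hpq'⟩ := hfrac y hy
    have e1 := hd x hx p q hq hpq
    have e2 := hd y hy p' q' hq' hpq'
    have e3 := hd (x + y) (add_mem hx hy) (q' * p + q * p') (q * q')
      (by simpa using ⟨hq, hq'⟩) (by simp only [map_mul, map_add, ← hpq, ← hpq']; ring)
    rw [polyDiff_add, polyDiff_mul, polyDiff_mul, polyDiff_mul, ← hpq, ← hpq', ← e1, ← e2] at e3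
    ext k
    have hk := congrArg (fun f => f k) e3
    simp only [Finsupp.add_apply, Finsupp.smul_apply, smul_eq_mul, map_mul] at hk ⊢
    apply mul_left_cancel₀ (mul_ne_zero hq hq')
    linear_combination hk
  · intro x hx y hy
    obtain ⟨p, q, hq, hpq⟩ := hfrac x hx
    obtain ⟨p', q', hq', hpq'⟩ := hfrac y hy
    have e1 := hd x hx p q hq hpq
    have e2 := hd y hy p' q' hq' hpq'
    have e3 := hd (x * y) (mul_mem hx hy) (p * p') (q * q')
      (by simpa using ⟨hq, hq'⟩) (by simp only [map_mul, ← hpq, ← hpq']; ring)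
    rw [polyDiff_mul, polyDiff_mul, ← hpq, ← hpq', ← e1, ← e2] at e3
    ext k
    have hk := congrArg (fun f => f k) e3
    simp only [Finsupp.add_apply, Finsupp.smul_apply, smul_eq_mul, map_mul] at hk ⊢
    apply mul_left_cancel₀ (mul_ne_zero hq hq')
    linear_combination hk

/-- A derivation on `K = F(U_0, U_1, …)` with values in a vector space: the elements of `K` with
differential in a given subspace form a field, so generators suffice. -/
lemma diff_mem_of_adjoin {K : IntermediateField F E} {d : E → ℕ →₀ E}
    (dC : ∀ a : F, d (algebraMap F E a) = 0)
    (dadd : ∀ x ∈ K, ∀ y ∈ K, d (x + y) = d x + d y)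
    (dmul : ∀ x ∈ K, ∀ y ∈ K, d (x * y) = x • d y + y • d x)
    {T : Submodule E (ℕ →₀ E)} {S : Set E} (hS : ∀ s ∈ S, s ∈ K ∧ d s ∈ T)
    {x : E} (hx : x ∈ IntermediateField.adjoin F S) : d x ∈ T := by
  have hSK : IntermediateField.adjoin F S ≤ K :=
    IntermediateField.adjoin_le_iff.2 fun s hs => (hS s hs).1
  induction hx using IntermediateField.adjoin_induction with
  | mem x hx => exact (hS x hx).2
  | algebraMap a => rw [dC]; exact T.zero_mem
  | add x y hx hy h h' => rw [dadd x (hSK hx) y (hSK hy)]; exact T.add_mem h h'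
  | mul x y hx hy h h' =>
    rw [dmul x (hSK hx) y (hSK hy)]
    exact T.add_mem (T.smul_mem _ h') (T.smul_mem _ h)
  | inv x hx h =>
    by_cases h0 : x = 0
    · simpa [h0] using h
    have h1 := dmul x (hSK hx) x⁻¹ (inv_mem (hSK hx))
    have h2 := dC 1
    rw [map_one] at h2
    rw [mul_inv_cancel₀ h0, h2] at h1
    have h3 : d x⁻¹ = -(x⁻¹ • (x⁻¹ • d x)) := by
      have := congrArg (fun v => x⁻¹ • v) h1
      simp only [smul_zero, smul_add, smul_smul, inv_mul_cancel₀ h0, one_smul] at this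
      rw [smul_smul]
      exact eq_neg_of_add_eq_zero_left this.symm
    rw [h3]
    exact T.neg_mem (T.smul_mem _ (T.smul_mem _ h))

/-- The universal derivation intertwines `D` and the shift. -/
lemma diff_comm {K : IntermediateField F E} {d : E → ℕ →₀ E} (D : Derivation ℤ E E)
    (δF : Derivation ℤ F F) (hD : ∀ a : F, D (algebraMap F E a) = algebraMap F E (δF a))
    (dC : ∀ a : F, d (algebraMap F E a) = 0)
    (dadd : ∀ x ∈ K, ∀ y ∈ K, d (x + y) = d x + d y)
    (dmul : ∀ x ∈ K, ∀ y ∈ K, d (x * y) = x • d y + y • d x)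
    {S : Set E} (hK : K = IntermediateField.adjoin F S)
    (hS : ∀ s ∈ S, D s ∈ K ∧ d (D s) = shiftD D (d s))
    {x : E} (hx : x ∈ K) : D x ∈ K ∧ d (D x) = shiftD D (d x) := by
  subst hK
  induction hx using IntermediateField.adjoin_induction with
  | mem x hx => exact hS x hx
  | algebraMap a =>
    rw [hD, dC, dC, shiftD_zero]
    exact ⟨IntermediateField.algebraMap_mem _ _, rfl⟩
  | add x y hx hy h h' =>
    rw [map_add, dadd _ h.1 _ h'.1, dadd _ hx _ hy, shiftD_add, h.2, h'.2]
    exact ⟨add_mem h.1 h'.1, rfl⟩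
  | mul x y hx hy h h' =>
    rw [Derivation.leibniz, smul_eq_mul, smul_eq_mul, dadd _ (mul_mem hx h'.1) _ (mul_mem hy h.1),
      dmul _ hx _ h'.1, dmul _ hy _ h.1, dmul _ hx _ hy, shiftD_add, shiftD_smul, shiftD_smul,
      h.2, h'.2]
    refine ⟨add_mem (mul_mem hx h'.1) (mul_mem hy h.1), by abel⟩
  | inv x hx h =>
    by_cases h0 : x = 0
    · simpa [h0] using h
    have hy : x⁻¹ ∈ IntermediateField.adjoin F S := inv_mem hx
    have hDy : D x⁻¹ ∈ IntermediateField.adjoin F S := by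
      rw [Derivation.leibniz_inv, smul_eq_mul]
      exact mul_mem (neg_mem (pow_mem hy 2)) h.1
    refine ⟨hDy, ?_⟩
    have d1 : d 1 = 0 := by simpa using dC 1
    have d0 : d 0 = 0 := by simpa using dC 0
    -- Apply both `d ∘ D` and `shiftD ∘ d` to `x * x⁻¹ = 1` and subtract.
    have e1 : D (x * x⁻¹) = 0 := by rw [mul_inv_cancel₀ h0]; exact D.map_one_eq_zero
    rw [Derivation.leibniz, smul_eq_mul, smul_eq_mul] at e1
    have e2 := congrArg d e1
    rw [dadd _ (mul_mem hx hDy) _ (mul_mem hy h.1), dmul _ hx _ hDy, dmul _ hy _ h.1, d0] at e2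
    have e3 : shiftD D (d (x * x⁻¹)) = 0 := by rw [mul_inv_cancel₀ h0, d1, shiftD_zero]
    rw [dmul _ hx _ hy, shiftD_add, shiftD_smul, shiftD_smul, ← h.2] at e3
    ext k
    have k2 := congrArg (fun f => f k) e2
    have k3 := congrArg (fun f => f k) e3
    simp only [Finsupp.add_apply, Finsupp.smul_apply, smul_eq_mul, Finsupp.coe_zero,
      Pi.zero_apply] at k2 k3
    apply mul_left_cancel₀ h0
    linear_combination k2 - k3

end Universal

/-! ### Elements with several derivatives in a subfield -/

section Iterates

variable {F : Type*} {E : Type*} [Field F] [Field E] [Algebra F E]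

/-- The derivatives of `x` of order `< n` lie in `L`. -/
def IterMem (D : Derivation ℤ E E) (L : IntermediateField F E) (n : ℕ) (x : E) : Prop :=
  ∀ i < n, (⇑D)^[i] x ∈ L

variable {D : Derivation ℤ E E} {L : IntermediateField F E}

lemma iterMem_succ {n : ℕ} {x : E} :
    IterMem D L (n + 1) x ↔ x ∈ L ∧ IterMem D L n (D x) := by
  constructor
  · exact fun h => ⟨h 0 (by omega), fun i hi => by
      have := h (i + 1) (by omega)
      rwa [Function.iterate_succ_apply] at this⟩
  · rintro ⟨h0, h⟩ (_ | i) hi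
    · exact h0
    · rw [Function.iterate_succ_apply]; exact h i (by omega)

lemma IterMem.mono {n n' : ℕ} {x : E} (h : IterMem D L n x) (hn : n' ≤ n) : IterMem D L n' x :=
  fun i hi => h i (by omega)

lemma IterMem.add {n : ℕ} {x y : E} (hx : IterMem D L n x) (hy : IterMem D L n y) :
    IterMem D L n (x + y) := by
  induction n generalizing x y with
  | zero => intro i hi; omega
  | succ n ih =>
    rw [iterMem_succ] at *
    rw [map_add]
    exact ⟨add_mem hx.1 hy.1, ih hx.2 hy.2⟩

lemma IterMem.mul {n : ℕ} {x y : E} (hx : IterMem D L n x) (hy : IterMem D L n y) :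
    IterMem D L n (x * y) := by
  induction n generalizing x y with
  | zero => intro i hi; omega
  | succ n ih =>
    have hx' := hx.mono (Nat.le_succ n)
    have hy' := hy.mono (Nat.le_succ n)
    rw [iterMem_succ] at *
    rw [Derivation.leibniz]
    exact ⟨mul_mem hx.1 hy.1, (ih hx' hy.2).add (ih hy' hx.2)⟩

lemma iterMem_algebraMap (δF : Derivation ℤ F F)
    (hD : ∀ a : F, D (algebraMap F E a) = algebraMap F E (δF a)) (n : ℕ) (a : F) :
    IterMem D L n (algebraMap F E a) := by
  induction n generalizing a with
  | zero => intro i hi; omega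
  | succ n ih =>
    rw [iterMem_succ, hD]
    exact ⟨IntermediateField.algebraMap_mem _ _, ih _⟩

lemma iterMem_shiftD {n : ℕ} {v : ℕ →₀ E} (h : ∀ k, IterMem D L (n + 1) (v k)) (k : ℕ) :
    IterMem D L n (shiftD D v k) := by
  cases k with
  | zero => rw [shiftD_zero_apply]; exact (iterMem_succ.1 (h 0)).2
  | succ k =>
    rw [shiftD_succ_apply]
    exact (iterMem_succ.1 (h (k + 1))).2.add ((h k).mono (Nat.le_succ n))

lemma iterMem_shiftD_iter {j n : ℕ} {v : ℕ →₀ E} (h : ∀ k, IterMem D L (n + j) (v k)) :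
    ∀ k, IterMem D L n ((shiftD D)^[j] v k) := by
  induction j generalizing v with
  | zero => exact h
  | succ j ih =>
    rw [Function.iterate_succ_apply]
    exact ih (iterMem_shiftD h)

lemma pairing_shiftD {u : E} (v : ℕ →₀ E) :
    Finsupp.linearCombination E (fun k => (⇑D)^[k] u) (shiftD D v)
      = D (Finsupp.linearCombination E (fun k => (⇑D)^[k] u) v) := by
  induction v using Finsupp.induction_linear with
  | zero => rw [shiftD_zero]; simp
  | add f g hf hg => rw [shiftD_add, map_add, map_add, map_add, hf, hg]
  | single k a =>
    rw [shiftD, Finsupp.mapRange_single, Finsupp.mapDomain_single, map_add,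
      Finsupp.linearCombination_single, Finsupp.linearCombination_single,
      Finsupp.linearCombination_single, smul_eq_mul, smul_eq_mul, smul_eq_mul, Derivation.leibniz,
      smul_eq_mul, smul_eq_mul, Nat.succ_eq_add_one, Function.iterate_succ_apply']
    ring

lemma pairing_shiftD_iter {u : E} (v : ℕ →₀ E) (j : ℕ) :
    Finsupp.linearCombination E (fun k => (⇑D)^[k] u) ((shiftD D)^[j] v)
      = (⇑D)^[j] (Finsupp.linearCombination E (fun k => (⇑D)^[k] u) v) := by
  induction j with
  | zero => rfl
  | succ j ih =>
    rw [Function.iterate_succ_apply', Function.iterate_succ_apply', pairing_shiftD, ih]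

/-- Descent of solvability of a linear system: if `e_0` is an `E`-combination of vectors with
coordinates in `L` whose pairings with `U` lie in `L`, then `U 0 ∈ L`.  An `L`-linear projection
`E → L` turns the combination into one with coefficients in `L`. -/
lemma mem_of_single_mem_span {U : ℕ → E} {S : Set (ℕ →₀ E)} (hS : ∀ s ∈ S, ∀ k, s k ∈ L)
    (hS' : ∀ s ∈ S, Finsupp.linearCombination E U s ∈ L)
    (h : Finsupp.single 0 (1 : E) ∈ Submodule.span E S) : U 0 ∈ L := by
  obtain ⟨φ, hφ⟩ := LinearMap.exists_leftInverse_of_injective (Algebra.linearMap L E)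
    (LinearMap.ker_eq_bot.2 (algebraMap L E).injective)
  have hφ' : ∀ (a : E) (b : E), b ∈ L → ((φ (a * b) : L) : E) = φ a * b := by
    intro a b hb
    have := φ.map_smul (⟨b, hb⟩ : L) a
    rw [Algebra.smul_def, mul_comm] at this
    have h2 := congrArg (fun x : L => (x : E)) this
    simpa [mul_comm] using h2
  have hφ1 : ((φ 1 : L) : E) = 1 := by
    have := LinearMap.congr_fun hφ 1
    simpa using congrArg (fun x : L => (x : E)) this
  let Ψ : (ℕ →₀ E) → E := fun v =>
    Finsupp.linearCombination E U (v.mapRange (fun x => ((φ x : L) : E)) (by simp))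
  have hadd : ∀ v w, Ψ (v + w) = Ψ v + Ψ w := by
    intro v w
    simp only [Ψ]
    rw [Finsupp.mapRange_add (by simp), map_add]
  have key : ∀ v ∈ Submodule.span E S, ∀ a : E, Ψ (a • v) ∈ L := by
    intro v hv
    induction hv using Submodule.span_induction with
    | mem s hs =>
      intro a
      have : (a • s).mapRange (fun x => ((φ x : L) : E)) (by simp) = ((φ a : L) : E) • s := by
        ext k
        simp [hφ' a (s k) (hS s hs k)]
      simp only [Ψ]
      rw [this, map_smul]
      exact mul_mem (φ a).2 (hS' s hs)
    | zero => intro a; simp [Ψ]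
    | add x y _ _ hx hy => intro a; rw [smul_add, hadd]; exact add_mem (hx a) (hy a)
    | smul b x _ hx => intro a; rw [smul_smul]; exact hx _
  have := key _ h 1
  simpa [Ψ, hφ1] using this

end Iterates

/-! ### Linear parametrizing fractions -/

section Linear

variable {F : Type*} {E : Type*} [Field F] [Field E] [Algebra F E]

lemma exists_linear_rep {P : MvPolynomial ℕ F} (hP : P.totalDegree ≤ 1) :
    ∃ (c : F) (p : ℕ →₀ F), P = C c + p.sum fun k a => C a * X k := by
  rw [P.as_sum]
  refine Finset.sum_induction _
    (fun P => ∃ (c : F) (p : ℕ →₀ F), P = C c + p.sum fun k a => C a * X k) ?_ ?_ ?_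
  · rintro _ _ ⟨c, p, rfl⟩ ⟨c', p', rfl⟩
    refine ⟨c + c', p + p', ?_⟩
    rw [Finsupp.sum_add_index' (by simp) (by intros; simp; ring), map_add]
    ring
  · exact ⟨0, 0, by simp⟩
  · intro m hm
    have hdeg : m.degree ≤ 1 := (le_totalDegree hm).trans hP
    rcases Nat.le_one_iff_eq_zero_or_eq_one.1 hdeg with h | h
    · rw [Finsupp.degree_eq_zero_iff] at h
      subst h
      exact ⟨coeff 0 P, 0, by rw [Finsupp.sum_zero_index, add_zero, C_apply]⟩
    · obtain ⟨k, rfl⟩ := (Finsupp.sum_eq_one_iff m).1 h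
      refine ⟨0, Finsupp.single k (coeff (Finsupp.single k 1) P), ?_⟩
      rw [Finsupp.sum_single_index (by simp), map_zero, zero_add, C_mul_X_eq_monomial]

lemma pderiv_linear (c : F) (p : ℕ →₀ F) (k : ℕ) :
    pderiv k (C c + p.sum fun k a => C a * X k) = C (p k) := by
  rw [map_add, pderiv_C, zero_add]
  induction p using Finsupp.induction_linear with
  | zero => simp
  | add f g hf hg =>
    rw [Finsupp.sum_add_index' (by simp) (by intros; simp; ring), map_add, hf, hg]; simp
  | single j a =>
    rw [Finsupp.sum_single_index (by simp)]
    by_cases h : j = k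
    · subst h; simp
    · simp [pderiv_X, h]

lemma vars_linear_subset (c : F) (p : ℕ →₀ F) {k : ℕ}
    (hk : k ∈ (C c + p.sum fun k a => C a * X k : MvPolynomial ℕ F).vars) : p k ≠ 0 := by
  intro h
  have h1 := vars_add_subset _ _ hk
  rw [vars_C, Finset.empty_union] at h1
  obtain ⟨j, hj, h2⟩ := Finset.mem_biUnion.1 (vars_sum_subset _ _ h1)
  have h3 := vars_mul _ _ h2
  rw [vars_C, Finset.empty_union, vars_X, Finset.mem_singleton] at h3
  subst h3
  exact (Finsupp.mem_support_iff.1 hj) h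

/-- The linear form `d(P(U)) - η d(Q(U))`, proportional to the differential of `η = P(U)/Q(U)`. -/
def linForm (U : ℕ → E) (P Q : MvPolynomial ℕ F) : ℕ →₀ E :=
  polyDiff U P - (aeval U P / aeval U Q) • polyDiff U Q

lemma pairing_polyDiff {U : ℕ → E} {P : MvPolynomial ℕ F} (hP : P.totalDegree ≤ 1) :
    ∃ c : F, Finsupp.linearCombination E U (polyDiff U P) = aeval U P - algebraMap F E c := by
  obtain ⟨c, p, rfl⟩ := exists_linear_rep hP
  refine ⟨c, ?_⟩
  have : polyDiff U (C c + p.sum fun k a => C a * X k) =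
      p.mapRange (algebraMap F E) (map_zero _) := by
    ext k
    rw [polyDiff_apply, pderiv_linear]
    simp
  rw [this, Finsupp.linearCombination_apply, Finsupp.sum_mapRange_index (by simp)]
  simp [Finsupp.sum, map_sum]

/-- Every coordinate of `linForm`, and its pairing with `U`, is of the form `a + b η` with
`a, b ∈ F`; its order is exactly the order `m` of the fraction (`hm` excludes that both `P` and
`Q` are constant, as constants have order `⊥`). -/
lemma linForm_spec {U : ℕ → E} (hU : AlgebraicIndependent F U) {P Q : MvPolynomial ℕ F}
    (hP : P.totalDegree ≤ 1) (hQ : Q.totalDegree ≤ 1) (hQ0 : Q ≠ 0) (hPQ : IsRelPrime P Q)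
    {m : ℕ} (hm : max (ordU P) (ordU Q) = (m : WithBot ℕ)) :
    (∀ k, m < k → linForm U P Q k = 0) ∧ linForm U P Q m ≠ 0 ∧
    (∀ k, ∃ a b : F, linForm U P Q k =
      algebraMap F E a + algebraMap F E b * (aeval U P / aeval U Q)) ∧
    (∃ a b : F, Finsupp.linearCombination E U (linForm U P Q) =
      algebraMap F E a + algebraMap F E b * (aeval U P / aeval U Q)) := by
  have hQU : aeval U Q ≠ 0 := fun h => hQ0 (algebraicIndependent_iff.1 hU Q h)
  have hpair : ∃ a b : F, Finsupp.linearCombination E U (linForm U P Q) =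
      algebraMap F E a + algebraMap F E b * (aeval U P / aeval U Q) := by
    obtain ⟨c, hc⟩ := pairing_polyDiff (U := U) hP
    obtain ⟨c', hc'⟩ := pairing_polyDiff (U := U) hQ
    refine ⟨-c, c', ?_⟩
    rw [linForm, map_sub, map_smul, hc, hc', map_neg, smul_eq_mul]
    field_simp
    ring
  have hbound : ∀ k, m < k → k ∉ P.vars ∧ k ∉ Q.vars := by
    intro k hk
    constructor <;> intro hmem
    · have h1 : ((k : ℕ) : WithBot ℕ) ≤ m := hm ▸ (Finset.le_max hmem).trans (le_max_left _ _)
      exact absurd (WithBot.coe_le_coe.1 h1) (not_le.2 hk)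
    · have h1 : ((k : ℕ) : WithBot ℕ) ≤ m := hm ▸ (Finset.le_max hmem).trans (le_max_right _ _)
      exact absurd (WithBot.coe_le_coe.1 h1) (not_le.2 hk)
  have hmmem : m ∈ P.vars ∨ m ∈ Q.vars := by
    rcases max_choice (ordU P) (ordU Q) with h | h
    · left; exact Finset.mem_of_max (h.symm.trans hm)
    · right; exact Finset.mem_of_max (h.symm.trans hm)
  refine ⟨?_, ?_, ?_, hpair⟩
  · intro k hk
    obtain ⟨h1, h2⟩ := hbound k hk
    simp [linForm, polyDiff_apply, pderiv_eq_zero_of_notMem_vars h1,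
      pderiv_eq_zero_of_notMem_vars h2]
  · intro h0
    -- A vanishing leading coefficient would force `η ∈ F`, hence `P = c Q`.
    obtain ⟨c, p, hp⟩ := exists_linear_rep hP
    obtain ⟨c', q, hq⟩ := exists_linear_rep hQ
    have hor : p m ≠ 0 ∨ q m ≠ 0 :=
      hmmem.imp (fun h => vars_linear_subset c p (hp ▸ h)) fun h => vars_linear_subset c' q (hq ▸ h)
    have h1 : algebraMap F E (p m) - (aeval U P / aeval U Q) * algebraMap F E (q m) = 0 := by
      have e1 : pderiv m P = C (p m) := by rw [hp, pderiv_linear]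
      have e2 : pderiv m Q = C (q m) := by rw [hq, pderiv_linear]
      simpa [linForm, polyDiff_apply, e1, e2] using h0
    have hqm : q m ≠ 0 := by
      intro hqm
      rw [hqm] at h1
      rcases hor with h | h
      · exact h (by simpa using h1)
      · exact h hqm
    have hPc : P = C (p m / q m) * Q := by
      apply hU
      have hqm' : algebraMap F E (q m) ≠ 0 := by simpa using hqm
      rw [map_mul, aeval_C, map_div₀]
      field_simp at h1 ⊢
      linear_combination -h1
    have hunit : IsUnit Q := hPQ (hPc ▸ Dvd.intro_left _ rfl) dvd_rfl
    obtain ⟨r, _, hr⟩ := isUnit_iff_eq_C_of_isReduced.1 hunit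
    have hPr : P = C (p m / q m * r) := by rw [hPc, hr, ← map_mul]
    rw [hPr, hr, vars_C, vars_C] at hmmem
    simp at hmmem
  · intro k
    obtain ⟨c, p, hp⟩ := exists_linear_rep hP
    obtain ⟨c', q, hq⟩ := exists_linear_rep hQ
    have e1 : pderiv k P = C (p k) := by rw [hp, pderiv_linear]
    have e2 : pderiv k Q = C (q k) := by rw [hq, pderiv_linear]
    refine ⟨p k, -q k, ?_⟩
    simp [linForm, polyDiff_apply, e1, e2]
    ring

end Linear

/-- for a proper linear parametrization with `m₁, m₂ ≥ 1`, the parameter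
`u` lies in the field generated by `F` together with `D^k η₁ (k < m₂)` and
`D^k η₂ (k < m₁)` (i.e. the inversion `U(x,y)` satisfies `ord_x U < m₂`,
`ord_y U < m₁`). -/
theorem inversion_order_bound [CharZero F]
    (δF : Derivation ℤ F F) (D : Derivation ℤ E E)
    (hD : ∀ a : F, D (algebraMap F E a) = algebraMap F E (δF a))
    (dxy : Derivation ℤ (MvPolynomial (Fin 2 × ℕ) F) (MvPolynomial (Fin 2 × ℕ) F))
    (hdxyC : ∀ a : F, dxy (C a) = C (δF a))
    (hdxyX : ∀ (i : Fin 2) (k : ℕ), dxy (X (i, k)) = X (i, k + 1))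
    (A : MvPolynomial (Fin 2 × ℕ) F) (hA : Irreducible A)
    (u : E) (P₁ Q₁ P₂ Q₂ : MvPolynomial ℕ F)
    (hd₁ : P₁.totalDegree ≤ 1) (hd₂ : Q₁.totalDegree ≤ 1)
    (hd₃ : P₂.totalDegree ≤ 1) (hd₄ : Q₂.totalDegree ≤ 1)
    (hpar : IsProperParam F D dxy A u P₁ Q₁ P₂ Q₂)
    (m₁ m₂ : ℕ) (hm₁ : max (ordU P₁) (ordU Q₁) = (m₁ : WithBot ℕ))
    (hm₂ : max (ordU P₂) (ordU Q₂) = (m₂ : WithBot ℕ))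
    (hm₁' : 1 ≤ m₁) (hm₂' : 1 ≤ m₂) :
    u ∈ IntermediateField.adjoin F
      ({e : E | ∃ k < m₂, (⇑D)^[k] (evalD F D u P₁ / evalD F D u Q₁) = e} ∪
       {e : E | ∃ k < m₁, (⇑D)^[k] (evalD F D u P₂ / evalD F D u Q₂) = e}) := by
  obtain ⟨⟨hU, -, hQ₁, hc₁, -, hQ₂, hc₂, -, -⟩, hgen⟩ := hpar
  set U : ℕ → E := fun k => (⇑D)^[k] u with hUdef
  change AlgebraicIndependent F U at hU
  have ev : ∀ P : MvPolynomial ℕ F, evalD F D u P = aeval U P := fun _ => rfl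
  simp only [ev] at hgen ⊢
  set η₁ := aeval U P₁ / aeval U Q₁ with hη₁
  set η₂ := aeval U P₂ / aeval U Q₂ with hη₂
  have hQ₁U : aeval U Q₁ ≠ 0 := fun h => hQ₁ (algebraicIndependent_iff.1 hU Q₁ h)
  have hQ₂U : aeval U Q₂ ≠ 0 := fun h => hQ₂ (algebraicIndependent_iff.1 hU Q₂ h)
  obtain ⟨t₁, n₁, f₁, g₁⟩ := linForm_spec hU hd₁ hd₂ hQ₁ hc₁ hm₁
  obtain ⟨t₂, -, f₂, g₂⟩ := linForm_spec hU hd₃ hd₄ hQ₂ hc₂ hm₂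
  rw [← hη₁] at f₁ g₁
  rw [← hη₂] at f₂ g₂
  set L := IntermediateField.adjoin F ({e : E | ∃ k < m₂, (⇑D)^[k] η₁ = e} ∪
    {e : E | ∃ k < m₁, (⇑D)^[k] η₂ = e}) with hL
  -- By properness, a shift-stable subspace `T` containing both forms contains every `dηᵢ^{(j)}`,
  -- hence the differentials of all elements of `F⟨η₁, η₂⟩ = F⟨u⟩`.
  have hspan : Finsupp.single 0 (1 : E) ∈
      prolong D (linForm U P₁ Q₁) m₂ ⊔ prolong D (linForm U P₂ Q₂) m₁ := by
    refine single_zero_mem t₁ n₁ t₂ hm₁' ?_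
    intro T hT hT₁ hT₂
    set K := IntermediateField.adjoin F (Set.range U) with hK
    have hKu : genDF F D {u} = K := by
      rw [genDF, hK]
      congr 1
      ext x
      simp [hUdef]
    obtain ⟨d, dpoly, dadd, dmul⟩ := exists_universal hU
    have dC : ∀ a : F, d (algebraMap F E a) = 0 := fun a => by
      have := dpoly (C a)
      rwa [aeval_C, polyDiff_C] at this
    have dU : ∀ k, d (U k) = Finsupp.single k 1 := fun k => by
      have := dpoly (X k)
      rwa [aeval_X, polyDiff_X] at this
    have hUK : ∀ k, U k ∈ K := fun k => IntermediateField.subset_adjoin _ _ ⟨k, rfl⟩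
    have hcomm : ∀ x ∈ K, D x ∈ K ∧ d (D x) = shiftD D (d x) := fun x hx => by
      refine diff_comm D δF hD dC dadd dmul hK ?_ hx
      rintro _ ⟨k, rfl⟩
      have : D (U k) = U (k + 1) := (Function.iterate_succ_apply' _ _ _).symm
      rw [this, dU, dU, shiftD_single_one]
      exact ⟨hUK _, rfl⟩
    have hpolyK : ∀ P : MvPolynomial ℕ F, aeval U P ∈ K := fun P =>
      (IntermediateField.mem_adjoin_range_iff F U _).2 ⟨P, 1, by simp⟩
    have hdη : ∀ P Q : MvPolynomial ℕ F, aeval U Q ≠ 0 → linForm U P Q ∈ T →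
        ∀ j, (⇑D)^[j] (aeval U P / aeval U Q) ∈ K ∧
          d ((⇑D)^[j] (aeval U P / aeval U Q)) ∈ T := by
      intro P Q hQ hl j
      induction j with
      | zero =>
        have hηK : aeval U P / aeval U Q ∈ K := div_mem (hpolyK P) (hpolyK Q)
        refine ⟨hηK, ?_⟩
        have h1 := dmul _ hηK _ (hpolyK Q)
        rw [div_mul_cancel₀ _ hQ, dpoly, dpoly] at h1
        have h2 : linForm U P Q = aeval U Q • d (aeval U P / aeval U Q) := by
          rw [linForm, h1, add_sub_cancel_left]
        rw [h2] at hl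
        exact (T.smul_mem_iff hQ).1 hl
      | succ j ih =>
        rw [Function.iterate_succ_apply']
        obtain ⟨h1, h2⟩ := hcomm _ ih.1
        exact ⟨h1, h2 ▸ hT _ ih.2⟩
    rw [hKu, genDF] at hgen
    rw [eq_top_iff]
    intro v _
    rw [← Finsupp.sum_single v]
    refine Submodule.sum_mem _ fun k _ => ?_
    have hk : d (U k) ∈ T := by
      refine diff_mem_of_adjoin dC dadd dmul ?_ (hgen.symm ▸ hUK k)
      rintro s ⟨e, he, j, rfl⟩
      rcases he with rfl | rfl
      · exact hdη P₁ Q₁ hQ₁U hT₁ j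
      · exact hdη P₂ Q₂ hQ₂U hT₂ j
    rw [dU] at hk
    simpa using T.smul_mem (v k) hk
  -- `L` contains the coefficients of the rows and their pairings with `U`.
  have i₁ : IterMem D L m₂ η₁ := fun k hk =>
    IntermediateField.subset_adjoin _ _ (Or.inl ⟨k, hk, rfl⟩)
  have i₂ : IterMem D L m₁ η₂ := fun k hk =>
    IntermediateField.subset_adjoin _ _ (Or.inr ⟨k, hk, rfl⟩)
  have haff : ∀ {n : ℕ} {η x : E}, IterMem D L n η →
      (∃ a b : F, x = algebraMap F E a + algebraMap F E b * η) → IterMem D L n x := by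
    rintro n η x hη ⟨a, b, rfl⟩
    exact (iterMem_algebraMap δF hD n a).add ((iterMem_algebraMap δF hD n b).mul hη)
  have hrow : ∀ {l : ℕ →₀ E} {n : ℕ}, (∀ k, IterMem D L n (l k)) →
      IterMem D L n (Finsupp.linearCombination E U l) → ∀ j < n,
      (∀ k, (shiftD D)^[j] l k ∈ L) ∧
        Finsupp.linearCombination E U ((shiftD D)^[j] l) ∈ L := by
    intro l n h h' j hj
    refine ⟨fun k => ?_, ?_⟩
    · refine iterMem_shiftD_iter (n := 1) (j := j) (fun k => (h k).mono (by omega)) k 0 (by omega)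
    · rw [hUdef, pairing_shiftD_iter]
      exact h' j hj
  rw [prolong, prolong, ← Submodule.span_union] at hspan
  have r₁ := hrow (fun k => haff i₁ (f₁ k)) (haff i₁ g₁)
  have r₂ := hrow (fun k => haff i₂ (f₂ k)) (haff i₂ g₂)
  refine mem_of_single_mem_span (U := U) ?_ ?_ hspan
  · rintro _ (⟨j, hj, rfl⟩ | ⟨j, hj, rfl⟩)
    exacts [(r₁ j hj).1, (r₂ j hj).1]
  · rintro _ (⟨j, hj, rfl⟩ | ⟨j, hj, rfl⟩)
    exacts [(r₁ j hj).2, (r₂ j hj).2]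
end DiffCurve
end
end

section
/- Let L₁, L₂ be linear homogeneous differential polynomials over F, not both zero, and a ∈ F; let A := L₁(x) + L₂(y) + a ∈ F{x,y} be obtained by substituting u_k ↦ x_k in L₁ and u_k ↦ y_k in L₂, and assume A ∉ F. Fix u ∈ E differentially transcendental over F. Then there exist η₁, η₂ ∈ F⟨{u}⟩, not both in F, with I((η₁,η₂)) = [A] (i.e., the linear differential curve (C,A) is unirational) if and only if L₁ and L₂ have no common left divisor of positive order, that is, there do NOT exist linear homogeneous differential polynomials L, M₁, M₂ over F with ord(L) ≥ 1 such that L₁ = L∘M₁ and L₂ = L∘M₂. -/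
/-!
Linear homogeneous differential polynomials compose as linear differential operators. Writing
`∂` for the derivation, `F[∂]` is a left and right Euclidean ring; here it is modelled by
`Polynomial F` (`Σ c_k X^k` stands for `Σ c_k ∂^k`) with composition `star`. A pair
`(S, T) ∈ F[∂]²` stands for `S(x) + T(y)`, so `A` corresponds to `(L₁, L₂)`, up to the constant
`a`, and derivation-compatible automorphisms of `F[∂]²` are linear differential changes of
coordinates.

If there is no common left divisor of positive order, the Euclidean algorithm (`euclid`) takes
`(L₁, L₂)` to a nonzero constant `(c, 0)`. In the new coordinates `z, t` the equation becomes
`c z + a = 0`: the curve is the graph of a constant over the free coordinate `t`, and setting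
`t = u` parametrizes it (`param_of_straight`). The parametrization is generic because modulo
`[A]` every differential polynomial is one in `t` alone.

Conversely let `L₁ = L ∘ M₁` and `L₂ = L ∘ M₂` with `L` of positive order, and let `(η₁, η₂)` be a
parametrization in `F⟨u⟩`. Then `w = M₁(η₁) + M₂(η₂)` satisfies `L(w) = -a`. Differentiation
strictly raises the order in `u` of every element of `F⟨u⟩` outside `F` (a Wronskian argument,
`mem_lvl_of_deriv_mem`), so `w` is some `c ∈ F` (`mem_range_of_linear`), and `M₁(x) + M₂(y) - c`
lies in the ideal `[A]` of the curve. At a zero of `[A]`, the gradient of an element of `[A]` is a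
combination of those of the derivatives of `A` (`grad_mem_span`), and comparing leading terms
shows that `M₁(x) + M₂(y) - c`, having lower order than `A`, cannot lie in `[A]`
(`comp2_eq_zero_of_mem`).
-/

open MvPolynomial

noncomputable section

namespace DiffCurve

variable (F : Type*) {E : Type*} [Field F] [Field E] [Algebra F E]

variable {F}

variable (F)

/-! ### Elements of `F⟨u⟩` outside `F` satisfy no linear differential equation over `F` -/

section Field

variable {F}
variable (D : Derivation ℤ E E) (u : E)

variable (F) in
/-- The field `F(u, Du, …, D^{n-1}u)`; the fields `lvl F D u n` filter `F⟨u⟩` by order. -/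
def lvl (n : ℕ) : IntermediateField F E :=
  IntermediateField.adjoin F ((fun k : ℕ => (⇑D)^[k] u) '' Set.Iio n)

lemma lvl_mono {m n : ℕ} (h : m ≤ n) : lvl F D u m ≤ lvl F D u n :=
  IntermediateField.adjoin.mono _ _ _ (Set.image_mono (Set.Iio_subset_Iio h))

lemma iter_mem_lvl {k n : ℕ} (h : k < n) : (⇑D)^[k] u ∈ lvl F D u n :=
  IntermediateField.subset_adjoin _ _ ⟨k, h, rfl⟩

lemma mem_lvl_zero {x : E} (h : x ∈ lvl F D u 0) : x ∈ (algebraMap F E).range := by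
  have h0 : (Set.Iio 0 : Set ℕ) = ∅ := by ext; simp
  rw [lvl, h0, Set.image_empty, IntermediateField.adjoin_empty, IntermediateField.mem_bot] at h
  exact h

lemma algebraMap_mem_lvl (n : ℕ) (c : F) : algebraMap F E c ∈ lvl F D u n :=
  (lvl F D u n).algebraMap_mem c

lemma genDF_eq_iSup : genDF F D {u} = ⨆ n, lvl F D u n := by
  have h : {x | ∃ s ∈ ({u} : Set E), ∃ k : ℕ, (⇑D)^[k] s = x} =
      ⋃ n : ℕ, (fun k : ℕ => (⇑D)^[k] u) '' Set.Iio n := by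
    ext x
    simp only [Set.mem_singleton_iff, exists_eq_left, Set.mem_ofPred_eq, Set.mem_iUnion,
      Set.mem_image, Set.mem_Iio]
    exact ⟨fun ⟨k, hk⟩ => ⟨k + 1, k, k.lt_succ_self, hk⟩, fun ⟨_, k, _, hk⟩ => ⟨k, hk⟩⟩
  unfold lvl
  rw [← IntermediateField.adjoin_iUnion, genDF, h]

lemma exists_mem_lvl {w : E} (hw : w ∈ genDF F D {u}) : ∃ n, w ∈ lvl F D u n := by
  rw [genDF_eq_iSup, ← SetLike.mem_coe, IntermediateField.coe_iSup_of_directed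
    (directed_of_isDirected_le fun _ _ h => lvl_mono D u h)] at hw
  simpa using hw

lemma transcendental_lvl (hu : DiffTrans F D u) (n : ℕ) :
    Transcendental (lvl F D u n) ((⇑D)^[n] u) :=
  IntermediateField.transcendental_adjoin_iff.2
    (AlgebraicIndependent.transcendental_adjoin hu (s := Set.Iio n) (i := n) (by simp))

lemma iter_notMem_lvl (hu : DiffTrans F D u) (n : ℕ) : (⇑D)^[n] u ∉ lvl F D u n := fun h =>
  transcendental_lvl D u hu n (isAlgebraic_algebraMap (⟨_, h⟩ : lvl F D u n))

lemma mem_lvl_succ {n : ℕ} {w : E} (hw : w ∈ lvl F D u (n + 1)) :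
    ∃ P Q : Polynomial (lvl F D u n), w = Polynomial.aeval ((⇑D)^[n] u) P /
      Polynomial.aeval ((⇑D)^[n] u) Q := by
  rw [← IntermediateField.mem_adjoin_simple_iff, ← IntermediateField.mem_restrictScalars F,
    IntermediateField.restrictScalars_adjoin_eq_sup]
  have : Set.Iio (n + 1) = Set.Iio n ∪ {n} := by ext k; simp
  rw [lvl, this, Set.image_union, Set.image_singleton, IntermediateField.adjoin_union] at hw
  exact hw

lemma aeval_mem_lvl {n : ℕ} (P : Polynomial (lvl F D u n)) :
    Polynomial.aeval ((⇑D)^[n] u) P ∈ lvl F D u (n + 1) := by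
  have ht : (⇑D)^[n] u ∈ lvl F D u (n + 1) := iter_mem_lvl D u n.lt_succ_self
  induction P using Polynomial.induction_on' with
  | add p q hp hq => rw [map_add]; exact add_mem hp hq
  | monomial k c =>
    rw [Polynomial.aeval_monomial]
    exact mul_mem (lvl_mono D u (Nat.le_succ n) c.2) (pow_mem ht k)

lemma exists_coprime {k : Type*} [Field k] (P : Polynomial k) {Q : Polynomial k} (hQ : Q ≠ 0) :
    ∃ g P' Q' : Polynomial k, P = g * P' ∧ Q = g * Q' ∧ IsCoprime P' Q' := by
  classical
  let _ := EuclideanDomain.gcdMonoid (Polynomial k)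
  have hg := gcd_ne_zero_of_right (a := P) hQ
  exact ⟨_, _, _, (EuclideanDomain.mul_div_cancel' hg (gcd_dvd_left P Q)).symm,
    (EuclideanDomain.mul_div_cancel' hg (gcd_dvd_right P Q)).symm, isCoprime_div_gcd_div_gcd hQ⟩

section

variable {δF : Derivation ℤ F F} (hD : ∀ a : F, D (algebraMap F E a) = algebraMap F E (δF a))

include hD

lemma deriv_mem_lvl {n : ℕ} {w : E} (hw : w ∈ lvl F D u n) : D w ∈ lvl F D u (n + 1) := by
  have hle : ∀ x ∈ lvl F D u n, x ∈ lvl F D u (n + 1) := fun x hx =>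
    lvl_mono D u (Nat.le_succ n) hx
  induction hw using IntermediateField.adjoin_induction with
  | mem x hx =>
    obtain ⟨k, hk, rfl⟩ := hx
    simp only [← Function.iterate_succ_apply' (⇑D) k u]
    exact iter_mem_lvl D u (Nat.succ_lt_succ hk)
  | algebraMap x => rw [hD]; exact algebraMap_mem_lvl D u _ _
  | add x y hx hy h1 h2 => rw [map_add]; exact add_mem h1 h2
  | inv x hx h =>
    rw [D.leibniz_inv, smul_eq_mul]
    exact mul_mem (neg_mem (pow_mem (inv_mem (hle x hx)) 2)) h
  | mul x y hx hy h1 h2 =>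
    rw [D.leibniz, smul_eq_mul, smul_eq_mul]
    exact add_mem (mul_mem (hle x hx) h2) (mul_mem (hle y hy) h1)

/-- The chain rule for `P(D^n u)`, modulo the part of order at most `n`. -/
lemma deriv_aeval {n : ℕ} (P : Polynomial (lvl F D u n)) :
    ∃ q ∈ lvl F D u (n + 1), D (Polynomial.aeval ((⇑D)^[n] u) P) =
      Polynomial.aeval ((⇑D)^[n] u) (Polynomial.derivative P) * (⇑D)^[n + 1] u + q := by
  have ht : (⇑D)^[n] u ∈ lvl F D u (n + 1) := iter_mem_lvl D u n.lt_succ_self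
  induction P using Polynomial.induction_on' with
  | add p q hp hq =>
    obtain ⟨a, ha, h1⟩ := hp
    obtain ⟨b, hb, h2⟩ := hq
    refine ⟨a + b, add_mem ha hb, ?_⟩
    simp only [map_add, h1, h2]
    ring
  | monomial k c =>
    refine ⟨((⇑D)^[n] u) ^ k * D c, mul_mem (pow_mem ht k) (deriv_mem_lvl D u hD c.2), ?_⟩
    rw [Polynomial.aeval_monomial, D.leibniz, D.leibniz_pow, Polynomial.derivative_monomial,
      Polynomial.aeval_monomial, Function.iterate_succ_apply']
    simp only [smul_eq_mul, nsmul_eq_mul, map_mul, map_natCast]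
    simp only [IntermediateField.algebraMap_apply]
    ring

/-- Differentiation raises the order of an element of order exactly `n` in `u`: writing
`w = P/Q` in lowest terms as a rational function of `D^n u`, the coefficient of `D^{n+1} u` in
`Q² · Dw` is the Wronskian of `Q` and `P`, which vanishes only if `P` and `Q` are constant. -/
lemma mem_lvl_of_deriv_mem [CharZero F] (hu : DiffTrans F D u) {n : ℕ} {w : E}
    (hw : w ∈ lvl F D u (n + 1)) (hDw : D w ∈ lvl F D u (n + 1)) : w ∈ lvl F D u n := by
  classical
  obtain ⟨P, Q, hPQ⟩ := mem_lvl_succ D u hw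
  have htr := transcendental_lvl D u hu n
  by_cases hQ0 : Q = 0
  · rw [hPQ, hQ0, map_zero, div_zero]; exact zero_mem _
  have hinj : Function.Injective (Polynomial.aeval (R := lvl F D u n) ((⇑D)^[n] u)) :=
    transcendental_iff_injective.1 htr
  obtain ⟨g, P', Q', hP, hQ, hcop⟩ := exists_coprime P hQ0
  have hQ'0 : Q' ≠ 0 := by rintro rfl; exact hQ0 (by rw [hQ, mul_zero])
  have hg0 : g ≠ 0 := fun h => hQ0 (by rw [hQ, h, zero_mul])
  have hQe : Polynomial.aeval ((⇑D)^[n] u) Q' ≠ 0 := (map_ne_zero_iff _ hinj).2 hQ'0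
  have hw' : w * Polynomial.aeval ((⇑D)^[n] u) Q' = Polynomial.aeval ((⇑D)^[n] u) P' := by
    rw [hPQ, hP, hQ, map_mul, map_mul, mul_div_mul_left _ _ ((map_ne_zero_iff _ hinj).2 hg0),
      div_mul_cancel₀ _ hQe]
  obtain ⟨p, hp, hDP⟩ := deriv_aeval D u hD P'
  obtain ⟨q, hq, hDQ⟩ := deriv_aeval D u hD Q'
  have key := congrArg D hw'
  rw [D.leibniz, smul_eq_mul, smul_eq_mul, hDP, hDQ] at key
  have hW : Polynomial.aeval ((⇑D)^[n] u) (Polynomial.wronskian Q' P') * (⇑D)^[n + 1] u =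
      Polynomial.aeval ((⇑D)^[n] u) Q' * (w * q + Polynomial.aeval ((⇑D)^[n] u) Q' * D w - p) := by
    rw [Polynomial.wronskian, map_sub, map_mul, map_mul, ← hw']
    linear_combination (-Polynomial.aeval ((⇑D)^[n] u) Q') * key
  have hmem : ∀ R, Polynomial.aeval ((⇑D)^[n] u) R ∈ lvl F D u (n + 1) := aeval_mem_lvl D u
  have hW0 : Polynomial.wronskian Q' P' = 0 := by
    by_contra hne
    have hne' := (map_ne_zero_iff _ hinj).2 hne
    refine iter_notMem_lvl D u hu (n + 1) ?_
    rw [eq_div_of_mul_eq hne' ((mul_comm _ _).trans hW)]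
    exact div_mem (mul_mem (hmem _) (sub_mem (add_mem (mul_mem hw hq)
      (mul_mem (hmem _) hDw)) hp)) (hmem _)
  obtain ⟨hQd, hPd⟩ := hcop.symm.wronskian_eq_zero_iff.1 hW0
  rw [Polynomial.eq_C_of_derivative_eq_zero hQd, Polynomial.eq_C_of_derivative_eq_zero hPd,
    Polynomial.aeval_C, Polynomial.aeval_C] at hw'
  rw [Polynomial.eq_C_of_derivative_eq_zero hQd, Polynomial.aeval_C] at hQe
  rw [eq_div_of_mul_eq hQe hw']
  exact div_mem (Subtype.prop _) (Subtype.prop _)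

lemma iter_deriv_mem [CharZero F] (hu : DiffTrans F D u) {n : ℕ} {w : E}
    (hw : w ∈ lvl F D u (n + 1)) (hw' : w ∉ lvl F D u n) (k : ℕ) :
    (⇑D)^[k] w ∈ lvl F D u (n + 1 + k) ∧ (⇑D)^[k] w ∉ lvl F D u (n + k) := by
  induction k with
  | zero => exact ⟨hw, hw'⟩
  | succ k ih =>
    rw [Function.iterate_succ_apply']
    refine ⟨deriv_mem_lvl D u hD ih.1, fun h => ih.2 (mem_lvl_of_deriv_mem D u hD hu ?_ ?_)⟩
    · rw [Nat.add_right_comm]; exact ih.1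
    · exact h

/-- An element of `F⟨u⟩` killed modulo `F` by a nonzero linear differential operator lies
in `F`. -/
lemma mem_range_of_linear [CharZero F] (hu : DiffTrans F D u) {w : E}
    (hw : w ∈ genDF F D {u}) (l : Polynomial F) (hl : l ≠ 0)
    (hlw : l.sum (fun k c => c • (⇑D)^[k] w) ∈ (algebraMap F E).range) :
    w ∈ (algebraMap F E).range := by
  classical
  by_contra hF
  have hex := exists_mem_lvl D u hw
  obtain ⟨n, hn, hmin⟩ : ∃ n, w ∈ lvl F D u (n + 1) ∧ w ∉ lvl F D u n := by
    have h1 := Nat.find_spec hex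
    have h0 : Nat.find hex ≠ 0 := fun h => hF (mem_lvl_zero D u (h ▸ h1))
    obtain ⟨m, hm⟩ := Nat.exists_eq_succ_of_ne_zero h0
    exact ⟨m, by rw [← Nat.succ_eq_add_one, ← hm]; exact h1, Nat.find_min hex (by omega)⟩
  have hk := iter_deriv_mem D u hD hu hn hmin
  refine (hk l.natDegree).2 ?_
  have hc : l.leadingCoeff ≠ 0 := Polynomial.leadingCoeff_ne_zero.2 hl
  have hlow : ∑ k ∈ Finset.range l.natDegree, l.coeff k • (⇑D)^[k] w ∈
      lvl F D u (n + l.natDegree) := by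
    refine sum_mem fun k hkr => IntermediateField.smul_mem _ ?_
    have := Finset.mem_range.1 hkr
    exact lvl_mono D u (by omega) (hk k).1
  have hsum : l.sum (fun k c => c • (⇑D)^[k] w) ∈ lvl F D u (n + l.natDegree) := by
    obtain ⟨c, hc⟩ := hlw
    rw [← hc]; exact algebraMap_mem_lvl D u _ c
  rw [Polynomial.sum_over_range (f := fun k c => c • (⇑D)^[k] w) _ (fun k => zero_smul F _),
    Finset.sum_range_succ] at hsum
  have h2 := IntermediateField.smul_mem _ (x := l.leadingCoeff⁻¹) ((add_mem_cancel_left hlow).1 hsum)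
  rwa [Polynomial.coeff_natDegree, smul_smul, inv_mul_cancel₀ hc, one_smul] at h2
end

end Field

/-! ### Linear differential operators -/

section Operators

variable {F}
variable {M N : Type*} [AddCommGroup M] [Module F M] [AddCommGroup N] [Module F N]

/-- `d` makes the `F`-vector space `M` a differential module over `(F, δ)`. -/
structure IsDiffMod (δ : Derivation ℤ F F) (d : M → M) : Prop where
  add : ∀ x y, d (x + y) = d x + d y
  smul : ∀ (c : F) (x : M), d (c • x) = δ c • x + c • d x

/-- The value at `m` of the operator `Σ c_k d^k`, as a linear map in the operator, which is
encoded by the polynomial `Σ c_k X^k`. -/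
def op (d : M → M) (m : M) : Polynomial F →ₗ[F] M :=
  Polynomial.lsum fun k => LinearMap.toSpanSingleton F M (d^[k] m)

lemma op_eq_sum (d : M → M) (m : M) (p : Polynomial F) :
    op d m p = p.sum fun k c => c • d^[k] m := rfl

@[simp] lemma op_monomial (d : M → M) (m : M) (k : ℕ) (c : F) :
    op d m (Polynomial.monomial k c) = c • d^[k] m := by
  rw [op_eq_sum, Polynomial.sum_monomial_index _ _ (zero_smul F _)]

lemma op_ext {f g : Polynomial F →ₗ[F] M}
    (h : ∀ k, f (Polynomial.monomial k 1) = g (Polynomial.monomial k 1)) : f = g :=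
  Polynomial.lhom_ext' fun k => LinearMap.ext_ring (h k)

lemma map_op (f : M →ₗ[F] N) {d : M → M} {d' : N → N} (h : ∀ x, f (d x) = d' (f x)) (m : M)
    (p : Polynomial F) : f (op d m p) = op d' (f m) p := by
  have : f ∘ₗ op d m = op d' (f m) := op_ext fun k => by
    have hs : Function.Semiconj f d d' := h
    simp [(hs.iterate_right k).eq m]
  exact LinearMap.congr_fun this p

/-- Left composition with `∂` on the ring of differential operators `F[∂]`, in the encoding
`Σ c_k ∂^k ↔ Σ c_k X^k`; it makes `F[∂]` the free differential module of rank one. -/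
def dT (δ : Derivation ℤ F F) (p : Polynomial F) : Polynomial F :=
  Polynomial.X * p + p.sum fun k c => Polynomial.monomial k (δ c)

variable (δ : Derivation ℤ F F)

lemma sum_coeff_aux (p : Polynomial F) (n : ℕ) :
    (p.sum fun k c => Polynomial.monomial k (δ c)).coeff n = δ (p.coeff n) := by
  rw [Polynomial.sum_def, Polynomial.finsetSum_coeff]
  simp only [Polynomial.coeff_monomial]
  rw [Finset.sum_ite_eq' p.support n fun k => δ (p.coeff k)]
  split_ifs with h
  · rfl
  · rw [Polynomial.notMem_support_iff.1 h, map_zero]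

lemma dT_coeff_zero (p : Polynomial F) : (dT δ p).coeff 0 = δ (p.coeff 0) := by
  rw [dT, Polynomial.coeff_add, sum_coeff_aux]; simp

lemma dT_coeff_succ (p : Polynomial F) (n : ℕ) :
    (dT δ p).coeff (n + 1) = p.coeff n + δ (p.coeff (n + 1)) := by
  rw [dT, Polynomial.coeff_add, sum_coeff_aux, Polynomial.coeff_X_mul]

lemma isDiffMod_dT : IsDiffMod δ (dT δ) where
  add x y := by
    ext n; cases n <;> simp only [dT_coeff_zero, dT_coeff_succ, Polynomial.coeff_add, map_add]
    ring
  smul c x := by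
    ext n; cases n <;> simp only [dT_coeff_zero, dT_coeff_succ, Polynomial.coeff_add,
      Polynomial.coeff_smul, smul_eq_mul, Derivation.leibniz]
    all_goals ring

lemma dT_monomial (k : ℕ) (c : F) : dT δ (Polynomial.monomial k c) =
    Polynomial.monomial (k + 1) c + Polynomial.monomial k (δ c) := by
  rw [dT, Polynomial.sum_monomial_index _ _ (by simp), Polynomial.X_mul_monomial]

lemma dT_iterate_one (k : ℕ) : (dT δ)^[k] 1 = Polynomial.monomial k 1 := by
  induction k with
  | zero => simp
  | succ k ih => rw [Function.iterate_succ_apply', ih, dT_monomial]; simp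

lemma op_dT_one (p : Polynomial F) : op (dT δ) 1 p = p := by
  have : op (dT δ) 1 = LinearMap.id := op_ext fun k => by simp [dT_iterate_one]
  rw [this]; rfl

variable {δ}

lemma op_dT {d : M → M} (hd : IsDiffMod δ d) (m : M) (p : Polynomial F) :
    op d m (dT δ p) = d (op d m p) := by
  induction p using Polynomial.induction_on' with
  | add p q hp hq => rw [(isDiffMod_dT δ).add, map_add, map_add, hd.add, hp, hq]
  | monomial k c =>
    rw [dT_monomial, map_add, op_monomial, op_monomial, op_monomial, hd.smul,
      Function.iterate_succ_apply', add_comm]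

variable (δ) in
/-- Composition `l ∘ m` of differential operators. -/
def star (l m : Polynomial F) : Polynomial F := op (dT δ) m l

lemma op_star {d : M → M} (hd : IsDiffMod δ d) (x : M) (l m : Polynomial F) :
    op d x (star δ l m) = op d (op d x m) l :=
  map_op (op d x) (op_dT hd x) m l

lemma iter_dT_coeff {q : Polynomial F} {n : ℕ} (hq : ∀ j, n < j → q.coeff j = 0) (k : ℕ) :
    (∀ j, n + k < j → ((dT δ)^[k] q).coeff j = 0) ∧
      ((dT δ)^[k] q).coeff (n + k) = q.coeff n := by
  induction k with
  | zero => exact ⟨hq, rfl⟩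
  | succ k ih =>
    rw [Function.iterate_succ_apply']
    constructor
    · rintro (_ | j) hj
      · omega
      · rw [dT_coeff_succ, ih.1 j (by omega), ih.1 (j + 1) (by omega), map_zero, add_zero]
    · rw [← add_assoc, dT_coeff_succ, ih.2, ih.1 _ (Nat.lt_succ_self _), map_zero, add_zero]

lemma star_coeff {p q : Polynomial F} {n : ℕ} (hq : ∀ j, n < j → q.coeff j = 0) :
    (∀ j, p.natDegree + n < j → (star δ p q).coeff j = 0) ∧
      (star δ p q).coeff (p.natDegree + n) = p.leadingCoeff * q.coeff n := by
  have hs : star δ p q = ∑ k ∈ Finset.range (p.natDegree + 1), p.coeff k • (dT δ)^[k] q := by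
    rw [star, op_eq_sum, Polynomial.sum_over_range (f := fun k c => c • (dT δ)^[k] q) _
      (fun k => zero_smul F _)]
  constructor
  · intro j hj
    rw [hs, Polynomial.finsetSum_coeff]
    refine Finset.sum_eq_zero fun k hk => ?_
    have := Finset.mem_range.1 hk
    rw [Polynomial.coeff_smul, (iter_dT_coeff hq k).1 j (by omega), smul_zero]
  · rw [hs, Polynomial.finsetSum_coeff, Finset.sum_range_succ, Finset.sum_eq_zero, zero_add,
      Polynomial.coeff_smul, add_comm p.natDegree n, (iter_dT_coeff hq _).2, smul_eq_mul,
      Polynomial.coeff_natDegree]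
    intro k hk
    have := Finset.mem_range.1 hk
    rw [Polynomial.coeff_smul, (iter_dT_coeff hq k).1 _ (by omega), smul_zero]

lemma star_natDegree {p q : Polynomial F} (hp : p ≠ 0) (hq : q ≠ 0) :
    (star δ p q).natDegree = p.natDegree + q.natDegree := by
  obtain ⟨h1, h2⟩ := star_coeff (δ := δ) (p := p) (q := q) (n := q.natDegree)
    fun j hj => Polynomial.coeff_eq_zero_of_natDegree_lt hj
  refine Polynomial.natDegree_eq_of_le_of_coeff_ne_zero
    (Polynomial.natDegree_le_iff_coeff_eq_zero.2 fun j hj => h1 j hj) ?_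
  rw [h2]
  exact mul_ne_zero (Polynomial.leadingCoeff_ne_zero.2 hp) (Polynomial.leadingCoeff_ne_zero.2 hq)

lemma star_zero (p : Polynomial F) : star δ p 0 = 0 := by
  have h (k : ℕ) : (dT δ)^[k] 0 = 0 := Function.iterate_fixed (by simp [dT]) k
  simp [star, op_eq_sum, h, Polynomial.sum]

lemma zero_star (p : Polynomial F) : star δ 0 p = 0 := map_zero _

/-! ### The Euclidean algorithm for pairs of operators -/

variable (δ) in
/-- The derivation of the free differential module of rank two. -/
def dP : Polynomial F × Polynomial F → Polynomial F × Polynomial F := Prod.map (dT δ) (dT δ)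

/-- The linear map `(S, T) ↦ S(x) + T(y)`. -/
def pairOp (d : M → M) (x y : M) : Polynomial F × Polynomial F →ₗ[F] M :=
  (op d x).coprod (op d y)

lemma pairOp_apply (d : M → M) (x y : M) (v : Polynomial F × Polynomial F) :
    pairOp d x y v = op d x v.1 + op d y v.2 := rfl

lemma pairOp_dP {d : M → M} (hd : IsDiffMod δ d) (x y : M) (v : Polynomial F × Polynomial F) :
    pairOp d x y (dP δ v) = d (pairOp d x y v) := by
  simp only [pairOp_apply, dP, Prod.map, op_dT hd, hd.add]

lemma op_dP (v : Polynomial F × Polynomial F) (l : Polynomial F) :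
    op (dP δ) v l = (star δ l v.1, star δ l v.2) :=
  Prod.ext (map_op (d' := dT δ) (LinearMap.fst F (Polynomial F) (Polynomial F)) (fun _ => rfl) v l)
    (map_op (d' := dT δ) (LinearMap.snd F (Polynomial F) (Polynomial F)) (fun _ => rfl) v l)

/-- The Euclidean algorithm: some automorphism of the rank-two free differential module, a
product of transvections `(S, T) ↦ (S, T - S ∘ t)` and swaps, takes `(p, q)` to `(g, 0)`. -/
lemma euclid (N : ℕ) : ∀ (p q : Polynomial F) (a b : ℕ), a + b ≤ N →
    (∀ j, a ≤ j → p.coeff j = 0) → (∀ j, b ≤ j → q.coeff j = 0) →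
    ∃ (φ : (Polynomial F × Polynomial F) ≃ₗ[F] (Polynomial F × Polynomial F)) (g : Polynomial F),
      (∀ v, φ (dP δ v) = dP δ (φ v)) ∧ φ (p, q) = (g, 0) := by
  -- the automorphism for `(q, p)` yields one for `(p, q)`
  have hswap : ∀ p q : Polynomial F,
      (∃ (φ : (Polynomial F × Polynomial F) ≃ₗ[F] (Polynomial F × Polynomial F))
        (g : Polynomial F), (∀ v, φ (dP δ v) = dP δ (φ v)) ∧ φ (q, p) = (g, 0)) →
      ∃ (φ : (Polynomial F × Polynomial F) ≃ₗ[F] (Polynomial F × Polynomial F))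
        (g : Polynomial F), (∀ v, φ (dP δ v) = dP δ (φ v)) ∧ φ (p, q) = (g, 0) := by
    rintro p q ⟨φ, g, h1, h2⟩
    exact ⟨(LinearEquiv.prodComm F _ _).trans φ, g, fun v => h1 v.swap, h2⟩
  induction N using Nat.strong_induction_on with
  | _ N ih =>
  have main : ∀ (p q : Polynomial F) (a b : ℕ), a + b ≤ N → p ≠ 0 → q ≠ 0 →
      (∀ j, a ≤ j → p.coeff j = 0) → (∀ j, b ≤ j → q.coeff j = 0) →
      p.natDegree ≤ q.natDegree →
      ∃ (φ : (Polynomial F × Polynomial F) ≃ₗ[F] (Polynomial F × Polynomial F))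
        (g : Polynomial F), (∀ v, φ (dP δ v) = dP δ (φ v)) ∧ φ (p, q) = (g, 0) := by
    intro p q a b hab hp hq ha hb hle
    have hlc := Polynomial.leadingCoeff_ne_zero.2 hp
    have hqb : q.natDegree < b := by
      by_contra h
      exact Polynomial.leadingCoeff_ne_zero.2 hq (hb _ (by omega))
    let t : Polynomial F := Polynomial.monomial (q.natDegree - p.natDegree)
      (p.leadingCoeff⁻¹ * q.leadingCoeff)
    obtain ⟨h1, h2⟩ := star_coeff (δ := δ) (p := p) (q := t) (n := q.natDegree - p.natDegree)
      fun j hj => Polynomial.coeff_monomial_of_ne _ (by omega)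
    rw [Nat.add_sub_cancel' hle] at h1 h2
    obtain ⟨φ, g, hφ, hg⟩ := ih (a + q.natDegree) (by omega) p (q - star δ p t) a q.natDegree le_rfl
      ha (by
        intro j hj
        rw [Polynomial.coeff_sub]
        rcases hj.eq_or_lt with rfl | hj
        · rw [h2, Polynomial.coeff_monomial_same, mul_inv_cancel_left₀ hlc,
            Polynomial.coeff_natDegree, sub_self]
        · rw [h1 j hj, Polynomial.coeff_eq_zero_of_natDegree_lt hj, sub_zero])
    let ψ : (Polynomial F × Polynomial F) ≃ₗ[F] (Polynomial F × Polynomial F) :=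
      LinearEquiv.skewProd (LinearEquiv.refl F _) (LinearEquiv.refl F _) (op (dT δ) (-t))
    have hneg : ∀ S : Polynomial F, op (dT δ) (-t) S = - star δ S t := fun S =>
      (map_op (-LinearMap.id) (fun x => by
        ext n; cases n <;> simp [dT_coeff_zero, dT_coeff_succ, add_comm]) t S).symm
    refine ⟨ψ.trans φ, g, fun v => ?_, ?_⟩
    · have : ψ (dP δ v) = dP δ (ψ v) := by
        refine Prod.ext rfl ?_
        change dT δ v.2 + op (dT δ) (-t) (dT δ v.1) = dT δ (v.2 + op (dT δ) (-t) v.1)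
        rw [op_dT (isDiffMod_dT δ), (isDiffMod_dT δ).add]
      rw [LinearEquiv.trans_apply, LinearEquiv.trans_apply, this, hφ]
    · have : ψ (p, q) = (p, q - star δ p t) := by
        refine Prod.ext rfl ?_
        change q + op (dT δ) (-t) p = _
        rw [hneg, sub_eq_add_neg]
      rw [LinearEquiv.trans_apply, this, hg]
  intro p q a b hab ha hb
  by_cases hq : q = 0
  · exact ⟨LinearEquiv.refl F _, p, fun _ => rfl, by rw [hq]; rfl⟩
  by_cases hp : p = 0
  · exact hswap _ _ ⟨LinearEquiv.refl F _, q, fun _ => rfl, by rw [hp]; rfl⟩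
  rcases le_total p.natDegree q.natDegree with h | h
  · exact main p q a b hab hp hq ha hb h
  · exact hswap _ _ (main q p b a (by omega) hq hp hb ha h)

end Operators

/-! ### Linear differential polynomials as operators -/

section Linear

variable {F}

/-- The linear homogeneous differential polynomial `Σ c_k u_k` attached to `Σ c_k X^k`. -/
def linU : Polynomial F →ₗ[F] MvPolynomial ℕ F :=
  Polynomial.lsum fun k => LinearMap.toSpanSingleton F _ (X k)

lemma linU_monomial (k : ℕ) (c : F) : linU (Polynomial.monomial k c) = c • X k := by
  change (Polynomial.monomial k c).sum (fun k c => c • (X k : MvPolynomial ℕ F)) = _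
  rw [Polynomial.sum_monomial_index _ _ (zero_smul F _)]

lemma coeff_linU (p : Polynomial F) (k : ℕ) :
    MvPolynomial.coeff (Finsupp.single k 1) (linU p) = p.coeff k := by
  induction p using Polynomial.induction_on' with
  | add p q hp hq => rw [map_add, MvPolynomial.coeff_add, hp, hq, Polynomial.coeff_add]
  | monomial n c =>
    rw [linU_monomial, MvPolynomial.coeff_smul, MvPolynomial.coeff_X, Polynomial.coeff_monomial]
    simp [Finsupp.single_left_inj]

lemma isLinHom_linU (p : Polynomial F) : IsLinHom (linU p) := by
  classical
  induction p using Polynomial.induction_on' with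
  | add p q hp hq =>
    intro m hm
    rw [map_add] at hm
    rcases Finset.mem_union.1 (MvPolynomial.support_add hm) with h | h
    · exact hp m h
    · exact hq m h
  | monomial n c =>
    intro m hm
    rw [linU_monomial] at hm
    have := MvPolynomial.support_smul hm
    rw [MvPolynomial.support_X, Finset.mem_singleton] at this
    exact ⟨n, this⟩

lemma exists_linU {L : MvPolynomial ℕ F} (hL : IsLinHom L) : ∃ p, L = linU p := by
  suffices h : L ∈ LinearMap.range (linU (F := F)) by
    obtain ⟨p, hp⟩ := h
    exact ⟨p, hp.symm⟩
  rw [MvPolynomial.as_sum L]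
  refine sum_mem fun m hm => ?_
  obtain ⟨k, rfl⟩ := hL m hm
  refine ⟨Polynomial.monomial k (MvPolynomial.coeff (Finsupp.single k 1) L), ?_⟩
  rw [linU_monomial, X, smul_monomial, smul_eq_mul, mul_one]

lemma one_le_ordU_linU (p : Polynomial F) :
    (1 : WithBot ℕ) ≤ ordU (linU p) ↔ 1 ≤ p.natDegree := by
  constructor
  · intro h
    have hne : (linU p).vars.max ≠ ⊥ := by
      intro hb
      rw [ordU, hb] at h
      exact absurd h (by decide)
    obtain ⟨k, hk⟩ := WithBot.ne_bot_iff_exists.1 hne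
    rw [ordU, ← hk] at h
    have h1 : 1 ≤ k := WithBot.coe_le_coe.1 (show ((1 : ℕ) : WithBot ℕ) ≤ k from h)
    obtain ⟨m, hm, hkm⟩ := (MvPolynomial.mem_vars_iff_mem_support k).1 (Finset.mem_of_max hk.symm)
    obtain ⟨j, rfl⟩ := isLinHom_linU p m hm
    have hjk : j = k := by
      by_contra hne
      simp only [Finsupp.mem_support_iff, Finsupp.single_apply, if_neg hne, ne_eq,
        not_true_eq_false] at hkm
    subst hjk
    rw [MvPolynomial.mem_support_iff, coeff_linU] at hm
    exact h1.trans (Polynomial.le_natDegree_of_ne_zero hm)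
  · intro h
    have hp : p ≠ 0 := by rintro rfl; simp at h
    have hmem : p.natDegree ∈ (linU p).vars := by
      rw [MvPolynomial.mem_vars_iff_mem_support]
      refine ⟨Finsupp.single p.natDegree 1, ?_, by simp⟩
      rw [MvPolynomial.mem_support_iff, coeff_linU]
      exact Polynomial.leadingCoeff_ne_zero.2 hp
    exact le_trans (WithBot.coe_le_coe.2 h) (Finset.le_max hmem)

lemma linU_eq_zero {p : Polynomial F} : linU p = 0 ↔ p = 0 := by
  refine ⟨fun h => ?_, fun h => by rw [h, map_zero]⟩
  ext k
  rw [← coeff_linU, h, MvPolynomial.coeff_zero, Polynomial.coeff_zero]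

lemma linU_injective : Function.Injective (linU (F := F)) :=
  (injective_iff_map_eq_zero _).2 fun _ => linU_eq_zero.1

lemma aeval_linU {S : Type*} [CommRing S] [Algebra F S] (f : ℕ → S) (p : Polynomial F) :
    aeval f (linU p) = p.sum fun k c => c • f k := by
  have : (aeval f).toLinearMap ∘ₗ linU =
      Polynomial.lsum fun k => LinearMap.toSpanSingleton F S (f k) := op_ext fun k => by
    change aeval f (linU (Polynomial.monomial k 1)) =
      (Polynomial.monomial k 1).sum fun k (c : F) => c • f k
    rw [linU_monomial, Polynomial.sum_monomial_index _ _ (zero_smul F _), one_smul, aeval_X,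
      one_smul]
  exact LinearMap.congr_fun this p

variable {δF : Derivation ℤ F F}

lemma isDiffMod_mv {σ : Type*} (d : Derivation ℤ (MvPolynomial σ F) (MvPolynomial σ F))
    (hd : ∀ c : F, d (C c) = C (δF c)) : IsDiffMod δF d where
  add := map_add d
  smul c x := by
    simp only [MvPolynomial.smul_eq_C_mul, Derivation.leibniz, hd, smul_eq_mul]
    ring

lemma isDiffMod_field (D : Derivation ℤ E E)
    (hD : ∀ a : F, D (algebraMap F E a) = algebraMap F E (δF a)) : IsDiffMod δF D where
  add := map_add D
  smul c x := by
    rw [Algebra.smul_def, Algebra.smul_def, Algebra.smul_def, D.leibniz, hD, smul_eq_mul,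
      smul_eq_mul]
    ring

lemma isDiffMod_self : IsDiffMod δF δF where
  add := map_add δF
  smul c x := by
    simp only [Derivation.leibniz, smul_eq_mul]
    ring

lemma op_add_right {M : Type*} [AddCommGroup M] [Module F M] {d : M → M} (hd : IsDiffMod δF d)
    (x y : M) (p : Polynomial F) : op d (x + y) p = op d x p + op d y p := by
  have h (k : ℕ) : d^[k] (x + y) = d^[k] x + d^[k] y := by
    induction k with
    | zero => rfl
    | succ k ih => simp only [Function.iterate_succ_apply', ih, hd.add]
  have : (op d (x + y) : Polynomial F →ₗ[F] M) = op d x + op d y := op_ext fun k => by simp [h]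
  exact LinearMap.congr_fun this p

/-- Substitution of linear differential polynomials is composition of operators. -/
lemma aeval_linU_linU (dU : Derivation ℤ (MvPolynomial ℕ F) (MvPolynomial ℕ F))
    (hdUC : ∀ a : F, dU (C a) = C (δF a)) (hdUX : ∀ k : ℕ, dU (X k) = X (k + 1))
    (l m : Polynomial F) :
    aeval (fun k => (⇑dU)^[k] (linU m)) (linU l) = linU (star δF l m) := by
  have hX (k : ℕ) : (⇑dU)^[k] (X 0) = X k := by
    induction k with
    | zero => rfl
    | succ k ih => rw [Function.iterate_succ_apply', ih, hdUX]
  have h0 : linU = op (⇑dU) (X 0 : MvPolynomial ℕ F) := op_ext fun k => by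
    rw [linU_monomial, op_monomial, hX]
  rw [aeval_linU, h0, op_star (isDiffMod_mv dU hdUC)]
  rfl

lemma op_mem_diffIdeal {σ : Type*} (d : Derivation ℤ (MvPolynomial σ F) (MvPolynomial σ F))
    (A : MvPolynomial σ F) (p : Polynomial F) : op d A p ∈ diffIdeal d A := by
  rw [op_eq_sum, Polynomial.sum_def]
  refine sum_mem fun k _ => Submodule.smul_of_tower_mem _ _ (Ideal.subset_span ⟨k, rfl⟩)

lemma op_algebraMap {S : Type*} [CommRing S] [Algebra F S] {d : S → S}
    (hd : ∀ c : F, d (algebraMap F S c) = algebraMap F S (δF c)) (c : F) (p : Polynomial F) :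
    op d (algebraMap F S c) p = algebraMap F S (op δF c p) :=
  (map_op (d := δF) (Algebra.linearMap F S) (fun x => (hd x).symm) c p).symm

/-- A map commuting with the derivations is determined by the images of `(1, 0)`
and `(0, 1)`. -/
lemma map_pair {M : Type*} [AddCommGroup M] [Module F M] {d : M → M}
    (f : (Polynomial F × Polynomial F) →ₗ[F] M) (hf : ∀ v, f (dP δF v) = d (f v))
    (v : Polynomial F × Polynomial F) : pairOp d (f (1, 0)) (f (0, 1)) v = f v := by
  rw [pairOp_apply, ← map_op f hf, ← map_op f hf, ← map_add, op_dP, op_dP]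
  simp only [star_zero]
  simp only [star, op_dT_one]
  rw [Prod.mk_add_mk, add_zero, zero_add]

section Eval

variable (D : Derivation ℤ E E) (hD : ∀ a : F, D (algebraMap F E a) = algebraMap F E (δF a))
  (dxy : Derivation ℤ (MvPolynomial (Fin 2 × ℕ) F) (MvPolynomial (Fin 2 × ℕ) F))
  (hdxyC : ∀ a : F, dxy (C a) = C (δF a))
  (hdxyX : ∀ (i : Fin 2) (k : ℕ), dxy (X (i, k)) = X (i, k + 1))

include hdxyX in
lemma iter_dxy (i : Fin 2) (k : ℕ) : (⇑dxy)^[k] (X (i, 0)) = X (i, k) := by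
  induction k with
  | zero => rfl
  | succ k ih => rw [Function.iterate_succ_apply', ih, hdxyX]

include hdxyX in
lemma rename_linU (i : Fin 2) (p : Polynomial F) :
    rename (fun k => (i, k)) (linU p) = op dxy (X (i, 0)) p := by
  have : (rename (R := F) (fun k : ℕ => (i, k))).toLinearMap ∘ₗ linU = op dxy (X (i, 0)) :=
    op_ext fun k => by
      simp [linU_monomial, iter_dxy dxy hdxyX]
  exact LinearMap.congr_fun this p

include hD hdxyC hdxyX in
lemma evalD2_deriv (η₁ η₂ : E) (B : MvPolynomial (Fin 2 × ℕ) F) :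
    evalD2 F D η₁ η₂ (dxy B) = D (evalD2 F D η₁ η₂ B) := by
  induction B using MvPolynomial.induction_on with
  | C a => simp only [hdxyC, evalD2, algHom_C, hD]
  | add p q hp hq => simp only [map_add, hp, hq]
  | mul_X p v hp =>
    obtain ⟨i, k⟩ := v
    simp only [Derivation.leibniz, hdxyX, smul_eq_mul, map_add, map_mul, hp]
    simp only [evalD2, aeval_X, Function.iterate_succ_apply']

include hD hdxyC hdxyX in
lemma evalD2_pairOp (η₁ η₂ : E) (v : Polynomial F × Polynomial F) :
    evalD2 F D η₁ η₂ (pairOp dxy (X (0, 0)) (X (1, 0)) v) = pairOp D η₁ η₂ v := by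
  have h := evalD2_deriv D hD dxy hdxyC hdxyX η₁ η₂
  rw [pairOp_apply, map_add, pairOp_apply]
  have h1 := map_op (d := dxy) (d' := D) (evalD2 F D η₁ η₂).toLinearMap h (X (0, 0)) v.1
  have h2 := map_op (d := dxy) (d' := D) (evalD2 F D η₁ η₂).toLinearMap h (X (1, 0)) v.2
  simp only [AlgHom.toLinearMap_apply] at h1 h2
  rw [h1, h2]
  simp [evalD2]

include hD hdxyC hdxyX in
lemma evalD2_diffIdeal (η₁ η₂ : E) {A B : MvPolynomial (Fin 2 × ℕ) F}
    (hA : evalD2 F D η₁ η₂ A = 0) (hB : B ∈ diffIdeal dxy A) : evalD2 F D η₁ η₂ B = 0 := by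
  have hk (k : ℕ) : evalD2 F D η₁ η₂ ((⇑dxy)^[k] A) = 0 := by
    induction k with
    | zero => exact hA
    | succ k ih => rw [Function.iterate_succ_apply', evalD2_deriv D hD dxy hdxyC hdxyX, ih, map_zero]
  have hle : diffIdeal dxy A ≤ RingHom.ker (evalD2 F D η₁ η₂) := Ideal.span_le.2 <| by
    rintro _ ⟨k, rfl⟩
    exact hk k
  exact hle hB

include hD in
lemma deriv_mem_genDF (u : E) {w : E} (hw : w ∈ genDF F D {u}) : D w ∈ genDF F D {u} := by
  obtain ⟨n, hn⟩ := exists_mem_lvl D u hw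
  rw [genDF_eq_iSup]
  exact le_iSup (lvl F D u) (n + 1) (deriv_mem_lvl D u hD hn)

include hD in
lemma op_mem_genDF (u : E) {w : E} (hw : w ∈ genDF F D {u}) (p : Polynomial F) :
    op D w p ∈ genDF F D {u} := by
  have h (k : ℕ) : (⇑D)^[k] w ∈ genDF F D {u} := by
    induction k with
    | zero => exact hw
    | succ k ih => rw [Function.iterate_succ_apply']; exact deriv_mem_genDF D hD u ih
  rw [op_eq_sum, Polynomial.sum_def]
  exact sum_mem fun k _ => IntermediateField.smul_mem _ (h k)

include hD hdxyC hdxyX in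
/-- Parametrization from a straightening: if an automorphism `φ` takes `(p, q)` to a nonzero
constant, then in the new coordinates the curve reads `c z + a = 0` with the other coordinate
free, so it is parametrized by `z = -a/c` and the generic value `u`. -/
lemma param_of_straight (u : E) (hu : DiffTrans F D u) (p q : Polynomial F) (a c : F)
    (hc : c ≠ 0) (φ : (Polynomial F × Polynomial F) ≃ₗ[F] (Polynomial F × Polynomial F))
    (hφ : ∀ v, φ (dP δF v) = dP δF (φ v)) (hpq : φ (p, q) = (Polynomial.C c, 0))
    (A : MvPolynomial (Fin 2 × ℕ) F)
    (hA : A = pairOp dxy (X (0, 0)) (X (1, 0)) (p, q) + C a) :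
    ∃ η₁ η₂ : E, η₁ ∈ genDF F D {u} ∧ η₂ ∈ genDF F D {u} ∧
       ¬(η₁ ∈ (algebraMap F E).range ∧ η₂ ∈ (algebraMap F E).range) ∧
       {B : MvPolynomial (Fin 2 × ℕ) F | evalD2 F D η₁ η₂ B = 0}
         = (diffIdeal dxy A : Set (MvPolynomial (Fin 2 × ℕ) F)) := by
  have hdE := isDiffMod_field D hD
  have hdM := isDiffMod_mv dxy hdxyC
  set ζ : F := -(c⁻¹ * a) with hζ
  set lam : (Polynomial F × Polynomial F) →ₗ[F] E :=
    pairOp D (algebraMap F E ζ) u ∘ₗ φ.toLinearMap with hlam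
  have hlam_apply : ∀ v, lam v = pairOp D (algebraMap F E ζ) u (φ v) := fun _ => rfl
  have hlamd : ∀ v, lam (dP δF v) = D (lam v) := fun v => by
    rw [hlam_apply, hφ, pairOp_dP hdE, hlam_apply]
  have hηv := map_pair lam hlamd
  have hψ : ∀ v, φ.symm (dP δF v) = dP δF (φ.symm v) := fun v => by
    rw [LinearEquiv.symm_apply_eq, hφ, LinearEquiv.apply_symm_apply]
  have hmem : ∀ v, lam v ∈ genDF F D {u} := fun v => by
    rw [hlam_apply, pairOp_apply]
    exact add_mem (op_mem_genDF D hD u ((genDF F D {u}).algebraMap_mem ζ) _)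
      (op_mem_genDF D hD u (IntermediateField.subset_adjoin _ _ ⟨u, rfl, 0, rfl⟩) _)
  set ι : (Polynomial F × Polynomial F) →ₗ[F] MvPolynomial (Fin 2 × ℕ) F :=
    pairOp dxy (X (0, 0)) (X (1, 0)) with hι
  have hev : ∀ v, evalD2 F D (lam (1, 0)) (lam (0, 1)) (ι v) = lam v := fun v => by
    rw [hι, evalD2_pairOp D hD dxy hdxyC hdxyX, hηv]
  have hAη : evalD2 F D (lam (1, 0)) (lam (0, 1)) A = 0 := by
    rw [hA, map_add, hev, hlam_apply, hpq, pairOp_apply, map_zero, add_zero,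
      ← Polynomial.monomial_zero_left, op_monomial, Function.iterate_zero_apply, evalD2, algHom_C,
      Algebra.smul_def, ← map_mul, ← map_add, hζ]
    rw [mul_neg, mul_inv_cancel_left₀ hc, neg_add_cancel, map_zero]
  refine ⟨lam (1, 0), lam (0, 1), hmem _, hmem _, ?_, ?_⟩
  · rintro ⟨⟨c₁, h1⟩, ⟨c₂, h2⟩⟩
    have huF : u ∈ (algebraMap F E).range := by
      have h3 := hηv (φ.symm (0, 1))
      rw [← h1, ← h2, pairOp_apply, op_algebraMap hD, op_algebraMap hD, ← map_add, hlam_apply,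
        LinearEquiv.apply_symm_apply, pairOp_apply, map_zero, zero_add,
        ← Polynomial.monomial_zero_one, op_monomial, one_smul] at h3
      exact ⟨_, h3⟩
    obtain ⟨b, hb⟩ := huF
    have h4 := algebraMap_mem_lvl D u 0 b
    rw [hb] at h4
    exact iter_notMem_lvl D u hu 0 h4
  · ext B
    refine ⟨fun hB => ?_, fun hB => evalD2_diffIdeal D hD dxy hdxyC hdxyX _ _ hAη hB⟩
    -- the parametrization of the curve by the free coordinate, on the level of polynomials
    let ρ : MvPolynomial ℕ F →ₐ[F] MvPolynomial (Fin 2 × ℕ) F :=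
      aeval fun k => ι (φ.symm (0, Polynomial.monomial k 1))
    have hρ : ∀ T, ρ (linU T) = ι (φ.symm (0, T)) := fun T => by
      have : ρ.toLinearMap ∘ₗ linU =
          ι ∘ₗ φ.symm.toLinearMap ∘ₗ LinearMap.inr F (Polynomial F) (Polynomial F) :=
        op_ext fun k => by simp [ρ, linU_monomial]
      exact LinearMap.congr_fun this T
    have hρu : ∀ b, evalD2 F D (lam (1, 0)) (lam (0, 1)) (ρ b) = evalD F D u b := fun b => by
      have : (evalD2 F D (lam (1, 0)) (lam (0, 1))).comp ρ = evalD F D u := by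
        ext k
        simp only [AlgHom.comp_apply, ρ, aeval_X, hev, evalD]
        rw [hlam_apply, LinearEquiv.apply_symm_apply, pairOp_apply, map_zero, zero_add,
          op_monomial, one_smul]
      exact DFunLike.congr_fun this b
    have hι1 : ι (φ.symm (1, 0)) = op dxy A (Polynomial.C c⁻¹) + algebraMap F _ ζ := by
      have h1 : φ.symm (1, 0) = c⁻¹ • (p, q) := by
        rw [LinearEquiv.symm_apply_eq, map_smul, hpq, Prod.smul_mk, smul_zero,
          Polynomial.smul_C, smul_eq_mul, inv_mul_cancel₀ hc, Polynomial.C_1]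
      have h2 : ι (p, q) = A - C a := by rw [hA]; ring
      rw [h1, map_smul, h2, ← Polynomial.monomial_zero_left, op_monomial,
        Function.iterate_zero_apply, smul_sub, MvPolynomial.algebraMap_eq, hζ,
        MvPolynomial.smul_eq_C_mul (C a), ← C_mul, C_neg, sub_eq_add_neg]
    have hred : ∀ v, ∃ b, ι v - ρ b ∈ diffIdeal dxy A := fun v => by
      have hv : v = φ.symm ((φ v).1, 0) + φ.symm (0, (φ v).2) := by
        rw [← map_add, Prod.mk_add_mk, add_zero, zero_add, LinearEquiv.symm_apply_apply]
      have h1 : ι (φ.symm ((φ v).1, 0)) = op dxy A (star δF (φ v).1 (Polynomial.C c⁻¹)) +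
          algebraMap F _ (op δF ζ (φ v).1) := by
        have h2 := map_op (d := dP δF) (d' := dxy) (ι ∘ₗ φ.symm.toLinearMap)
          (fun x => by
            simp only [LinearMap.comp_apply, LinearEquiv.coe_coe, hψ]
            rw [hι, pairOp_dP hdM]) (1, 0) (φ v).1
        rw [op_dP, star_zero, star, op_dT_one] at h2
        simp only [LinearMap.comp_apply, LinearEquiv.coe_coe] at h2
        rw [h2, hι1, op_add_right hdM, op_algebraMap (d := dxy) hdxyC, op_star hdM]
      refine ⟨C (op δF ζ (φ v).1) + linU (φ v).2, ?_⟩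
      have h3 : ι v = ι (φ.symm ((φ v).1, 0)) + ι (φ.symm (0, (φ v).2)) := by
        rw [← map_add, ← hv]
      rw [h3, h1, map_add, hρ, algHom_C]
      convert op_mem_diffIdeal dxy A (star δF (φ v).1 (Polynomial.C c⁻¹)) using 1
      ring
    have hX : ∀ i k, ∃ b, X (i, k) - ρ b ∈ diffIdeal dxy A := by
      intro i k
      fin_cases i
      · obtain ⟨b, hb⟩ := hred (Polynomial.monomial k 1, 0)
        refine ⟨b, ?_⟩
        rwa [hι, pairOp_apply, map_zero, op_monomial, one_smul, iter_dxy dxy hdxyX,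
          add_zero] at hb
      · obtain ⟨b, hb⟩ := hred (0, Polynomial.monomial k 1)
        refine ⟨b, ?_⟩
        rwa [hι, pairOp_apply, map_zero, op_monomial, one_smul, iter_dxy dxy hdxyX,
          zero_add] at hb
    have hall : ∀ B, ∃ b, B - ρ b ∈ diffIdeal dxy A := fun B => by
      induction B using MvPolynomial.induction_on with
      | C r => exact ⟨C r, by rw [algHom_C, MvPolynomial.algebraMap_eq, sub_self]; exact zero_mem _⟩
      | add P Q hP hQ =>
        obtain ⟨b, hb⟩ := hP
        obtain ⟨b', hb'⟩ := hQ
        refine ⟨b + b', ?_⟩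
        rw [map_add, add_sub_add_comm]
        exact add_mem hb hb'
      | mul_X P v hP =>
        obtain ⟨b, hb⟩ := hP
        obtain ⟨b', hb'⟩ := hX v.1 v.2
        refine ⟨b * b', ?_⟩
        have : P * X v - ρ (b * b') = X v * (P - ρ b) + ρ b * (X v - ρ b') := by
          rw [map_mul]; ring
        rw [this]
        exact add_mem (Ideal.mul_mem_left _ _ hb) (Ideal.mul_mem_left _ _ hb')
    obtain ⟨b, hb⟩ := hall B
    have h0 := evalD2_diffIdeal D hD dxy hdxyC hdxyX _ _ hAη hb
    have hB' : evalD2 F D (lam (1, 0)) (lam (0, 1)) B = 0 := hB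
    rw [map_sub, hB', zero_sub, neg_eq_zero, hρu] at h0
    have hb0 : b = 0 := (injective_iff_map_eq_zero _).1 hu b h0
    rw [hb0, map_zero, sub_zero] at hb
    exact hb

end Eval

end Linear

/-! ### Gradients of elements of `[A]` -/

section Gradient

variable {F}
variable {δF : Derivation ℤ F F} (D : Derivation ℤ E E)
  (hD : ∀ a : F, D (algebraMap F E a) = algebraMap F E (δF a))
  (dxy : Derivation ℤ (MvPolynomial (Fin 2 × ℕ) F) (MvPolynomial (Fin 2 × ℕ) F))
  (hdxyC : ∀ a : F, dxy (C a) = C (δF a))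
  (hdxyX : ∀ (i : Fin 2) (k : ℕ), dxy (X (i, k)) = X (i, k + 1))

/-- The gradient of `B`, evaluated at `(η₁, η₂)`. -/
def grad (η₁ η₂ : E) (B : MvPolynomial (Fin 2 × ℕ) F) (v : Fin 2 × ℕ) : E :=
  evalD2 F D η₁ η₂ (pderiv v B)

/-- The `i`-th component of a pair of operators. -/
def comp2 (i : Fin 2) (v : Polynomial F × Polynomial F) : Polynomial F :=
  if i = 0 then v.1 else v.2

lemma pderiv_C_smul_X (v w : Fin 2 × ℕ) (c : F) :
    pderiv v (c • X w : MvPolynomial (Fin 2 × ℕ) F) = if w = v then C c else 0 := by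
  classical
  rw [Derivation.map_smul, pderiv_X, Pi.single_apply]
  split_ifs <;> simp_all [MvPolynomial.smul_eq_C_mul]

include hdxyX in
lemma pderiv_op (v : Fin 2 × ℕ) (i : Fin 2) (p : Polynomial F) :
    pderiv v (op dxy (X (i, 0)) p) = if i = v.1 then C (p.coeff v.2) else 0 := by
  induction p using Polynomial.induction_on' with
  | add p q hp hq =>
    rw [map_add, map_add, hp, hq, Polynomial.coeff_add, C_add]
    split_ifs <;> simp
  | monomial n c =>
    rw [op_monomial, iter_dxy dxy hdxyX, pderiv_C_smul_X, Polynomial.coeff_monomial]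
    obtain ⟨i', j⟩ := v
    by_cases h1 : i = i' <;> by_cases h2 : n = j <;> simp [h1, h2]

include hdxyX in
lemma grad_pairOp (η₁ η₂ : E) (v : Polynomial F × Polynomial F) (b : F) (w : Fin 2 × ℕ) :
    grad D η₁ η₂ (pairOp dxy (X (0, 0)) (X (1, 0)) v + C b) w =
      algebraMap F E ((comp2 w.1 v).coeff w.2) := by
  rw [grad, map_add, pderiv_C, add_zero, pairOp_apply, map_add, pderiv_op dxy hdxyX,
    pderiv_op dxy hdxyX]
  obtain ⟨i, j⟩ := w
  fin_cases i <;> simp [comp2, evalD2]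

include hD hdxyC hdxyX in
/-- Where `A` and its derivatives vanish, the gradient of an element of `[A]` is a linear
combination of the gradients of the derivatives of `A`. -/
lemma grad_mem_span (η₁ η₂ : E) {A B : MvPolynomial (Fin 2 × ℕ) F}
    (hA : evalD2 F D η₁ η₂ A = 0) (hB : B ∈ diffIdeal dxy A) :
    grad D η₁ η₂ B ∈
      Submodule.span E (Set.range fun k : ℕ => grad D η₁ η₂ ((⇑dxy)^[k] A)) := by
  induction hB using Submodule.span_induction with
  | mem x hx =>
    obtain ⟨k, rfl⟩ := hx
    exact Submodule.subset_span ⟨k, rfl⟩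
  | zero =>
    have : grad D η₁ η₂ (0 : MvPolynomial (Fin 2 × ℕ) F) = 0 := by ext v; simp [grad]
    rw [this]; exact zero_mem _
  | add x y _ _ hx hy =>
    have : grad D η₁ η₂ (x + y) = grad D η₁ η₂ x + grad D η₁ η₂ y := by
      ext v; simp [grad]
    rw [this]; exact add_mem hx hy
  | smul r x hx ih =>
    have hx0 := evalD2_diffIdeal D hD dxy hdxyC hdxyX η₁ η₂ hA hx
    have : grad D η₁ η₂ (r • x) = evalD2 F D η₁ η₂ r • grad D η₁ η₂ x := by
      ext v
      simp only [grad, smul_eq_mul, Derivation.leibniz, map_add, map_mul, hx0, zero_mul, add_zero,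
        Pi.smul_apply]
    rw [this]; exact Submodule.smul_mem _ _ ih

include hdxyC in
lemma iter_dxy_pairOp (v : Polynomial F × Polynomial F) (a : F) (k : ℕ) :
    (⇑dxy)^[k] (pairOp dxy (X (0, 0)) (X (1, 0)) v + C a) =
      pairOp dxy (X (0, 0)) (X (1, 0)) ((dP δF)^[k] v) + C ((⇑δF)^[k] a) := by
  induction k with
  | zero => rfl
  | succ k ih =>
    rw [Function.iterate_succ_apply', ih, map_add, hdxyC, Function.iterate_succ_apply',
      pairOp_dP (isDiffMod_mv dxy hdxyC), Function.iterate_succ_apply']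

lemma comp2_iter_dP (i : Fin 2) (v : Polynomial F × Polynomial F) (k : ℕ) :
    comp2 i ((dP δF)^[k] v) = (dT δF)^[k] (comp2 i v) := by
  induction k with
  | zero => rfl
  | succ k ih =>
    rw [Function.iterate_succ_apply', Function.iterate_succ_apply', ← ih]
    unfold comp2
    split_ifs <;> rfl

include hD hdxyC hdxyX in
/-- Let `A = P(x, y) + a` have a zero. If `x` (or `y`) occurs in `A`, an element
`m(x, y) + b` of `[A]` whose order in it is smaller than that of `A` does not involve it. -/
lemma comp2_eq_zero_of_mem (η₁ η₂ : E) (P m : Polynomial F × Polynomial F) (a b : F)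
    (hA : evalD2 F D η₁ η₂ (pairOp dxy (X (0, 0)) (X (1, 0)) P + C a) = 0)
    (hB : pairOp dxy (X (0, 0)) (X (1, 0)) m + C b ∈
      diffIdeal dxy (pairOp dxy (X (0, 0)) (X (1, 0)) P + C a))
    (i : Fin 2) (hP : comp2 i P ≠ 0) (hm : (comp2 i m).natDegree < (comp2 i P).natDegree) :
    comp2 i m = 0 := by
  obtain ⟨c, hc⟩ := Finsupp.mem_span_range_iff_exists_finsupp.1
    (grad_mem_span D hD dxy hdxyC hdxyX η₁ η₂ hA hB)
  have key (j : ℕ) : (c.sum fun k x => x * algebraMap F E (((dT δF)^[k] (comp2 i P)).coeff j)) =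
      algebraMap F E ((comp2 i m).coeff j) := by
    have h := congrFun hc (i, j)
    rw [grad_pairOp D dxy hdxyX, Finsupp.sum_apply'] at h
    rw [← h]
    refine Finsupp.sum_congr fun k _ => ?_
    rw [Pi.smul_apply, iter_dxy_pairOp dxy hdxyC, grad_pairOp D dxy hdxyX, comp2_iter_dP,
      smul_eq_mul]
  by_cases h0 : c = 0
  · ext j
    have h := key j
    rw [h0, Finsupp.sum_zero_index] at h
    exact (algebraMap F E).injective (by rw [← h, Polynomial.coeff_zero, map_zero])
  · exfalso
    have hne := Finsupp.support_nonempty_iff.2 h0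
    -- the highest derivative of `A` involved contributes an uncancelled leading term
    let K := c.support.max' hne
    have hK : K ∈ c.support := Finset.max'_mem _ _
    have hdeg : ∀ j, (comp2 i P).natDegree < j → (comp2 i P).coeff j = 0 := fun j hj =>
      Polynomial.coeff_eq_zero_of_natDegree_lt hj
    have h := key ((comp2 i P).natDegree + K)
    rw [Polynomial.coeff_eq_zero_of_natDegree_lt (by omega), map_zero, Finsupp.sum,
      Finset.sum_eq_single_of_mem K hK, (iter_dT_coeff hdeg K).2] at h
    · refine mul_ne_zero (Finsupp.mem_support_iff.1 hK) ?_ h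
      rw [Polynomial.coeff_natDegree, Ne, map_eq_zero]
      exact Polynomial.leadingCoeff_ne_zero.2 hP
    · intro k hk hkK
      have hlt : k < K := lt_of_le_of_ne (Finset.le_max' _ _ hk) hkK
      rw [(iter_dT_coeff hdeg k).1 _ (by omega), map_zero, mul_zero]

include hD hdxyC hdxyX in
/-- If `p = l ∘ m₁` and `q = l ∘ m₂` with `l` of positive order, the value `w` of
`m₁(x) + m₂(y)` at a parametrization in `F⟨u⟩` solves `l(w) = -a`, so it is a constant `c ∈ F`;
but `m₁(x) + m₂(y) - c` has too small an order to lie in `[A]`. -/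
lemma not_param_of_left_divisor [CharZero F] (u : E) (hu : DiffTrans F D u)
    (l m₁ m₂ : Polynomial F) (hl : 1 ≤ l.natDegree) (a : F)
    (hpq : ¬(star δF l m₁ = 0 ∧ star δF l m₂ = 0))
    (η₁ η₂ : E) (h₁ : η₁ ∈ genDF F D {u}) (h₂ : η₂ ∈ genDF F D {u})
    (hI : {B : MvPolynomial (Fin 2 × ℕ) F | evalD2 F D η₁ η₂ B = 0} =
      (diffIdeal dxy (pairOp dxy (X (0, 0)) (X (1, 0)) (star δF l m₁, star δF l m₂) + C a) :
        Set (MvPolynomial (Fin 2 × ℕ) F))) : False := by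
  have hl0 : l ≠ 0 := by rintro rfl; simp at hl
  have hA : evalD2 F D η₁ η₂
      (pairOp dxy (X (0, 0)) (X (1, 0)) (star δF l m₁, star δF l m₂) + C a) = 0 := by
    have : pairOp dxy (X (0, 0)) (X (1, 0)) (star δF l m₁, star δF l m₂) + C a ∈
        {B : MvPolynomial (Fin 2 × ℕ) F | evalD2 F D η₁ η₂ B = 0} := by
      rw [hI]; exact Ideal.subset_span ⟨0, rfl⟩
    exact this
  set w : E := pairOp D η₁ η₂ (m₁, m₂) with hw
  have hwmem : w ∈ genDF F D {u} := by
    rw [hw, pairOp_apply]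
    exact add_mem (op_mem_genDF D hD u h₁ _) (op_mem_genDF D hD u h₂ _)
  have hlw : op D w l = algebraMap F E (-a) := by
    have h := hA
    rw [map_add, evalD2_pairOp D hD dxy hdxyC hdxyX, ← op_dP (m₁, m₂) l,
      map_op (pairOp D η₁ η₂) (pairOp_dP (isDiffMod_field D hD) η₁ η₂), evalD2, algHom_C] at h
    rw [map_neg]
    exact eq_neg_of_add_eq_zero_left h
  obtain ⟨c, hc⟩ := mem_range_of_linear D u hD hu hwmem l hl0 ⟨-a, hlw.symm⟩
  have hB : pairOp dxy (X (0, 0)) (X (1, 0)) (m₁, m₂) + C (-c) ∈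
      diffIdeal dxy (pairOp dxy (X (0, 0)) (X (1, 0)) (star δF l m₁, star δF l m₂) + C a) := by
    rw [← SetLike.mem_coe, ← hI]
    change evalD2 F D η₁ η₂ _ = 0
    rw [map_add, evalD2_pairOp D hD dxy hdxyC hdxyX, evalD2, algHom_C, map_neg, hc, hw,
      add_neg_cancel]
  have hcomp (i : Fin 2) : comp2 i (star δF l m₁, star δF l m₂) = star δF l (comp2 i (m₁, m₂)) := by
    unfold comp2; split_ifs <;> rfl
  have hz (i : Fin 2) : comp2 i (star δF l m₁, star δF l m₂) = 0 := by
    by_contra hP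
    have hm0 : comp2 i (m₁, m₂) ≠ 0 := by
      intro h
      rw [hcomp, h, star_zero] at hP
      exact hP rfl
    refine hm0 (comp2_eq_zero_of_mem D hD dxy hdxyC hdxyX η₁ η₂ _ _ a (-c) hA hB i hP ?_)
    rw [hcomp, star_natDegree hl0 hm0]
    omega
  exact hpq ⟨hz 0, hz 1⟩

end Gradient

/-- the linear differential curve defined by
`A = L₁(x) + L₂(y) + a` is unirational iff `L₁, L₂` have no common left divisor of
positive order (`gcld(L₁, L₂) = 1`). -/
theorem linear_curve_unirational_iff_gcld [CharZero F]
    (δF : Derivation ℤ F F) (D : Derivation ℤ E E)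
    (hD : ∀ a : F, D (algebraMap F E a) = algebraMap F E (δF a))
    (dU : Derivation ℤ (MvPolynomial ℕ F) (MvPolynomial ℕ F))
    (hdUC : ∀ a : F, dU (C a) = C (δF a)) (hdUX : ∀ k : ℕ, dU (X k) = X (k + 1))
    (dxy : Derivation ℤ (MvPolynomial (Fin 2 × ℕ) F) (MvPolynomial (Fin 2 × ℕ) F))
    (hdxyC : ∀ a : F, dxy (C a) = C (δF a))
    (hdxyX : ∀ (i : Fin 2) (k : ℕ), dxy (X (i, k)) = X (i, k + 1))
    (L₁ L₂ : MvPolynomial ℕ F) (hL₁ : IsLinHom L₁) (hL₂ : IsLinHom L₂)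
    (hL : ¬(L₁ = 0 ∧ L₂ = 0)) (a : F)
    (A : MvPolynomial (Fin 2 × ℕ) F)
    (hA : A = rename (fun k => ((0 : Fin 2), k)) L₁
      + rename (fun k => ((1 : Fin 2), k)) L₂ + C a)
    (hAF : ∀ c : F, A ≠ C c)
    (u : E) (hu : DiffTrans F D u) :
    (∃ η₁ η₂ : E, η₁ ∈ genDF F D {u} ∧ η₂ ∈ genDF F D {u} ∧
       ¬(η₁ ∈ (algebraMap F E).range ∧ η₂ ∈ (algebraMap F E).range) ∧
       {B : MvPolynomial (Fin 2 × ℕ) F | evalD2 F D η₁ η₂ B = 0}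
         = (diffIdeal dxy A : Set (MvPolynomial (Fin 2 × ℕ) F)))
      ↔ ¬ ∃ L M₁ M₂ : MvPolynomial ℕ F,
          IsLinHom L ∧ IsLinHom M₁ ∧ IsLinHom M₂ ∧ (1 : WithBot ℕ) ≤ ordU L ∧
          L₁ = aeval (fun k => (⇑dU)^[k] M₁) L ∧
          L₂ = aeval (fun k => (⇑dU)^[k] M₂) L := by

  obtain ⟨p, rfl⟩ := exists_linU hL₁
  obtain ⟨q, rfl⟩ := exists_linU hL₂
  rw [rename_linU dxy hdxyX, rename_linU dxy hdxyX] at hA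
  change A = pairOp dxy (X (0, 0)) (X (1, 0)) (p, q) + C a at hA
  rw [linU_eq_zero, linU_eq_zero] at hL
  constructor
  · rintro ⟨η₁, η₂, h₁, h₂, -, hI⟩ ⟨L, M₁, M₂, hLl, hM₁, hM₂, hord, e₁, e₂⟩
    obtain ⟨l, rfl⟩ := exists_linU hLl
    obtain ⟨m₁, rfl⟩ := exists_linU hM₁
    obtain ⟨m₂, rfl⟩ := exists_linU hM₂
    rw [aeval_linU_linU dU hdUC hdUX] at e₁ e₂
    obtain rfl := linU_injective e₁
    obtain rfl := linU_injective e₂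
    rw [hA] at hI
    exact not_param_of_left_divisor D hD dxy hdxyC hdxyX u hu l m₁ m₂
      ((one_le_ordU_linU l).1 hord) a hL η₁ η₂ h₁ h₂ hI
  · intro hno
    obtain ⟨φ, g, hφ, hg⟩ := euclid (δ := δF) _ p q (p.natDegree + 1) (q.natDegree + 1) le_rfl
      (fun j hj => Polynomial.coeff_eq_zero_of_natDegree_lt hj)
      (fun j hj => Polynomial.coeff_eq_zero_of_natDegree_lt hj)
    have hψ : ∀ v, φ.symm (dP δF v) = dP δF (φ.symm v) := fun v => by
      rw [LinearEquiv.symm_apply_eq, hφ, LinearEquiv.apply_symm_apply]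
    -- `g` is a common left divisor, since `(g, 0)` is `g` applied to `(1, 0)`
    have hdiv : (p, q) = (star δF g (φ.symm (1, 0)).1, star δF g (φ.symm (1, 0)).2) := by
      have h := map_op φ.symm.toLinearMap hψ (1, 0) g
      rw [op_dP, op_dP, star_zero, star, op_dT_one, ← hg] at h
      exact (φ.symm_apply_apply _).symm.trans h
    obtain ⟨hp, hq⟩ := Prod.mk.inj hdiv
    have hdeg : g.natDegree = 0 := by
      by_contra h
      refine hno ⟨linU g, linU (φ.symm (1, 0)).1, linU (φ.symm (1, 0)).2, isLinHom_linU _,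
        isLinHom_linU _, isLinHom_linU _, (one_le_ordU_linU g).2 (by omega), ?_, ?_⟩
      · rw [aeval_linU_linU dU hdUC hdUX, ← hp]
      · rw [aeval_linU_linU dU hdUC hdUX, ← hq]
    have hg0 : g ≠ 0 := by
      rintro rfl
      rw [zero_star] at hp hq
      exact hL ⟨hp, hq⟩
    obtain ⟨c, rfl⟩ := Polynomial.natDegree_eq_zero.1 hdeg
    exact param_of_straight D hD dxy hdxyC hdxyX u hu p q a c (fun h => hg0 (by rw [h, map_zero]))
      φ hφ hg A hA

end DiffCurve
end
end

section
/- Let L₁, L₂ be linear homogeneous differential polynomials over F, not both zero, and a ∈ F; let A := L₁(x) + L₂(y) + a ∈ F{x,y} (substituting u_k ↦ x_k in L₁ and u_k ↦ y_k in L₂) with A ∉ F, and fix u ∈ E differentially transcendental over F. If the linear differential curve (C,A) is unirational (there exist η₁, η₂ ∈ F⟨{u}⟩, not both in F, with I((η₁,η₂)) = [A]), then it has a proper linear differential polynomial parametrization: there exist B₁, B₂ ∈ F{u} of total degree at most 1 such that, with ηᵢ := Bᵢ(u), one has I((η₁,η₂)) = [A] and F⟨{η₁,η₂}⟩ = F⟨{u}⟩.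 -/
/-!
Write `x_0`, `y_0` as `X (0, 0)`, `X (1, 0)`. For `c` in `F` and `e ≥ 0` the shear
`x ↦ x + c · d^e y` extends to an automorphism of `F{x,y}` commuting with `d`, with inverse the shear
for `-c`. It is matched by the map `(η₁, η₂) ↦ (η₁ - c · D^e η₂, η₂)` on pairs, which carries generic
zeros of `[A]` to generic zeros of the transformed ideal, does not change the generated differential
field, and keeps the coordinates linear in `u` (`isGeneric_shear`, `hasLinearParam_of_shear`). So both
the hypothesis and the conclusion are invariant under shears.

If the orders `m ≤ n` of the two linear parts are both nonnegative, a shear with `e = n - m` cancels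
the leading term of the part of order `n` (`exists_shear_reduce`). This is the Euclidean algorithm
for linear differential operators; it ends when the curve has the form `G(x) + a = 0` with a single
variable `x` (`hasLinearParam_of_hasGenericZero`).

For such a curve, let `w` in `F⟨u⟩` be the `x`-coordinate of a generic zero. An element of `F⟨u⟩`
outside `F` has derivatives of strictly increasing order in `u`, by a Wronskian argument
(`mem_of_polynomial_quotient`, `mem_range_or_order`), so it satisfies no nontrivial linear differential equation
over `F`. Hence `w = c` lies in `F`, and `x - c` lies in `[A]` by genericity. If `G` had positive
order, the value of `x_0` at a common zero of `A` and finitely many of its derivatives could be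
prescribed, which contradicts `x - c ∈ [A]` (`exists_point`, `order_eq_zero`). So `G = g x` with `g`
in `F` nonzero, and `(-a / g, u)` is a generic zero that is linear in `u` and generates `F⟨u⟩`
(`hasLinearParam_of_order_zero`).
-/


open MvPolynomial

noncomputable section

namespace DiffCurve

variable (F : Type*) {E : Type*} [Field F] [Field E] [Algebra F E]

variable {F}

variable (F)

/-! ### Elements of `F⟨u⟩` that satisfy a linear differential equation -/

/-- Let `t` be transcendental over `K` and let `w ∈ K(t)` have its derivative in a field `M` that
contains `K`, `D(K)` and `t`, but not `D t`. Then `w ∈ K`: writing `w = r(t)/s(t)` in lowest terms,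
the coefficient of `D t` in `D w` is the Wronskian of `r` and `s` up to a nonzero factor, so it
forces `r` and `s` to be constant. -/
theorem mem_of_polynomial_quotient [CharZero F] (D : Derivation ℤ E E)
    (K M : IntermediateField F E) (hKM : K ≤ M) (hDK : ∀ x ∈ K, D x ∈ M)
    (t : E) (htM : t ∈ M) (ht : Transcendental K t) (hDt : D t ∉ M)
    (w : E) (hw : ∃ r s : Polynomial K, w = Polynomial.aeval t r / Polynomial.aeval t s)
    (hDw : D w ∈ M) : w ∈ K := by
  have haev : ∀ p : Polynomial K, Polynomial.aeval t p ∈ M := by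
    intro p
    induction p using Polynomial.induction_on' with
    | add p q hp hq => rw [map_add]; exact add_mem hp hq
    | monomial n c =>
      rw [Polynomial.aeval_monomial]
      exact mul_mem (hKM c.2) (pow_mem htM n)
  have hchain : ∀ p : Polynomial K,
      D (Polynomial.aeval t p) - Polynomial.aeval t p.derivative * D t ∈ M := by
    intro p
    induction p using Polynomial.induction_on' with
    | add p q hp hq =>
      have := add_mem hp hq
      simp only [map_add] at this ⊢
      convert this using 1
      ring
    | monomial n c =>
      have h1 : D (c : E) * t ^ n ∈ M := mul_mem (hDK _ c.2) (pow_mem htM n)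
      convert h1 using 1
      rw [Polynomial.derivative_monomial, Polynomial.aeval_monomial, Polynomial.aeval_monomial,
        Derivation.leibniz, Derivation.leibniz_pow]
      simp only [smul_eq_mul, nsmul_eq_mul, map_mul, map_natCast]
      change (c : E) * _ + t ^ n * D (c : E) - (c : E) * _ * _ * _ = _
      ring
  obtain ⟨r, s, hrs⟩ := hw
  by_cases hs : s = 0
  · simp [hrs, hs]
  classical
  let _ : GCDMonoid (Polynomial K) := EuclideanDomain.gcdMonoid _
  obtain ⟨r₀, s₀, hr, hs', hu⟩ := extract_gcd r s
  have hcop : IsCoprime r₀ s₀ := (gcd_isUnit_iff r₀ s₀).mp hu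
  set g := GCDMonoid.gcd r s with hg
  have hinj : ∀ p : Polynomial K, Polynomial.aeval t p = 0 → p = 0 :=
    (transcendental_iff).mp ht
  have hg0 : g ≠ 0 := by rintro h0; exact hs (by rw [hs', h0, zero_mul])
  have hs₀ : s₀ ≠ 0 := by rintro h0; exact hs (by rw [hs', h0, mul_zero])
  have hgt : Polynomial.aeval t g ≠ 0 := fun h => hg0 (hinj _ h)
  have hst : Polynomial.aeval t s₀ ≠ 0 := fun h => hs₀ (hinj _ h)
  have hw' : w * Polynomial.aeval t s₀ = Polynomial.aeval t r₀ := by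
    rw [hrs, hr, hs', map_mul, map_mul]
    field_simp
  have hwM : w ∈ M := by
    rw [hrs]; exact div_mem (haev _) (haev _)
  have hDeq : D w * Polynomial.aeval t s₀ + w * D (Polynomial.aeval t s₀)
      = D (Polynomial.aeval t r₀) := by
    rw [← hw', Derivation.leibniz]
    simp only [smul_eq_mul]
    ring
  have hkey : (Polynomial.aeval t r₀.derivative - w * Polynomial.aeval t s₀.derivative) * D t
      ∈ M := by
    have h1 := sub_mem (mul_mem hwM (hchain s₀)) (hchain r₀)
    have h2 := add_mem h1 (mul_mem hDw (haev s₀))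
    convert h2 using 1
    linear_combination -hDeq
  have hzero : Polynomial.aeval t r₀.derivative - w * Polynomial.aeval t s₀.derivative = 0 := by
    by_contra hne
    apply hDt
    have hm : Polynomial.aeval t r₀.derivative - w * Polynomial.aeval t s₀.derivative ∈ M :=
      sub_mem (haev _) (mul_mem hwM (haev _))
    have := mul_mem (inv_mem hm) hkey
    rwa [inv_mul_cancel_left₀ hne] at this
  have hwr : Polynomial.wronskian r₀ s₀ = 0 := by
    apply hinj
    rw [Polynomial.wronskian, map_sub, map_mul, map_mul, ← hw']
    linear_combination (-Polynomial.aeval t s₀) * hzero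
  obtain ⟨hr', hs''⟩ := hcop.wronskian_eq_zero_iff.mp hwr
  have e : w = Polynomial.aeval t r₀ / Polynomial.aeval t s₀ := by
    rw [eq_div_iff hst, hw']
  rw [e, Polynomial.eq_C_of_derivative_eq_zero hr', Polynomial.eq_C_of_derivative_eq_zero hs'',
    Polynomial.aeval_C, Polynomial.aeval_C]
  exact div_mem (SetLike.coe_mem _) (SetLike.coe_mem _)

theorem deriv_mem_of_mem_adjoin {δF : Derivation ℤ F F} {D : Derivation ℤ E E}
    (hD : ∀ a : F, D (algebraMap F E a) = algebraMap F E (δF a))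
    {S : Set E} {M : IntermediateField F E} (hSM : IntermediateField.adjoin F S ≤ M)
    (hS : ∀ s ∈ S, D s ∈ M) {x : E} (hx : x ∈ IntermediateField.adjoin F S) : D x ∈ M := by
  induction hx using IntermediateField.adjoin_induction with
  | mem x hx => exact hS x hx
  | algebraMap a => rw [hD]; exact M.algebraMap_mem _
  | add x y hx hy h1 h2 => rw [map_add]; exact add_mem h1 h2
  | inv x hx h =>
    rw [Derivation.leibniz_inv]
    exact mul_mem (neg_mem (pow_mem (inv_mem (hSM hx)) 2)) h
  | mul x y hx hy h1 h2 =>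
    rw [Derivation.leibniz]
    exact add_mem (mul_mem (hSM hx) h2) (mul_mem (hSM hy) h1)

theorem deriv_mem_genDF_s14 {δF : Derivation ℤ F F} {D : Derivation ℤ E E}
    (hD : ∀ a : F, D (algebraMap F E a) = algebraMap F E (δF a))
    {S : Set E} {x : E} (hx : x ∈ genDF F D S) : D x ∈ genDF F D S := by
  refine deriv_mem_of_mem_adjoin F hD le_rfl ?_ hx
  rintro _ ⟨s, hs, k, rfl⟩
  exact IntermediateField.subset_adjoin _ _ ⟨s, hs, k + 1, Function.iterate_succ_apply' _ _ _⟩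

theorem iterate_mem_genDF {δF : Derivation ℤ F F} {D : Derivation ℤ E E}
    (hD : ∀ a : F, D (algebraMap F E a) = algebraMap F E (δF a))
    {S : Set E} {x : E} (hx : x ∈ genDF F D S) (k : ℕ) : (⇑D)^[k] x ∈ genDF F D S := by
  induction k with
  | zero => exact hx
  | succ k ih => rw [Function.iterate_succ_apply']; exact deriv_mem_genDF_s14 F hD ih

theorem subset_genDF (D : Derivation ℤ E E) {S : Set E} {x : E} (hx : x ∈ S) :
    x ∈ genDF F D S :=
  IntermediateField.subset_adjoin _ _ ⟨x, hx, 0, rfl⟩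

theorem genDF_le {δF : Derivation ℤ F F} {D : Derivation ℤ E E}
    (hD : ∀ a : F, D (algebraMap F E a) = algebraMap F E (δF a))
    {S T : Set E} (h : ∀ s ∈ S, s ∈ genDF F D T) : genDF F D S ≤ genDF F D T := by
  refine IntermediateField.adjoin_le_iff.mpr ?_
  rintro _ ⟨s, hs, k, rfl⟩
  exact iterate_mem_genDF F hD (h s hs) k

/-- The field `F(u, D u, …, D^{n-1} u)` of elements of order less than `n`. -/
def level (D : Derivation ℤ E E) (u : E) (n : ℕ) : IntermediateField F E :=
  IntermediateField.adjoin F ((fun k => (⇑D)^[k] u) '' Set.Iio n)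

theorem level_mono (D : Derivation ℤ E E) (u : E) {m n : ℕ} (h : m ≤ n) :
    level F D u m ≤ level F D u n :=
  IntermediateField.adjoin.mono _ _ _ (Set.image_mono (Set.Iio_subset_Iio h))

theorem iterate_mem_level (D : Derivation ℤ E E) (u : E) {k n : ℕ} (h : k < n) :
    (⇑D)^[k] u ∈ level F D u n :=
  IntermediateField.subset_adjoin _ _ ⟨k, h, rfl⟩

theorem transcendental_level {D : Derivation ℤ E E} {u : E} (hu : DiffTrans F D u) (n : ℕ) :
    Transcendental (level F D u n) ((⇑D)^[n] u) :=
  IntermediateField.transcendental_adjoin_iff.mpr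
    (AlgebraicIndependent.transcendental_adjoin hu (s := Set.Iio n) (by simp))

theorem iterate_notMem_level {D : Derivation ℤ E E} {u : E} (hu : DiffTrans F D u) (n : ℕ) :
    (⇑D)^[n] u ∉ level F D u n := fun h =>
  transcendental_level F hu n (isAlgebraic_algebraMap (⟨_, h⟩ : level F D u n))

theorem deriv_mem_level {δF : Derivation ℤ F F} {D : Derivation ℤ E E}
    (hD : ∀ a : F, D (algebraMap F E a) = algebraMap F E (δF a)) (u : E) {n : ℕ} {x : E}
    (hx : x ∈ level F D u n) : D x ∈ level F D u (n + 1) := by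
  refine deriv_mem_of_mem_adjoin F hD (level_mono F D u (Nat.le_succ n)) ?_ hx
  rintro _ ⟨k, hk, rfl⟩
  simp only [← Function.iterate_succ_apply']
  exact iterate_mem_level F D u (Nat.succ_lt_succ hk)

theorem exists_mem_level (D : Derivation ℤ E E) (u : E) {x : E} (hx : x ∈ genDF F D {u}) :
    ∃ n, x ∈ level F D u n := by
  induction hx using IntermediateField.adjoin_induction with
  | mem x hx =>
    obtain ⟨_, rfl, k, rfl⟩ := hx
    exact ⟨k + 1, iterate_mem_level F D _ (Nat.lt_succ_self k)⟩
  | algebraMap a => exact ⟨0, IntermediateField.algebraMap_mem _ _⟩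
  | add x y hx hy h1 h2 =>
    obtain ⟨m, hm⟩ := h1
    obtain ⟨n, hn⟩ := h2
    exact ⟨max m n, add_mem (level_mono F D u (le_max_left _ _) hm)
      (level_mono F D u (le_max_right _ _) hn)⟩
  | inv x hx h => obtain ⟨m, hm⟩ := h; exact ⟨m, inv_mem hm⟩
  | mul x y hx hy h1 h2 =>
    obtain ⟨m, hm⟩ := h1
    obtain ⟨n, hn⟩ := h2
    exact ⟨max m n, mul_mem (level_mono F D u (le_max_left _ _) hm)
      (level_mono F D u (le_max_right _ _) hn)⟩

/-- Differentiation raises the order of a nonconstant element of `F⟨u⟩` by exactly one. -/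
theorem deriv_notMem_level [CharZero F] {δF : Derivation ℤ F F} {D : Derivation ℤ E E}
    (hD : ∀ a : F, D (algebraMap F E a) = algebraMap F E (δF a)) {u : E} (hu : DiffTrans F D u)
    {n : ℕ} {w : E} (h1 : w ∈ level F D u (n + 1)) (h2 : w ∉ level F D u n) :
    D w ∉ level F D u (n + 1) := by
  intro hDw
  refine h2 (mem_of_polynomial_quotient F D (level F D u n) (level F D u (n + 1))
    (level_mono F D u (Nat.le_succ n)) (fun x hx => deriv_mem_level F hD u hx) ((⇑D)^[n] u)
    (iterate_mem_level F D u (Nat.lt_succ_self n)) (transcendental_level F hu n) ?_ w ?_ hDw)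
  · rw [← Function.iterate_succ_apply' (⇑D)]
    exact iterate_notMem_level F hu (n + 1)
  · rw [← IntermediateField.mem_adjoin_simple_iff,
      ← IntermediateField.mem_restrictScalars F, level, IntermediateField.adjoin_adjoin_left]
    rw [level] at h1
    convert h1 using 2
    ext x
    simp only [Set.mem_union, Set.mem_image, Set.mem_Iio, Set.mem_singleton_iff]
    constructor
    · rintro (⟨k, hk, rfl⟩ | rfl)
      · exact ⟨k, by omega, rfl⟩
      · exact ⟨n, by omega, rfl⟩
    · rintro ⟨k, hk, rfl⟩
      rcases Nat.lt_succ_iff_lt_or_eq.mp hk with h | rfl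
      · exact Or.inl ⟨k, h, rfl⟩
      · exact Or.inr rfl

/-- If `w ∈ F⟨u⟩` is not in `F`, its derivatives have strictly increasing orders. -/
theorem mem_range_or_order [CharZero F] {δF : Derivation ℤ F F} {D : Derivation ℤ E E}
    (hD : ∀ a : F, D (algebraMap F E a) = algebraMap F E (δF a)) {u : E} (hu : DiffTrans F D u)
    {w : E} (hw : w ∈ genDF F D {u}) :
    (∃ c : F, algebraMap F E c = w) ∨
      ∃ n, ∀ k, (⇑D)^[k] w ∈ level F D u (n + k + 1) ∧ (⇑D)^[k] w ∉ level F D u (n + k) := by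
  classical
  have hex := exists_mem_level F D u hw
  rcases hn : Nat.find hex with _ | n
  · left
    have h0 := Nat.find_spec hex
    rw [hn, level] at h0
    simpa [IntermediateField.mem_bot] using h0
  · right
    refine ⟨n, fun k => ?_⟩
    induction k with
    | zero =>
      exact ⟨by have := Nat.find_spec hex; rwa [hn] at this, Nat.find_min hex (by omega)⟩
    | succ k ih =>
      rw [Function.iterate_succ_apply']
      exact ⟨deriv_mem_level F hD u ih.1, deriv_notMem_level F hD hu ih.1 ih.2⟩

/-! ### Linear forms in the derivatives of one variable -/

/-- The `F`-span of `X (i, k)`, `k < n`: the linear homogeneous differential polynomials of order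
less than `n` in the `i`-th variable. -/
def linSpan (i : Fin 2) (n : ℕ) : Submodule F (MvPolynomial (Fin 2 × ℕ) F) :=
  Submodule.span F ((fun k => X (i, k)) '' Set.Iio n)

theorem X_mem_linSpan (i : Fin 2) {k n : ℕ} (h : k < n) :
    (X (i, k) : MvPolynomial (Fin 2 × ℕ) F) ∈ linSpan F i n :=
  Submodule.subset_span ⟨k, h, rfl⟩

theorem linSpan_mono (i : Fin 2) {m n : ℕ} (h : m ≤ n) : linSpan F i m ≤ linSpan F i n :=
  Submodule.span_mono (Set.image_mono (Set.Iio_subset_Iio h))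

theorem linSpan_zero (i : Fin 2) : linSpan F i 0 = ⊥ := by
  simp [linSpan]

theorem exists_of_mem_linSpan_succ {i : Fin 2} {n : ℕ} {x : MvPolynomial (Fin 2 × ℕ) F}
    (hx : x ∈ linSpan F i (n + 1)) : ∃ g : F, ∃ r ∈ linSpan F i n, x = g • X (i, n) + r := by
  have : Set.Iio (n + 1) = insert n (Set.Iio n) := by
    ext k; simp
  rw [linSpan, this, Set.image_insert_eq] at hx
  exact Submodule.mem_span_insert.mp hx

theorem exists_leading_of_mem_linSpan {i : Fin 2} {n : ℕ} {x : MvPolynomial (Fin 2 × ℕ) F}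
    (hx : x ∈ linSpan F i n) (h0 : x ≠ 0) :
    ∃ m, ∃ g : F, g ≠ 0 ∧ ∃ r ∈ linSpan F i m, x = g • X (i, m) + r := by
  induction n with
  | zero => rw [linSpan_zero] at hx; exact absurd hx h0
  | succ n ih =>
    obtain ⟨g, r, hr, rfl⟩ := exists_of_mem_linSpan_succ F hx
    by_cases hg : g = 0
    · refine ih ?_
      simpa [hg] using hr
    · exact ⟨n, g, hg, r, hr, rfl⟩

section deriv

variable {δF : Derivation ℤ F F}
  {dxy : Derivation ℤ (MvPolynomial (Fin 2 × ℕ) F) (MvPolynomial (Fin 2 × ℕ) F)}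

theorem deriv_smul (hdxyC : ∀ a : F, dxy (C a) = C (δF a)) (c : F)
    (x : MvPolynomial (Fin 2 × ℕ) F) : dxy (c • x) = c • dxy x + δF c • x := by
  rw [MvPolynomial.smul_eq_C_mul, Derivation.leibniz, hdxyC, smul_eq_mul, smul_eq_mul,
    MvPolynomial.smul_eq_C_mul, MvPolynomial.smul_eq_C_mul, mul_comm x]

theorem deriv_mem_linSpan (hdxyC : ∀ a : F, dxy (C a) = C (δF a))
    (hdxyX : ∀ (i : Fin 2) (k : ℕ), dxy (X (i, k)) = X (i, k + 1))
    {i : Fin 2} {n : ℕ} {x : MvPolynomial (Fin 2 × ℕ) F}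
    (hx : x ∈ linSpan F i n) : dxy x ∈ linSpan F i (n + 1) := by
  induction hx using Submodule.span_induction with
  | mem x hx =>
    obtain ⟨k, hk, rfl⟩ := hx
    simp only [hdxyX]
    exact X_mem_linSpan F i (Nat.succ_lt_succ hk)
  | zero => rw [map_zero]; exact zero_mem _
  | add x y _ _ h1 h2 => rw [map_add]; exact add_mem h1 h2
  | smul c x hx h =>
    rw [deriv_smul F hdxyC]
    exact add_mem (Submodule.smul_mem _ _ h)
      (Submodule.smul_mem _ _ (linSpan_mono F i (Nat.le_succ n) hx))

theorem iterate_mem_linSpan (hdxyC : ∀ a : F, dxy (C a) = C (δF a))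
    (hdxyX : ∀ (i : Fin 2) (k : ℕ), dxy (X (i, k)) = X (i, k + 1))
    {i : Fin 2} {n : ℕ} {x : MvPolynomial (Fin 2 × ℕ) F}
    (hx : x ∈ linSpan F i n) (k : ℕ) : (⇑dxy)^[k] x ∈ linSpan F i (n + k) := by
  induction k with
  | zero => exact hx
  | succ k ih => rw [Function.iterate_succ_apply']; exact deriv_mem_linSpan F hdxyC hdxyX ih

theorem iterate_smul_X (hdxyC : ∀ a : F, dxy (C a) = C (δF a))
    (hdxyX : ∀ (i : Fin 2) (k : ℕ), dxy (X (i, k)) = X (i, k + 1))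
    (c : F) (i : Fin 2) (e k : ℕ) :
    ∃ r ∈ linSpan F i (e + k), (⇑dxy)^[k] (c • X (i, e)) = c • X (i, e + k) + r := by
  induction k with
  | zero => exact ⟨0, zero_mem _, by simp⟩
  | succ k ih =>
    obtain ⟨r, hr, h⟩ := ih
    refine ⟨δF c • X (i, e + k) + dxy r, ?_, ?_⟩
    · exact add_mem (Submodule.smul_mem _ _ (X_mem_linSpan F i (by omega)))
        (deriv_mem_linSpan F hdxyC hdxyX hr)
    · rw [Function.iterate_succ_apply', h, map_add, deriv_smul F hdxyC, hdxyX]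
      simp only [add_assoc]

theorem iterate_C (hdxyC : ∀ a : F, dxy (C a) = C (δF a)) (a : F) (k : ℕ) :
    (⇑dxy)^[k] (C a) = C ((⇑δF)^[k] a) := by
  induction k with
  | zero => rfl
  | succ k ih => rw [Function.iterate_succ_apply', ih, hdxyC, Function.iterate_succ_apply']

theorem iterate_add (dxy : Derivation ℤ (MvPolynomial (Fin 2 × ℕ) F) (MvPolynomial (Fin 2 × ℕ) F))
    (k : ℕ) (x y : MvPolynomial (Fin 2 × ℕ) F) :
    (⇑dxy)^[k] (x + y) = (⇑dxy)^[k] x + (⇑dxy)^[k] y :=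
  iterate_map_add dxy k x y

theorem iterate_X (hdxyX : ∀ (i : Fin 2) (k : ℕ), dxy (X (i, k)) = X (i, k + 1))
    (i : Fin 2) (k : ℕ) : (⇑dxy)^[k] (X (i, 0)) = X (i, k) := by
  induction k with
  | zero => rfl
  | succ k ih => rw [Function.iterate_succ_apply', ih, hdxyX]

/-- An `F`-algebra homomorphism out of `F{x,y}` that respects derivatives of the variables respects
derivatives. -/
theorem algHom_comm {S : Type*} [CommRing S] [Algebra F S] {DS : S → S}
    (hadd : ∀ x y, DS (x + y) = DS x + DS y) (hmul : ∀ x y, DS (x * y) = x * DS y + y * DS x)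
    (hDS : ∀ a : F, DS (algebraMap F S a) = algebraMap F S (δF a))
    (hdxyC : ∀ a : F, dxy (C a) = C (δF a))
    (f : MvPolynomial (Fin 2 × ℕ) F →ₐ[F] S) (hf : ∀ p, f (dxy (X p)) = DS (f (X p)))
    (B : MvPolynomial (Fin 2 × ℕ) F) : f (dxy B) = DS (f B) := by
  induction B using MvPolynomial.induction_on with
  | C a =>
    rw [hdxyC, ← MvPolynomial.algebraMap_eq, AlgHom.commutes, AlgHom.commutes, hDS]
  | add p q hp hq => simp only [map_add, hadd, hp, hq]
  | mul_X p n hp =>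
    simp only [Derivation.leibniz, map_add, map_mul, smul_eq_mul, hmul, hp, hf]

theorem algHom_comm_iterate {S : Type*} [CommRing S] [Algebra F S] {DS : S → S}
    (hadd : ∀ x y, DS (x + y) = DS x + DS y) (hmul : ∀ x y, DS (x * y) = x * DS y + y * DS x)
    (hDS : ∀ a : F, DS (algebraMap F S a) = algebraMap F S (δF a))
    (hdxyC : ∀ a : F, dxy (C a) = C (δF a))
    (f : MvPolynomial (Fin 2 × ℕ) F →ₐ[F] S) (hf : ∀ p, f (dxy (X p)) = DS (f (X p)))
    (k : ℕ) (B : MvPolynomial (Fin 2 × ℕ) F) : f ((⇑dxy)^[k] B) = DS^[k] (f B) := by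
  induction k with
  | zero => rfl
  | succ k ih =>
    rw [Function.iterate_succ_apply', Function.iterate_succ_apply',
      algHom_comm F hadd hmul hDS hdxyC f hf, ih]

end deriv

/-- The differential ideal `[A]` of `F{x,y}`; it is `diffIdeal dxy A`, with the ring structure read
from `MvPolynomial` instead of from an abstract commutative ring. -/
def idealOf (dxy : Derivation ℤ (MvPolynomial (Fin 2 × ℕ) F) (MvPolynomial (Fin 2 × ℕ) F))
    (A : MvPolynomial (Fin 2 × ℕ) F) : Ideal (MvPolynomial (Fin 2 × ℕ) F) :=
  Ideal.span (Set.range fun k : ℕ => (⇑dxy)^[k] A)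

theorem iterate_mem_idealOf
    (dxy : Derivation ℤ (MvPolynomial (Fin 2 × ℕ) F) (MvPolynomial (Fin 2 × ℕ) F))
    (A : MvPolynomial (Fin 2 × ℕ) F) (k : ℕ) : (⇑dxy)^[k] A ∈ idealOf F dxy A :=
  Ideal.subset_span ⟨k, rfl⟩

/-! ### Evaluation at a pair -/

/-- Evaluation of differential polynomials at the pair `(η 0, η 1)`. -/
def ev (D : Derivation ℤ E E) (η : Fin 2 → E) : MvPolynomial (Fin 2 × ℕ) F →ₐ[F] E :=
  aeval fun p => (⇑D)^[p.2] (η p.1)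

@[simp] theorem ev_X (D : Derivation ℤ E E) (η : Fin 2 → E) (i : Fin 2) (k : ℕ) :
    ev F D η (X (i, k)) = (⇑D)^[k] (η i) := by
  simp [ev]

/-- `η` is a generic zero of the ideal `[A]`, that is `I(η) = [A]`. -/
def IsGeneric (D : Derivation ℤ E E)
    (dxy : Derivation ℤ (MvPolynomial (Fin 2 × ℕ) F) (MvPolynomial (Fin 2 × ℕ) F))
    (A : MvPolynomial (Fin 2 × ℕ) F) (η : Fin 2 → E) : Prop :=
  ∀ B, ev F D η B = 0 ↔ B ∈ idealOf F dxy A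

section eval

variable {δF : Derivation ℤ F F} {D : Derivation ℤ E E}
  {dxy : Derivation ℤ (MvPolynomial (Fin 2 × ℕ) F) (MvPolynomial (Fin 2 × ℕ) F)}

theorem ev_iterate (hD : ∀ a : F, D (algebraMap F E a) = algebraMap F E (δF a))
    (hdxyC : ∀ a : F, dxy (C a) = C (δF a))
    (hdxyX : ∀ (i : Fin 2) (k : ℕ), dxy (X (i, k)) = X (i, k + 1))
    (η : Fin 2 → E) (k : ℕ) (B : MvPolynomial (Fin 2 × ℕ) F) :
    ev F D η ((⇑dxy)^[k] B) = (⇑D)^[k] (ev F D η B) := by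
  refine algHom_comm_iterate F (map_add D) (fun x y => by simp [Derivation.leibniz]) hD hdxyC _ ?_ k B
  rintro ⟨i, l⟩
  rw [hdxyX, ev_X, ev_X, Function.iterate_succ_apply']

/-- A solution in `F⟨u⟩` of a linear differential equation in one unknown over `F` lies in `F`: for
a nonconstant solution the leading derivative would have larger order than the other terms. -/
theorem mem_range_of_linear_equation [CharZero F]
    (hD : ∀ a : F, D (algebraMap F E a) = algebraMap F E (δF a)) {u : E} (hu : DiffTrans F D u)
    {i : Fin 2} {m : ℕ} {g a : F} (hg : g ≠ 0) {r : MvPolynomial (Fin 2 × ℕ) F}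
    (hr : r ∈ linSpan F i m) {η : Fin 2 → E} (hη : η i ∈ genDF F D {u})
    (h0 : ev F D η (g • X (i, m) + r + C a) = 0) : ∃ c : F, algebraMap F E c = η i := by
  rcases mem_range_or_order F hD hu hη with h | ⟨n, hn⟩
  · exact h
  exfalso
  have hr' : ev F D η r ∈ level F D u (n + m) := by
    clear h0
    induction hr using Submodule.span_induction with
    | mem x hx =>
      obtain ⟨k, hk, rfl⟩ := hx
      simp only [ev_X]
      exact level_mono F D u (by have := Set.mem_Iio.mp hk; omega) (hn k).1
    | zero => rw [map_zero]; exact zero_mem _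
    | add x y _ _ h1 h2 => rw [map_add]; exact add_mem h1 h2
    | smul c x hx h => rw [map_smul]; exact IntermediateField.smul_mem _ h
  apply (hn m).2
  have ha : ev F D η (C a) ∈ level F D u (n + m) := by
    rw [← MvPolynomial.algebraMap_eq, AlgHom.commutes]
    exact IntermediateField.algebraMap_mem _ _
  rw [map_add, map_add, map_smul, ev_X] at h0
  have h1 : g • (⇑D)^[m] (η i) ∈ level F D u (n + m) := by
    have := neg_mem (add_mem hr' ha)
    convert this using 1
    linear_combination h0
  have h2 := IntermediateField.smul_mem _ h1 (x := g⁻¹)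
  rwa [smul_smul, inv_mul_cancel₀ hg, one_smul] at h2

theorem eval_update_of_mem_linSpan {i : Fin 2} {n q : ℕ} (hnq : n ≤ q)
    {r : MvPolynomial (Fin 2 × ℕ) F} (hr : r ∈ linSpan F i n) (v : Fin 2 × ℕ → F) (t : F) :
    MvPolynomial.aeval (Function.update v (i, q) t) r = MvPolynomial.aeval v r := by
  induction hr using Submodule.span_induction with
  | mem x hx =>
    obtain ⟨k, hk, rfl⟩ := hx
    have : k ≠ q := by have := Set.mem_Iio.mp hk; omega
    simp [this]
  | zero => simp
  | add x y _ _ h1 h2 => rw [map_add, map_add, h1, h2]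
  | smul c x hx h => rw [map_smul, map_smul, h]

/-- If `A = g · X (i, m) + lower order terms` with `m > 0`, any initial value `c` at `X (i, 0)`
extends to a common zero in `F` of `A` and its first `N` derivatives. -/
theorem exists_point (hdxyC : ∀ a : F, dxy (C a) = C (δF a))
    (hdxyX : ∀ (i : Fin 2) (k : ℕ), dxy (X (i, k)) = X (i, k + 1))
    {i : Fin 2} {m : ℕ} (hm : 0 < m) {g a : F} (hg : g ≠ 0) {r : MvPolynomial (Fin 2 × ℕ) F}
    (hr : r ∈ linSpan F i m) (c : F) (N : ℕ) : ∃ v : Fin 2 × ℕ → F, v (i, 0) = c ∧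
      ∀ k < N, MvPolynomial.aeval v ((⇑dxy)^[k] (g • X (i, m) + r + C a)) = 0 := by
  have hform : ∀ k, ∃ s ∈ linSpan F i (m + k), ∃ b : F,
      (⇑dxy)^[k] (g • X (i, m) + r + C a) = g • X (i, m + k) + s + C b := by
    intro k
    obtain ⟨s, hs, h⟩ := iterate_smul_X F hdxyC hdxyX g i m k
    refine ⟨s + (⇑dxy)^[k] r, add_mem hs (iterate_mem_linSpan F hdxyC hdxyX hr k), (⇑δF)^[k] a, ?_⟩
    rw [iterate_add, iterate_add, iterate_C F hdxyC, h]
    simp only [add_assoc]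
  induction N with
  | zero => exact ⟨fun _ => c, rfl, by simp⟩
  | succ N ih =>
    obtain ⟨v, hv0, hv⟩ := ih
    obtain ⟨s, hs, b, hsb⟩ := hform N
    refine ⟨Function.update v (i, m + N) (-(g⁻¹ * (MvPolynomial.aeval v s + b))), ?_, ?_⟩
    · rw [Function.update_of_ne, hv0]
      simp only [ne_eq, Prod.mk.injEq, true_and]
      omega
    · intro k hk
      rcases Nat.lt_succ_iff_lt_or_eq.mp hk with hk | rfl
      · obtain ⟨s', hs', b', hsb'⟩ := hform k
        rw [← hv k hk, hsb']
        simp only [map_add]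
        rw [eval_update_of_mem_linSpan F (by omega) hs', eval_update_of_mem_linSpan F (n := m + k + 1)
          (by omega) (Submodule.smul_mem _ _ (X_mem_linSpan F i (by omega)))]
        simp
      · rw [hsb]
        simp only [map_add]
        rw [eval_update_of_mem_linSpan F le_rfl hs]
        simp
        field_simp
        ring

/-- If `[A]` contains `x - c` with `c` in `F`, then `A` has order zero: otherwise `A` and any finite
number of its derivatives have a common zero with `x = c + 1`. -/
theorem order_eq_zero (hdxyC : ∀ a : F, dxy (C a) = C (δF a))
    (hdxyX : ∀ (i : Fin 2) (k : ℕ), dxy (X (i, k)) = X (i, k + 1))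
    {i : Fin 2} {m : ℕ} {g a : F} (hg : g ≠ 0) {r : MvPolynomial (Fin 2 × ℕ) F}
    (hr : r ∈ linSpan F i m) {c : F}
    (hc : X (i, 0) - C c ∈ idealOf F dxy (g • X (i, m) + r + C a)) : m = 0 := by
  by_contra hm
  have key : ∀ f ∈ idealOf F dxy (g • X (i, m) + r + C a), ∃ N, ∀ v : Fin 2 × ℕ → F,
      (∀ k < N, MvPolynomial.aeval v ((⇑dxy)^[k] (g • X (i, m) + r + C a)) = 0) →
        MvPolynomial.aeval v f = 0 := by
    intro f hf
    induction hf using Submodule.span_induction with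
    | mem x hx =>
      obtain ⟨k, rfl⟩ := hx
      exact ⟨k + 1, fun v hv => hv k (Nat.lt_succ_self k)⟩
    | zero => exact ⟨0, fun v _ => map_zero _⟩
    | add x y _ _ h1 h2 =>
      obtain ⟨N, hN⟩ := h1
      obtain ⟨N', hN'⟩ := h2
      refine ⟨max N N', fun v hv => ?_⟩
      rw [map_add, hN v fun k hk => hv k (lt_max_of_lt_left hk),
        hN' v fun k hk => hv k (lt_max_of_lt_right hk), add_zero]
    | smul p x _ h =>
      obtain ⟨N, hN⟩ := h
      exact ⟨N, fun v hv => by rw [smul_eq_mul, map_mul, hN v hv, mul_zero]⟩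
  obtain ⟨N, hN⟩ := key _ hc
  obtain ⟨v, hv0, hv⟩ := exists_point F hdxyC hdxyX (Nat.pos_of_ne_zero hm) hg hr (c + 1) N (a := a)
  have := hN v hv
  simp [hv0] at this

end eval

/-! ### Parametrizations and shears -/

/-- The `F`-span of `1` and the derivatives of `u`: the values at `u` of linear differential
polynomials. -/
def affSpan (D : Derivation ℤ E E) (u : E) : Submodule F E :=
  Submodule.span F (insert 1 (Set.range fun k => (⇑D)^[k] u))

/-- `[A]` has a generic zero `θ` that is linear in `u` and generates `F⟨u⟩`. -/
def HasLinearParam (D : Derivation ℤ E E)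
    (dxy : Derivation ℤ (MvPolynomial (Fin 2 × ℕ) F) (MvPolynomial (Fin 2 × ℕ) F)) (u : E)
    (A : MvPolynomial (Fin 2 × ℕ) F) : Prop :=
  ∃ θ : Fin 2 → E, (∀ l, θ l ∈ affSpan F D u) ∧ IsGeneric F D dxy A θ ∧
    genDF F D (Set.range θ) = genDF F D {u}

/-- The shear of `F{x,y}` that adds `c · X (j, e)`, differentiated, to the `i`-th variable. -/
def shear (dxy : Derivation ℤ (MvPolynomial (Fin 2 × ℕ) F) (MvPolynomial (Fin 2 × ℕ) F))
    (i j : Fin 2) (e : ℕ) (c : F) : MvPolynomial (Fin 2 × ℕ) F →ₐ[F] MvPolynomial (Fin 2 × ℕ) F :=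
  aeval fun p => X p + (⇑dxy)^[p.2] (if p.1 = i then c • X (j, e) else 0)

/-- The action on pairs that corresponds to `shear`: it adds `c · D^e (η j)` to `η i`. -/
def shift (D : Derivation ℤ E E) (i j : Fin 2) (e : ℕ) (c : F) (η : Fin 2 → E) : Fin 2 → E :=
  fun l => η l + if l = i then c • (⇑D)^[e] (η j) else 0

section shear

variable {δF : Derivation ℤ F F} {D : Derivation ℤ E E}
  {dxy : Derivation ℤ (MvPolynomial (Fin 2 × ℕ) F) (MvPolynomial (Fin 2 × ℕ) F)}

theorem deriv_smul_E (hD : ∀ a : F, D (algebraMap F E a) = algebraMap F E (δF a)) (c : F) (x : E) :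
    D (c • x) = c • D x + δF c • x := by
  rw [Algebra.smul_def, Derivation.leibniz, hD, smul_eq_mul, smul_eq_mul, Algebra.smul_def,
    Algebra.smul_def, mul_comm x]

theorem deriv_mem_affSpan (hD : ∀ a : F, D (algebraMap F E a) = algebraMap F E (δF a)) {u x : E}
    (hx : x ∈ affSpan F D u) : D x ∈ affSpan F D u := by
  induction hx using Submodule.span_induction with
  | mem x hx =>
    rcases hx with rfl | ⟨k, rfl⟩
    · rw [Derivation.map_one_eq_zero]; exact zero_mem _
    · refine Submodule.subset_span (Or.inr ⟨k + 1, ?_⟩)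
      exact Function.iterate_succ_apply' _ _ _
  | zero => rw [map_zero]; exact zero_mem _
  | add x y _ _ h1 h2 => rw [map_add]; exact add_mem h1 h2
  | smul c x hx h =>
    rw [deriv_smul_E F hD]
    exact add_mem (Submodule.smul_mem _ _ h) (Submodule.smul_mem _ _ hx)

theorem shift_mem_affSpan (hD : ∀ a : F, D (algebraMap F E a) = algebraMap F E (δF a)) {u : E}
    (i j : Fin 2) (e : ℕ) (c : F) {η : Fin 2 → E} (h : ∀ l, η l ∈ affSpan F D u) (l : Fin 2) :
    shift F D i j e c η l ∈ affSpan F D u := by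
  have hit : ∀ k, (⇑D)^[k] (η j) ∈ affSpan F D u := by
    intro k
    induction k with
    | zero => exact h j
    | succ k ih => rw [Function.iterate_succ_apply']; exact deriv_mem_affSpan F hD ih
  unfold shift
  split_ifs
  · exact add_mem (h l) (Submodule.smul_mem _ _ (hit e))
  · rw [add_zero]; exact h l

theorem shift_mem_genDF (hD : ∀ a : F, D (algebraMap F E a) = algebraMap F E (δF a)) {S : Set E}
    (i j : Fin 2) (e : ℕ) (c : F) {η : Fin 2 → E} (h : ∀ l, η l ∈ genDF F D S) (l : Fin 2) :
    shift F D i j e c η l ∈ genDF F D S := by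
  unfold shift
  split_ifs
  · exact add_mem (h l) (IntermediateField.smul_mem _ (iterate_mem_genDF F hD (h j) e))
  · rw [add_zero]; exact h l

theorem shift_neg_shift {i j : Fin 2} (hij : i ≠ j) (e : ℕ) (c : F) (η : Fin 2 → E) :
    shift F D i j e (-c) (shift F D i j e c η) = η := by
  funext l
  simp only [shift, if_neg hij.symm]
  split_ifs <;> simp

theorem genDF_shift (hD : ∀ a : F, D (algebraMap F E a) = algebraMap F E (δF a))
    {i j : Fin 2} (hij : i ≠ j) (e : ℕ) (c : F) (η : Fin 2 → E) :
    genDF F D (Set.range (shift F D i j e c η)) = genDF F D (Set.range η) := by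
  apply le_antisymm <;> refine genDF_le F hD ?_ <;> rintro _ ⟨l, rfl⟩
  · exact shift_mem_genDF F hD i j e c (fun l => subset_genDF F D (Set.mem_range_self l)) l
  · have := shift_mem_genDF F hD i j e (-c)
      (fun l => subset_genDF F D (Set.mem_range_self (f := shift F D i j e c η) l)) l
    rwa [shift_neg_shift F hij] at this

theorem shear_X (i j : Fin 2) (e : ℕ) (c : F) (p : Fin 2 × ℕ) :
    shear F dxy i j e c (X p) = X p + (⇑dxy)^[p.2] (if p.1 = i then c • X (j, e) else 0) := by
  simp [shear]

theorem shear_iterate (hdxyC : ∀ a : F, dxy (C a) = C (δF a))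
    (hdxyX : ∀ (i : Fin 2) (k : ℕ), dxy (X (i, k)) = X (i, k + 1))
    (i j : Fin 2) (e : ℕ) (c : F) (k : ℕ) (B : MvPolynomial (Fin 2 × ℕ) F) :
    shear F dxy i j e c ((⇑dxy)^[k] B) = (⇑dxy)^[k] (shear F dxy i j e c B) := by
  refine algHom_comm_iterate F (map_add dxy) (fun x y => by simp [Derivation.leibniz]) hdxyC hdxyC _ ?_ k B
  rintro ⟨l, m⟩
  rw [hdxyX, shear_X, shear_X, map_add, hdxyX, Function.iterate_succ_apply']

theorem shear_shear_neg (hdxyC : ∀ a : F, dxy (C a) = C (δF a))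
    (hdxyX : ∀ (i : Fin 2) (k : ℕ), dxy (X (i, k)) = X (i, k + 1))
    {i j : Fin 2} (hij : i ≠ j) (e : ℕ) (c : F) (B : MvPolynomial (Fin 2 × ℕ) F) :
    shear F dxy i j e c (shear F dxy i j e (-c) B) = B := by
  have : (shear F dxy i j e c).comp (shear F dxy i j e (-c)) = AlgHom.id F _ := by
    apply MvPolynomial.algHom_ext
    rintro ⟨l, k⟩
    rw [AlgHom.comp_apply, shear_X, map_add, shear_X, shear_iterate F hdxyC hdxyX, add_assoc,
      ← iterate_add F]
    simp only [AlgHom.id_apply]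
    split_ifs
    · rw [map_smul, shear_X, if_neg hij.symm, iterate_map_zero, add_zero, neg_smul,
        add_neg_cancel, iterate_map_zero, add_zero]
    · rw [map_zero, add_zero, iterate_map_zero, add_zero]
  exact DFunLike.congr_fun this B

theorem shear_mem_idealOf (hdxyC : ∀ a : F, dxy (C a) = C (δF a))
    (hdxyX : ∀ (i : Fin 2) (k : ℕ), dxy (X (i, k)) = X (i, k + 1))
    (i j : Fin 2) (e : ℕ) (c : F) {A B : MvPolynomial (Fin 2 × ℕ) F} (hB : B ∈ idealOf F dxy A) :
    shear F dxy i j e c B ∈ idealOf F dxy (shear F dxy i j e c A) := by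
  induction hB using Submodule.span_induction with
  | mem x hx =>
    obtain ⟨k, rfl⟩ := hx
    simp only [shear_iterate F hdxyC hdxyX]
    exact iterate_mem_idealOf F _ _ k
  | zero => rw [map_zero]; exact zero_mem _
  | add x y _ _ h1 h2 => rw [map_add]; exact add_mem h1 h2
  | smul p x _ h => rw [smul_eq_mul, map_mul]; exact Ideal.mul_mem_left _ _ h

theorem iterate_mem_of_mem {A B : MvPolynomial (Fin 2 × ℕ) F} (hB : B ∈ idealOf F dxy A) (k : ℕ) :
    (⇑dxy)^[k] B ∈ idealOf F dxy A := by
  have hd : ∀ B ∈ idealOf F dxy A, dxy B ∈ idealOf F dxy A := by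
    intro B hB
    induction hB using Submodule.span_induction with
    | mem x hx =>
      obtain ⟨k, rfl⟩ := hx
      simp only [← Function.iterate_succ_apply' (⇑dxy)]
      exact iterate_mem_idealOf F _ _ (k + 1)
    | zero => rw [map_zero]; exact zero_mem _
    | add x y _ _ h1 h2 => rw [map_add]; exact add_mem h1 h2
    | smul p x hx h =>
      rw [smul_eq_mul, Derivation.leibniz]
      exact add_mem (Ideal.mul_mem_left _ _ h) (Ideal.mul_mem_right _ _ hx)
  induction k with
  | zero => exact hB
  | succ k ih => rw [Function.iterate_succ_apply']; exact hd _ ih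

theorem ev_shift (hD : ∀ a : F, D (algebraMap F E a) = algebraMap F E (δF a))
    (hdxyC : ∀ a : F, dxy (C a) = C (δF a))
    (hdxyX : ∀ (i : Fin 2) (k : ℕ), dxy (X (i, k)) = X (i, k + 1))
    (i j : Fin 2) (e : ℕ) (c : F) (η : Fin 2 → E) (B : MvPolynomial (Fin 2 × ℕ) F) :
    ev F D (shift F D i j e c η) B = ev F D η (shear F dxy i j e c B) := by
  have : ev F D (shift F D i j e c η) = (ev F D η).comp (shear F dxy i j e c) := by
    apply MvPolynomial.algHom_ext
    rintro ⟨l, k⟩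
    rw [AlgHom.comp_apply, shear_X, map_add, ev_X, ev_X, ev_iterate F hD hdxyC hdxyX, shift,
      iterate_map_add]
    congr 2
    split_ifs
    · rw [map_smul, ev_X]
    · rw [map_zero]
  rw [this, AlgHom.comp_apply]

theorem isGeneric_shear (hD : ∀ a : F, D (algebraMap F E a) = algebraMap F E (δF a))
    (hdxyC : ∀ a : F, dxy (C a) = C (δF a))
    (hdxyX : ∀ (i : Fin 2) (k : ℕ), dxy (X (i, k)) = X (i, k + 1))
    {i j : Fin 2} (hij : i ≠ j) (e : ℕ) (c : F) {η : Fin 2 → E} {A : MvPolynomial (Fin 2 × ℕ) F}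
    (h : IsGeneric F D dxy A η) :
    IsGeneric F D dxy (shear F dxy i j e c A) (shift F D i j e (-c) η) := by
  intro B
  rw [ev_shift F hD hdxyC hdxyX, h]
  have hinv : ∀ B, shear F dxy i j e (-c) (shear F dxy i j e c B) = B := by
    intro B
    have := shear_shear_neg F hdxyC hdxyX hij e (-c) B
    rwa [neg_neg] at this
  constructor
  · intro h1
    have := shear_mem_idealOf F hdxyC hdxyX i j e c h1
    rwa [shear_shear_neg F hdxyC hdxyX hij] at this
  · intro h1
    have := shear_mem_idealOf F hdxyC hdxyX i j e (-c) h1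
    rwa [hinv] at this

theorem hasLinearParam_of_shear (hD : ∀ a : F, D (algebraMap F E a) = algebraMap F E (δF a))
    (hdxyC : ∀ a : F, dxy (C a) = C (δF a))
    (hdxyX : ∀ (i : Fin 2) (k : ℕ), dxy (X (i, k)) = X (i, k + 1))
    {i j : Fin 2} (hij : i ≠ j) (e : ℕ) (c : F) {u : E} {A : MvPolynomial (Fin 2 × ℕ) F}
    (h : HasLinearParam F D dxy u (shear F dxy i j e c A)) : HasLinearParam F D dxy u A := by
  obtain ⟨θ, h1, h2, h3⟩ := h
  refine ⟨shift F D i j e c θ, shift_mem_affSpan F hD i j e c h1, ?_, ?_⟩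
  · have := isGeneric_shear F hD hdxyC hdxyX hij e (-c) h2
    have hinv := shear_shear_neg F hdxyC hdxyX hij e (-c) A
    rw [neg_neg] at this hinv
    rwa [hinv] at this
  · rw [genDF_shift F hD hij, h3]

/-- If `L` has order less than `n` in the `i`-th variable, a shear changes `L` by a form of order
less than `n + e` in the `j`-th variable. -/
theorem shear_sub_mem (hdxyC : ∀ a : F, dxy (C a) = C (δF a))
    (hdxyX : ∀ (i : Fin 2) (k : ℕ), dxy (X (i, k)) = X (i, k + 1))
    (i j : Fin 2) (e : ℕ) (c : F) {n : ℕ} {L : MvPolynomial (Fin 2 × ℕ) F}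
    (hL : L ∈ linSpan F i n) : shear F dxy i j e c L - L ∈ linSpan F j (n + e) := by
  induction hL using Submodule.span_induction with
  | mem x hx =>
    obtain ⟨k, hk, rfl⟩ := hx
    have hk := Set.mem_Iio.mp hk
    simp only [shear_X, if_true, add_sub_cancel_left]
    exact linSpan_mono F j (by omega) (iterate_mem_linSpan F hdxyC hdxyX (n := e + 1)
      (Submodule.smul_mem _ c (X_mem_linSpan F j (Nat.lt_succ_self e))) k)
  | zero => simp
  | add x y _ _ h1 h2 =>
    have := add_mem h1 h2
    rw [map_add]
    convert this using 1
    ring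
  | smul b x hx h => rw [map_smul, ← smul_sub]; exact Submodule.smul_mem _ _ h

theorem shear_of_mem_linSpan {i j : Fin 2} (hij : i ≠ j) (e : ℕ) (c : F) {n : ℕ}
    {L : MvPolynomial (Fin 2 × ℕ) F} (hL : L ∈ linSpan F j n) : shear F dxy i j e c L = L := by
  induction hL using Submodule.span_induction with
  | mem x hx =>
    obtain ⟨k, hk, rfl⟩ := hx
    rw [shear_X, if_neg hij.symm, iterate_map_zero, add_zero]
  | zero => simp
  | add x y _ _ h1 h2 => rw [map_add, h1, h2]
  | smul b x hx h => rw [map_smul, h]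

theorem iterate_mem_range (hD : ∀ a : F, D (algebraMap F E a) = algebraMap F E (δF a)) (c : F)
    (k : ℕ) : (⇑D)^[k] (algebraMap F E c) = algebraMap F E ((⇑δF)^[k] c) := by
  induction k with
  | zero => rfl
  | succ k ih => rw [Function.iterate_succ_apply', ih, hD, Function.iterate_succ_apply']

/-- A curve `g x + a = 0` of order zero is parametrized by the constant `-a / g` in one coordinate
and `u` in the other. -/
theorem hasLinearParam_of_order_zero
    (hD : ∀ a : F, D (algebraMap F E a) = algebraMap F E (δF a))
    (hdxyC : ∀ a : F, dxy (C a) = C (δF a))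
    (hdxyX : ∀ (i : Fin 2) (k : ℕ), dxy (X (i, k)) = X (i, k + 1))
    {u : E} (hu : DiffTrans F D u) {i j : Fin 2} (hij : i ≠ j) {g a : F} (hg : g ≠ 0) :
    HasLinearParam F D dxy u (g • X (i, 0) + C a) := by
  have hcase : ∀ l : Fin 2, l = i ∨ l = j := by revert i j; decide
  set c : F := -(g⁻¹ * a) with hc
  set A : MvPolynomial (Fin 2 × ℕ) F := g • X (i, 0) + C a with hA
  set θ : Fin 2 → E := fun l => if l = i then algebraMap F E c else u with hθ
  have hθi : θ i = algebraMap F E c := by simp [hθ]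
  have hθj : θ j = u := by simp [hθ, hij.symm]
  refine ⟨θ, ?_, ?_, ?_⟩
  · intro l
    rcases hcase l with rfl | rfl
    · rw [hθi, Algebra.algebraMap_eq_smul_one]
      exact Submodule.smul_mem _ _ (Submodule.subset_span (Or.inl rfl))
    · rw [hθj]
      exact Submodule.subset_span (Or.inr ⟨0, rfl⟩)
  · have hA0 : ev F D θ A = 0 := by
      rw [hA, map_add, map_smul, ev_X, hθi, ← MvPolynomial.algebraMap_eq, AlgHom.commutes,
        Function.iterate_zero_apply, Algebra.smul_def, ← map_mul, ← map_add, hc]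
      have : g * -(g⁻¹ * a) + a = 0 := by field_simp; ring
      rw [this, map_zero]
    have hXc : X (i, 0) + C (-c) = C g⁻¹ * A := by
      rw [hA, MvPolynomial.smul_eq_C_mul, mul_add, ← mul_assoc, ← C_mul, ← C_mul,
        inv_mul_cancel₀ hg, hc, neg_neg, C_1, one_mul]
    -- The remainder of `B` modulo `[A]`, with the other variable renamed to `u`.
    let τ : MvPolynomial (Fin 2 × ℕ) F →ₐ[F] MvPolynomial ℕ F :=
      aeval fun p => if p.1 = i then C ((⇑δF)^[p.2] c) else X p.2
    let ρ : MvPolynomial ℕ F →ₐ[F] MvPolynomial (Fin 2 × ℕ) F := rename fun k => (j, k)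
    have hmod : ∀ k, X (i, k) - C ((⇑δF)^[k] c) ∈ idealOf F dxy A := by
      intro k
      have := iterate_mem_of_mem F
        (Ideal.mul_mem_left _ (C g⁻¹) (iterate_mem_idealOf F dxy A 0)) k
      rw [Function.iterate_zero_apply, ← hXc, iterate_add F, iterate_X F hdxyX,
        iterate_C F hdxyC] at this
      have hneg : (⇑δF)^[k] (-c) = -(⇑δF)^[k] c := iterate_map_neg δF k c
      rwa [hneg, C_neg, ← sub_eq_add_neg] at this
    have hτ : ∀ B, B - ρ (τ B) ∈ idealOf F dxy A := by
      intro B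
      rw [← Ideal.Quotient.eq]
      have : (Ideal.Quotient.mkₐ F (idealOf F dxy A)) =
          ((Ideal.Quotient.mkₐ F (idealOf F dxy A)).comp ρ).comp τ := by
        apply MvPolynomial.algHom_ext
        rintro ⟨l, k⟩
        simp only [AlgHom.comp_apply, Ideal.Quotient.mkₐ_eq_mk]
        rw [Ideal.Quotient.eq]
        rcases hcase l with rfl | rfl
        · simpa [τ, ρ] using hmod k
        · simp [τ, ρ, hij.symm]
      exact DFunLike.congr_fun this B
    have hevτ : ∀ B, ev F D θ B = aeval (fun k => (⇑D)^[k] u) (τ B) := by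
      intro B
      have : ev F D θ = (aeval fun k => (⇑D)^[k] u).comp τ := by
        apply MvPolynomial.algHom_ext
        rintro ⟨l, k⟩
        rcases hcase l with rfl | rfl
        · rw [ev_X, hθi, iterate_mem_range F hD]
          simp [τ]
        · rw [ev_X, hθj]
          simp [τ, hij.symm]
      rw [this, AlgHom.comp_apply]
    intro B
    constructor
    · intro hB
      rw [hevτ] at hB
      have h0 : τ B = 0 := hu.eq_zero_of_aeval_eq_zero _ hB
      have := hτ B
      rwa [h0, map_zero, sub_zero] at this
    · intro hB
      induction hB using Submodule.span_induction with
      | mem x hx =>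
        obtain ⟨k, rfl⟩ := hx
        simp only [ev_iterate F hD hdxyC hdxyX, hA0, iterate_map_zero]
      | zero => rw [map_zero]
      | add x y _ _ h1 h2 => rw [map_add, h1, h2, add_zero]
      | smul p x _ h => rw [smul_eq_mul, map_mul, h, mul_zero]
  · apply le_antisymm <;> refine genDF_le F hD ?_
    · rintro _ ⟨l, rfl⟩
      rcases hcase l with rfl | rfl
      · rw [hθi]; exact IntermediateField.algebraMap_mem _ _
      · rw [hθj]; exact subset_genDF F D rfl
    · rintro _ rfl
      exact subset_genDF F D ⟨j, hθj⟩

end shear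

/-! ### The Euclidean reduction -/

section reduction

variable {δF : Derivation ℤ F F} {D : Derivation ℤ E E}
  {dxy : Derivation ℤ (MvPolynomial (Fin 2 × ℕ) F) (MvPolynomial (Fin 2 × ℕ) F)}

/-- `[A]` has a generic zero with coordinates in `F⟨u⟩`. -/
def HasGenericZero (D : Derivation ℤ E E)
    (dxy : Derivation ℤ (MvPolynomial (Fin 2 × ℕ) F) (MvPolynomial (Fin 2 × ℕ) F)) (u : E)
    (A : MvPolynomial (Fin 2 × ℕ) F) : Prop :=
  ∃ η : Fin 2 → E, (∀ l, η l ∈ genDF F D {u}) ∧ IsGeneric F D dxy A η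

theorem hasGenericZero_shear (hD : ∀ a : F, D (algebraMap F E a) = algebraMap F E (δF a))
    (hdxyC : ∀ a : F, dxy (C a) = C (δF a))
    (hdxyX : ∀ (i : Fin 2) (k : ℕ), dxy (X (i, k)) = X (i, k + 1))
    {i j : Fin 2} (hij : i ≠ j) (e : ℕ) (c : F) {u : E} {A : MvPolynomial (Fin 2 × ℕ) F}
    (h : HasGenericZero F D dxy u A) : HasGenericZero F D dxy u (shear F dxy i j e c A) := by
  obtain ⟨η, h1, h2⟩ := h
  exact ⟨_, shift_mem_genDF F hD i j e (-c) h1, isGeneric_shear F hD hdxyC hdxyX hij e c h2⟩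

/-- The case of a curve `G(x) + a = 0` in one variable: the coordinate `x` of a generic zero in
`F⟨u⟩` lies in `F`, so `G` has order zero. -/
theorem hasLinearParam_of_single [CharZero F]
    (hD : ∀ a : F, D (algebraMap F E a) = algebraMap F E (δF a))
    (hdxyC : ∀ a : F, dxy (C a) = C (δF a))
    (hdxyX : ∀ (i : Fin 2) (k : ℕ), dxy (X (i, k)) = X (i, k + 1))
    {u : E} (hu : DiffTrans F D u) {i j : Fin 2} (hij : i ≠ j) {m : ℕ} {a : F}
    {L : MvPolynomial (Fin 2 × ℕ) F} (hL : L ∈ linSpan F i m) (h0 : L ≠ 0)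
    (h : HasGenericZero F D dxy u (L + C a)) : HasLinearParam F D dxy u (L + C a) := by
  obtain ⟨m, g, hg, r, hr, rfl⟩ := exists_leading_of_mem_linSpan F hL h0
  obtain ⟨η, h1, h2⟩ := h
  obtain ⟨c, hc⟩ := mem_range_of_linear_equation F hD hu hg hr (h1 i)
    ((h2 _).mpr (iterate_mem_idealOf F dxy _ 0))
  have hX : X (i, 0) - C c ∈ idealOf F dxy (g • X (i, m) + r + C a) := by
    rw [← h2, map_sub, ev_X, ← MvPolynomial.algebraMap_eq, AlgHom.commutes, hc,
      Function.iterate_zero_apply, sub_self]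
  obtain rfl := order_eq_zero F hdxyC hdxyX hg hr hX
  rw [linSpan_zero] at hr
  obtain rfl := (Submodule.mem_bot F).mp hr
  rw [add_zero]
  exact hasLinearParam_of_order_zero F hD hdxyC hdxyX hu hij hg

/-- One division step: when the order `m` in the `i`-th variable is at most the order `n` in the
`j`-th, a shear removes the leading term in the `j`-th variable. -/
theorem exists_shear_reduce (hdxyC : ∀ a : F, dxy (C a) = C (δF a))
    (hdxyX : ∀ (i : Fin 2) (k : ℕ), dxy (X (i, k)) = X (i, k + 1))
    {i j : Fin 2} (hij : i ≠ j) {m n : ℕ} (hmn : m ≤ n) {g h : F} (hg : g ≠ 0)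
    {r s : MvPolynomial (Fin 2 × ℕ) F} (hr : r ∈ linSpan F i m) (hs : s ∈ linSpan F j n) :
    ∃ L ∈ linSpan F j n, shear F dxy i j (n - m) (-(g⁻¹ * h))
      ((g • X (i, m) + r) + (h • X (j, n) + s)) = (g • X (i, m) + r) + L := by
  set c := -(g⁻¹ * h) with hc
  have hs' : h • X (j, n) + s ∈ linSpan F j (n + 1) :=
    add_mem (Submodule.smul_mem _ _ (X_mem_linSpan F j (Nat.lt_succ_self n)))
      (linSpan_mono F j (Nat.le_succ n) hs)
  have h1 := shear_sub_mem F hdxyC hdxyX i j (n - m) c hr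
  rw [Nat.add_sub_cancel' hmn] at h1
  obtain ⟨t, ht, h2⟩ := iterate_smul_X F hdxyC hdxyX c j (n - m) m
  rw [Nat.sub_add_cancel hmn] at ht h2
  refine ⟨g • t + (shear F dxy i j (n - m) c r - r) + s,
    add_mem (add_mem (Submodule.smul_mem _ _ ht) h1) hs, ?_⟩
  rw [map_add, shear_of_mem_linSpan F hij _ _ hs', map_add, map_smul, shear_X]
  simp only [if_true]
  rw [h2, smul_add, smul_add, smul_smul]
  have hgc : g * c = -h := by rw [hc]; field_simp
  rw [hgc, neg_smul]
  ring

/-- The Euclidean algorithm on the two linear parts: division steps lower the total order until only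
one variable is left. -/
theorem hasLinearParam_of_hasGenericZero [CharZero F]
    (hD : ∀ a : F, D (algebraMap F E a) = algebraMap F E (δF a))
    (hdxyC : ∀ a : F, dxy (C a) = C (δF a))
    (hdxyX : ∀ (i : Fin 2) (k : ℕ), dxy (X (i, k)) = X (i, k + 1))
    {u : E} (hu : DiffTrans F D u) (a : F) (N : ℕ) : ∀ (i j : Fin 2), i ≠ j → ∀ m n : ℕ,
      m + n = N → ∀ L ∈ linSpan F i m, ∀ M ∈ linSpan F j n, L + M ≠ 0 →
      HasGenericZero F D dxy u (L + M + C a) → HasLinearParam F D dxy u (L + M + C a) := by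
  induction N using Nat.strong_induction_on with
  | _ N ih =>
    -- The division step, stated for both orders of the two variables.
    have step : ∀ (i j : Fin 2), i ≠ j → ∀ m n : ℕ, m + 1 + (n + 1) = N → m ≤ n →
        ∀ g h : F, g ≠ 0 → ∀ r ∈ linSpan F i m, ∀ s ∈ linSpan F j n,
        (g • X (i, m) + r) + (h • X (j, n) + s) ≠ 0 →
        HasGenericZero F D dxy u ((g • X (i, m) + r) + (h • X (j, n) + s) + C a) →
        HasLinearParam F D dxy u ((g • X (i, m) + r) + (h • X (j, n) + s) + C a) := by
      intro i j hij m n hN hmn g h hg r hr s hs h0 hz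
      obtain ⟨L, hL, hLe⟩ := exists_shear_reduce F hdxyC hdxyX hij hmn (h := h) hg hr hs
      have hA : shear F dxy i j (n - m) (-(g⁻¹ * h))
          ((g • X (i, m) + r) + (h • X (j, n) + s) + C a) = (g • X (i, m) + r) + L + C a := by
        rw [map_add, hLe, ← MvPolynomial.algebraMap_eq, AlgHom.commutes]
      refine hasLinearParam_of_shear F hD hdxyC hdxyX hij (n - m) (-(g⁻¹ * h)) ?_
      have hz' := hasGenericZero_shear F hD hdxyC hdxyX hij (n - m) (-(g⁻¹ * h)) hz
      rw [hA] at hz' ⊢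
      refine ih (m + 1 + n) (by omega) i j hij (m + 1) n rfl _ ?_ L hL ?_ hz'
      · exact add_mem (Submodule.smul_mem _ _ (X_mem_linSpan F i (Nat.lt_succ_self m)))
          (linSpan_mono F i (Nat.le_succ m) hr)
      · rw [← hLe]
        intro he
        apply h0
        have := shear_shear_neg F hdxyC hdxyX hij (n - m) (g⁻¹ * h)
          ((g • X (i, m) + r) + (h • X (j, n) + s))
        rw [← this, he, map_zero]
    intro i j hij m n hN L hL M hM h0 hz
    rcases m with _ | m
    · rw [linSpan_zero] at hL
      obtain rfl := (Submodule.mem_bot F).mp hL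
      rw [zero_add] at h0 hz ⊢
      exact hasLinearParam_of_single F hD hdxyC hdxyX hu hij.symm hM h0 hz
    rcases n with _ | n
    · rw [linSpan_zero] at hM
      obtain rfl := (Submodule.mem_bot F).mp hM
      rw [add_zero] at h0 hz ⊢
      exact hasLinearParam_of_single F hD hdxyC hdxyX hu hij hL h0 hz
    obtain ⟨g, r, hr, rfl⟩ := exists_of_mem_linSpan_succ F hL
    obtain ⟨h, s, hs, rfl⟩ := exists_of_mem_linSpan_succ F hM
    by_cases hg : g = 0
    · refine ih (m + (n + 1)) (by omega) i j hij m (n + 1) rfl _ ?_ _ hM h0 hz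
      rwa [hg, zero_smul, zero_add]
    by_cases hh : h = 0
    · refine ih (m + 1 + n) (by omega) i j hij (m + 1) n rfl _ hL _ ?_ h0 hz
      rwa [hh, zero_smul, zero_add]
    rcases le_total m n with hmn | hnm
    · exact step i j hij m n hN hmn g h hg r hr s hs h0 hz
    · rw [add_comm (g • X (i, m) + r)] at h0 hz ⊢
      exact step j i hij.symm n m (by omega) hnm h g hh s hs r hr h0 hz

end reduction

/-! ### Linear differential polynomials -/

theorem exists_rename_mem_linSpan (i : Fin 2) {L : MvPolynomial ℕ F} (hL : IsLinHom L) :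
    ∃ n, rename (fun k => (i, k)) L ∈ linSpan F i n := by
  classical
  refine ⟨L.support.sup (fun m => m.support.sup id) + 1, ?_⟩
  rw [L.as_sum, map_sum]
  refine Submodule.sum_mem _ fun m hm => ?_
  obtain ⟨k, rfl⟩ := hL m hm
  have hX : monomial (Finsupp.single k 1) (coeff (Finsupp.single k 1) L)
      = coeff (Finsupp.single k 1) L • (X k : MvPolynomial ℕ F) := by
    rw [X, MvPolynomial.smul_monomial, smul_eq_mul, mul_one]
  rw [hX, map_smul, rename_X]
  refine Submodule.smul_mem _ _ (X_mem_linSpan F i (Nat.lt_succ_of_le ?_))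
  have := Finset.le_sup (f := fun m : ℕ →₀ ℕ => m.support.sup id) hm
  simpa [Finsupp.support_single] using this

/-- Every element of the span of `1, u, D u, …` is the value at `u` of a differential polynomial of
degree at most one. -/
theorem exists_of_mem_affSpan (D : Derivation ℤ E E) {u x : E} (hx : x ∈ affSpan F D u) :
    ∃ B : MvPolynomial ℕ F, B.totalDegree ≤ 1 ∧ evalD F D u B = x := by
  induction hx using Submodule.span_induction with
  | mem x hx =>
    rcases hx with rfl | ⟨k, rfl⟩
    · exact ⟨1, by simp, map_one _⟩
    · exact ⟨X k, by simp, by simp [evalD]⟩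
  | zero => exact ⟨0, by simp, map_zero _⟩
  | add x y _ _ h1 h2 =>
    obtain ⟨B, hB, rfl⟩ := h1
    obtain ⟨B', hB', rfl⟩ := h2
    exact ⟨B + B', (totalDegree_add _ _).trans (max_le hB hB'), map_add _ _ _⟩
  | smul c x _ h =>
    obtain ⟨B, hB, rfl⟩ := h
    exact ⟨c • B, (totalDegree_smul_le _ _).trans hB, map_smul _ _ _⟩

theorem evalD2_eq_ev (D : Derivation ℤ E E) (η : Fin 2 → E) :
    evalD2 F D (η 0) (η 1) = ev F D η := by
  apply MvPolynomial.algHom_ext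
  rintro ⟨l, k⟩
  rw [ev_X]
  fin_cases l <;> simp [evalD2]

/-- a unirational linear differential curve `(C, A)`,
`A = L₁(x) + L₂(y) + a`, has a proper LINEAR differential polynomial
parametrization. -/
theorem linear_curve_proper_polynomial_param [CharZero F]
    (δF : Derivation ℤ F F) (D : Derivation ℤ E E)
    (hD : ∀ a : F, D (algebraMap F E a) = algebraMap F E (δF a))
    (dxy : Derivation ℤ (MvPolynomial (Fin 2 × ℕ) F) (MvPolynomial (Fin 2 × ℕ) F))
    (hdxyC : ∀ a : F, dxy (C a) = C (δF a))
    (hdxyX : ∀ (i : Fin 2) (k : ℕ), dxy (X (i, k)) = X (i, k + 1))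
    (L₁ L₂ : MvPolynomial ℕ F) (hL₁ : IsLinHom L₁) (hL₂ : IsLinHom L₂)
    (hL : ¬(L₁ = 0 ∧ L₂ = 0)) (a : F)
    (A : MvPolynomial (Fin 2 × ℕ) F)
    (hA : A = rename (fun k => ((0 : Fin 2), k)) L₁
      + rename (fun k => ((1 : Fin 2), k)) L₂ + C a)
    (hAF : ∀ c : F, A ≠ C c)
    (u : E) (hu : DiffTrans F D u)
    (huni : ∃ η₁ η₂ : E, η₁ ∈ genDF F D {u} ∧ η₂ ∈ genDF F D {u} ∧
      ¬(η₁ ∈ (algebraMap F E).range ∧ η₂ ∈ (algebraMap F E).range) ∧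
      {B : MvPolynomial (Fin 2 × ℕ) F | evalD2 F D η₁ η₂ B = 0}
        = (diffIdeal dxy A : Set (MvPolynomial (Fin 2 × ℕ) F))) :
    ∃ B₁ B₂ : MvPolynomial ℕ F, B₁.totalDegree ≤ 1 ∧ B₂.totalDegree ≤ 1 ∧
      {B : MvPolynomial (Fin 2 × ℕ) F |
          evalD2 F D (evalD F D u B₁) (evalD F D u B₂) B = 0}
        = (diffIdeal dxy A : Set (MvPolynomial (Fin 2 × ℕ) F)) ∧
      genDF F D {evalD F D u B₁, evalD F D u B₂} = genDF F D {u} := by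
  have hgen : ∀ η : Fin 2 → E,
      ({B : MvPolynomial (Fin 2 × ℕ) F | evalD2 F D (η 0) (η 1) B = 0}
        = (diffIdeal dxy A : Set (MvPolynomial (Fin 2 × ℕ) F))) ↔ IsGeneric F D dxy A η := by
    intro η
    rw [evalD2_eq_ev, Set.ext_iff]
    exact Iff.rfl
  obtain ⟨η₁, η₂, h1, h2, -, h3⟩ := huni
  obtain ⟨m, hm⟩ := exists_rename_mem_linSpan F 0 hL₁
  obtain ⟨n, hn⟩ := exists_rename_mem_linSpan F 1 hL₂
  have hz : HasGenericZero F D dxy u A := by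
    refine ⟨![η₁, η₂], ?_, (hgen ![η₁, η₂]).mp h3⟩
    intro l
    fin_cases l
    exacts [h1, h2]
  obtain ⟨θ, hθ, hθA, hθu⟩ : HasLinearParam F D dxy u A := by
    rw [hA] at hz ⊢
    refine hasLinearParam_of_hasGenericZero F hD hdxyC hdxyX hu a _ 0 1 (by decide) m n rfl _ hm _ hn
      (fun h0 => hAF a ?_) hz
    rw [hA, h0, zero_add]
  obtain ⟨B₁, hB₁, e₁⟩ := exists_of_mem_affSpan F D (hθ 0)
  obtain ⟨B₂, hB₂, e₂⟩ := exists_of_mem_affSpan F D (hθ 1)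
  refine ⟨B₁, B₂, hB₁, hB₂, ?_, ?_⟩
  · rw [e₁, e₂]
    exact (hgen θ).mpr hθA
  · rw [e₁, e₂, ← hθu]
    congr 1
    ext x
    simp [Fin.exists_fin_two, eq_comm]
end DiffCurve
end
end
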